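/- Fix an odd integer p ≥ 5, let R > 0, and let u : ℝ × (0,∞) → ℝ be C^∞ on {(t,r) : r > R + |t|}, satisfying ∂_t²u − ∂_r²u − (3/r)∂_r u = |u|^{p−1}u there, with data (u(0,·), ∂_t u(0,·)) = (0, u₁) on (R,∞) where u₁ ∈ L²(R). Assume that ‖u‖_{L²L⁸(R)}, ‖u‖_{L³L⁶(R)}, ‖∂_t u‖_{L³L⁶(R)}, and sup_{t∈ℝ} ‖(u(t,·), ∂_t u(t,·))‖_{H(R+|t|)} are finite, and that the exterior energy of u vanishes. Then there exists R′ ≥ R such that: (i) ∫_{R′}^∞ |(d/dr)(r·u₁(r))|² r³ dr < ∞; and (ii) there exist constants c, C > 0 such that c·ρ·|u₁(ρ)| ≤ (∫_ρ^∞ |u₁'(r)|² r³ dr)^{1/2} ≤ C·ρ·|u₁(ρ)| for all ρ ≥ R′. -/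

import Mathlib

open MeasureTheory Filter Set
open scoped ENNReal

/-- The exterior energy norm `‖(v,w)‖_{H(R)} = (∫_R^∞ (|v'|² + |w|²) r³ dr)^{1/2}`. -/
noncomputable def eH (R : ℝ) (v w : ℝ → ℝ) : ℝ≥0∞ :=
  ((∫⁻ r in Ioi R, ENNReal.ofReal ((deriv v r) ^ 2 * r ^ 3)) +
      ∫⁻ r in Ioi R, ENNReal.ofReal ((w r) ^ 2 * r ^ 3)) ^ (1 / 2 : ℝ)

/-- The exterior spacetime norm `‖u‖_{L^aL^b(R)}` over the region `{r > R + |t|}`. -/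
noncomputable def eLL (a b R : ℝ) (u : ℝ → ℝ → ℝ) : ℝ≥0∞ :=
  (∫⁻ t : ℝ,
      (∫⁻ r in Ioi (R + |t|), ENNReal.ofReal (|u t r| ^ b * r ^ 3)) ^ (a / b)) ^ (1 / a)

/-- The time derivative `∂_t u` of a function of `(t,r)`. -/
noncomputable def dtu (u : ℝ → ℝ → ℝ) (t r : ℝ) : ℝ := deriv (fun s => u s r) t

/-- `u` is an exterior solution of `∂_t²u - ∂_r²u - (3/r)∂_r u = |u|^{p-1}u`
on `{r > R + |t|}`, of smoothness class `C^n`. -/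
def IsExtSol (p : ℕ) (n : ℕ∞) (R : ℝ) (u : ℝ → ℝ → ℝ) : Prop :=
  ContDiffOn ℝ n (fun q : ℝ × ℝ => u q.1 q.2) {q : ℝ × ℝ | R + |q.1| < q.2} ∧
  ∀ t r : ℝ, R + |t| < r →
    deriv (fun s => dtu u s r) t - deriv (deriv (u t)) r - (3 / r) * deriv (u t) r
      = |u t r| ^ (p - 1) * u t r

/-- The exterior energy of `u` outside `{r > R + |t|}` vanishes as `t → ±∞`. -/
def ExtEnergyVanishes (R : ℝ) (u : ℝ → ℝ → ℝ) : Prop :=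
  Tendsto (fun t : ℝ => ∫ r in Ioi (R + |t|),
      ((dtu u t r) ^ 2 + (deriv (u t) r) ^ 2) * r ^ 3) atTop (nhds 0) ∧
  Tendsto (fun t : ℝ => ∫ r in Ioi (R + |t|),
      ((dtu u t r) ^ 2 + (deriv (u t) r) ^ 2) * r ^ 3) atBot (nhds 0)

/-- `sup_{t∈ℝ} ‖(u(t,·), ∂_t u(t,·))‖_{H(R+|t|)}`. -/
noncomputable def supH (R : ℝ) (u : ℝ → ℝ → ℝ) : ℝ≥0∞ :=
  ⨆ t : ℝ, eH (R + |t|) (u t) (fun r => dtu u t r)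

/-!
The data `u₁` in fact vanish for large radii, so that the asserted bounds become trivial there.

In the coordinate `a = r - t` the region outside an outgoing light cone is a quadrant. Finite energy
and `u(0, ·) = 0` give the decay `|u| ≤ K / r`, where `K²` bounds the exterior energy. Pair `u` with
a free wave `X` that vanishes on the cone, through the polarised energy: since `u` does not radiate,
the pairing of the initial velocities is a space-time integral of `|u|^(p-1) ∂ₜu X`, which the decay
makes small. Free waves in four space dimensions are means over an arc of plane waves, and inverting
an Abel transform by Archimedes' theorem realises every mean-zero compactly supported `η` as `r`
times an initial velocity of such an `X`, with `∫ X² / r` controlled by `∫ η² / r`. Duality then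
bounds `∫ u₁² r⁵` by `K^(2p)` times a negative power of the radius of the cone. Putting this back
into the energy identity replaces `K` by `K / 2` once the radius is large compared with `K^(p-1)`;
the same radius serves for all later steps, so iteration gives `u₁ = 0`.
-/

/-! ### Conservation laws in the plane -/

/-- `G` is differentiable at `z` with first partial derivative `a` and second one `b`. -/
def HasPartialsAt (G : ℝ × ℝ → ℝ) (a b : ℝ) (z : ℝ × ℝ) : Prop :=
  HasFDerivAt G (a • ContinuousLinearMap.fst ℝ ℝ ℝ + b • ContinuousLinearMap.snd ℝ ℝ ℝ) z

namespace HasPartialsAt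

variable {G H : ℝ × ℝ → ℝ} {a a' b b' : ℝ} {z : ℝ × ℝ}

lemma congr_partials (h : HasPartialsAt G a b z) (ha : a = a') (hb : b = b') :
    HasPartialsAt G a' b' z := by
  subst ha hb
  exact h

lemma congr_of_eventuallyEq (h : HasPartialsAt G a b z) (hHG : H =ᶠ[nhds z] G) :
    HasPartialsAt H a b z :=
  HasFDerivAt.congr_of_eventuallyEq h hHG

lemma fst : HasPartialsAt (fun z => z.1) 1 0 z :=
  hasFDerivAt_fst.congr_fderiv (by simp)

lemma snd : HasPartialsAt (fun z => z.2) 0 1 z :=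
  hasFDerivAt_snd.congr_fderiv (by simp)

lemma add (hG : HasPartialsAt G a b z) (hH : HasPartialsAt H a' b' z) :
    HasPartialsAt (fun z => G z + H z) (a + a') (b + b') z :=
  (HasFDerivAt.add hG hH).congr_fderiv (by ext <;> simp)

lemma sub (hG : HasPartialsAt G a b z) (hH : HasPartialsAt H a' b' z) :
    HasPartialsAt (fun z => G z - H z) (a - a') (b - b') z :=
  (HasFDerivAt.sub hG hH).congr_fderiv (by ext <;> simp)

lemma mul (hG : HasPartialsAt G a b z) (hH : HasPartialsAt H a' b' z) :
    HasPartialsAt (fun z => G z * H z) (a * H z + G z * a') (b * H z + G z * b') z :=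
  (HasFDerivAt.mul hG hH).congr_fderiv (by ext <;> simp <;> ring)

lemma scomp {φ : ℝ → ℝ} {φ' : ℝ} (hφ : HasDerivAt φ φ' (G z)) (hG : HasPartialsAt G a b z) :
    HasPartialsAt (fun z => φ (G z)) (φ' * a) (φ' * b) z :=
  (HasDerivAt.comp_hasFDerivAt z hφ hG).congr_fderiv (by ext <;> simp)

lemma comp_slant {c : ℝ} (h : HasPartialsAt G a b (z.1, z.2 + c * z.1)) :
    HasPartialsAt (fun z => G (z.1, z.2 + c * z.1)) (a + c * b) b z := by
  have hslant : HasFDerivAt (fun z : ℝ × ℝ => (z.1, z.2 + c * z.1))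
      ((ContinuousLinearMap.fst ℝ ℝ ℝ).prod
        (ContinuousLinearMap.snd ℝ ℝ ℝ + c • ContinuousLinearMap.fst ℝ ℝ ℝ)) z :=
    hasFDerivAt_fst.prodMk (hasFDerivAt_snd.add (hasFDerivAt_fst.const_mul c))
  exact (HasFDerivAt.comp (f := fun z : ℝ × ℝ => (z.1, z.2 + c * z.1)) z h hslant).congr_fderiv
    (by ext <;> simp; ring)

lemma hasDerivAt_fst {t r : ℝ} (h : HasPartialsAt G a b (t, r)) :
    HasDerivAt (fun s => G (s, r)) a t := by
  have hline : HasDerivAt (fun s : ℝ => (s, r)) (1, 0) t :=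
    (hasDerivAt_id t).prodMk (hasDerivAt_const t r)
  simpa [Function.comp_def] using HasFDerivAt.comp_hasDerivAt_of_eq t h hline rfl

lemma hasDerivAt_snd {t r : ℝ} (h : HasPartialsAt G a b (t, r)) :
    HasDerivAt (fun s => G (t, s)) b r := by
  have hline : HasDerivAt (fun s : ℝ => (t, s)) (0, 1) r :=
    (hasDerivAt_const r t).prodMk (hasDerivAt_id r)
  simpa [Function.comp_def] using HasFDerivAt.comp_hasDerivAt_of_eq r h hline rfl

lemma fderiv_apply (h : HasPartialsAt G a b z) (x y : ℝ) : fderiv ℝ G z (x, y) = a * x + b * y := by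
  rw [HasFDerivAt.fderiv h]
  simp

end HasPartialsAt

lemma hasPartialsAt_of_differentiableAt {G : ℝ × ℝ → ℝ} {z : ℝ × ℝ} (h : DifferentiableAt ℝ G z) :
    HasPartialsAt G (fderiv ℝ G z (1, 0)) (fderiv ℝ G z (0, 1)) z :=
  h.hasFDerivAt.congr_fderiv (by ext <;> simp)

theorem integral_sub_integral_eq_of_conservation {G J S : ℝ × ℝ → ℝ} {ρ A T : ℝ}
    (hρA : ρ ≤ A) (hT : 0 ≤ T) (hG : Continuous G) (hJ : Continuous J) (hS : Continuous S)
    (hlaw : ∀ t ∈ Ioo 0 T, ∀ a ∈ Ioo ρ A, ∃ Gₜ Gₐ Jₜ Jₐ,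
      HasPartialsAt G Gₜ Gₐ (t, a) ∧ HasPartialsAt J Jₜ Jₐ (t, a) ∧ Gₜ = Jₐ + S (t, a)) :
    (∫ a in ρ..A, G (T, a)) - ∫ a in ρ..A, G (0, a) =
      (∫ t in 0..T, J (t, A)) - (∫ t in 0..T, J (t, ρ)) + ∫ t in 0..T, ∫ a in ρ..A, S (t, a) := by
  have hdiv : ∀ z ∈ Ioo 0 T ×ˢ Ioo ρ A, fderiv ℝ G z (1, 0) + (-fderiv ℝ J z) (0, 1) = S z := by
    rintro ⟨t, a⟩ ⟨ht, ha⟩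
    obtain ⟨Gₜ, Gₐ, Jₜ, Jₐ, hGz, hJz, hGJ⟩ := hlaw t ht a ha
    simp [hGz.fderiv_apply, hJz.fderiv_apply, hGJ]
  have hGd : ∀ z ∈ Ioo 0 T ×ˢ Ioo ρ A, HasFDerivAt G (fderiv ℝ G z) z := fun z hz => by
    obtain ⟨_, _, _, _, hGz, -, -⟩ := hlaw z.1 hz.1 z.2 hz.2
    exact HasFDerivAt.differentiableAt hGz |>.hasFDerivAt
  have hJd : ∀ z ∈ Ioo 0 T ×ˢ Ioo ρ A, HasFDerivAt (-J) (-fderiv ℝ J z) z := fun z hz => by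
    obtain ⟨_, _, _, _, -, hJz, -⟩ := hlaw z.1 hz.1 z.2 hz.2
    exact (HasFDerivAt.differentiableAt hJz).hasFDerivAt.neg
  have hint : IntegrableOn (fun z => fderiv ℝ G z (1, 0) + (-fderiv ℝ J z) (0, 1))
      (Icc 0 T ×ˢ Icc ρ A) := by
    have hSint : IntegrableOn S (Ioo 0 T ×ˢ Ioo ρ A) :=
      (hS.continuousOn.integrableOn_compact (isCompact_Icc.prod isCompact_Icc)).mono_set
        (prod_mono Ioo_subset_Icc_self Ioo_subset_Icc_self)
    exact (hSint.congr_fun (fun z hz => (hdiv z hz).symm)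
      (measurableSet_Ioo.prod measurableSet_Ioo)).congr_set_ae
      (Measure.set_prod_ae_eq Ioo_ae_eq_Icc Ioo_ae_eq_Icc).symm
  have hdivergence := integral2_divergence_prod_of_hasFDerivAt G (-J) (fderiv ℝ G)
    (fun z => -fderiv ℝ J z) 0 ρ T A hG.continuousOn hJ.neg.continuousOn
    (by simpa only [min_eq_left hT, max_eq_right hT, min_eq_left hρA, max_eq_right hρA] using hGd)
    (by simpa only [min_eq_left hT, max_eq_right hT, min_eq_left hρA, max_eq_right hρA] using hJd)
    (by simpa only [uIcc_of_le hT, uIcc_of_le hρA] using hint)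
  rw [intervalIntegral.integral_congr_Ioo_of_le hT fun t ht =>
    intervalIntegral.integral_congr_Ioo_of_le hρA fun a ha => hdiv (t, a) ⟨ht, ha⟩] at hdivergence
  simp only [Pi.neg_apply, intervalIntegral.integral_neg] at hdivergence
  linarith

theorem abs_integral_mul_mul_le {f g w : ℝ → ℝ} {a b K N : ℝ} (hab : a ≤ b)
    (hf : ContinuousOn f (uIcc a b)) (hg : ContinuousOn g (uIcc a b))
    (hw : ContinuousOn w (uIcc a b)) (hw0 : ∀ x ∈ Icc a b, 0 ≤ w x) (hK : 0 ≤ K) (hN : 0 ≤ N)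
    (hfK : ∫ x in a..b, f x ^ 2 * w x ≤ K ^ 2) (hgN : ∫ x in a..b, g x ^ 2 * w x ≤ N ^ 2) :
    |∫ x in a..b, f x * g x * w x| ≤ K * N := by
  have hquad : ∀ s : ℝ, 0 ≤ (∫ x in a..b, f x ^ 2 * w x) * (s * s)
      + 2 * (∫ x in a..b, f x * g x * w x) * s + ∫ x in a..b, g x ^ 2 * w x := fun s => by
    have hsq : 0 ≤ ∫ x in a..b, (f x * s + g x) ^ 2 * w x :=
      intervalIntegral.integral_nonneg hab fun x hx => mul_nonneg (sq_nonneg _) (hw0 x hx)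
    have hexpand : ∫ x in a..b, (f x * s + g x) ^ 2 * w x =
        ∫ x in a..b, (f x ^ 2 * w x) * (s * s) + 2 * (f x * g x * w x) * s + g x ^ 2 * w x := by
      congr with x
      ring
    rw [hexpand, intervalIntegral.integral_add, intervalIntegral.integral_add,
      intervalIntegral.integral_mul_const, intervalIntegral.integral_mul_const,
      intervalIntegral.integral_const_mul] at hsq
    · exact hsq
    all_goals exact ContinuousOn.intervalIntegrable (by fun_prop)
  have hdisc := discrim_le_zero hquad
  have hf0 : 0 ≤ ∫ x in a..b, f x ^ 2 * w x :=
    intervalIntegral.integral_nonneg hab fun x hx => mul_nonneg (sq_nonneg _) (hw0 x hx)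
  rw [discrim] at hdisc
  refine abs_le_of_sq_le_sq ?_ (by positivity)
  nlinarith [mul_le_mul hfK hgN (intervalIntegral.integral_nonneg hab
    fun x hx => mul_nonneg (sq_nonneg (g x)) (hw0 x hx)) (sq_nonneg K)]

lemma sq_integral_le {f : ℝ → ℝ} {a b : ℝ} (hab : a ≤ b) (hf : ContinuousOn f (uIcc a b)) :
    (∫ x in a..b, f x) ^ 2 ≤ (b - a) * ∫ x in a..b, f x ^ 2 := by
  have hf0 : 0 ≤ ∫ x in a..b, f x ^ 2 :=
    intervalIntegral.integral_nonneg hab fun x _ => sq_nonneg _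
  have hcs := abs_integral_mul_mul_le (w := fun _ => 1) (f := fun _ => 1) hab continuousOn_const hf
    continuousOn_const (fun _ _ => zero_le_one) (Real.sqrt_nonneg (b - a))
    (Real.sqrt_nonneg (∫ x in a..b, f x ^ 2)) (by simp [Real.sq_sqrt (sub_nonneg.2 hab)])
    (by simp [Real.sq_sqrt hf0])
  simp only [one_mul, mul_one] at hcs
  calc (∫ x in a..b, f x) ^ 2 ≤ (√(b - a) * √(∫ x in a..b, f x ^ 2)) ^ 2 := sq_le_sq' (by
        linarith [neg_abs_le (∫ x in a..b, f x)]) (le_of_abs_le hcs)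
    _ = _ := by rw [mul_pow, Real.sq_sqrt (sub_nonneg.2 hab), Real.sq_sqrt hf0]

lemma integral_one_div_add_pow_le {n : ℕ} (hn : n ≠ 0) {ρ A t : ℝ} (hρ : 0 < ρ + t) (hA : ρ ≤ A) :
    ∫ a in ρ..A, 1 / (a + t) ^ (n + 1) ≤ 1 / (n * (ρ + t) ^ n) := by
  have hpos : ∀ x ∈ uIcc ρ A, 0 < x + t := fun x hx => by
    rw [uIcc_of_le hA] at hx
    linarith [hx.1]
  have hderiv : ∀ x ∈ uIcc ρ A,
      HasDerivAt (fun a => -(1 / (n * (a + t) ^ n))) (1 / (x + t) ^ (n + 1)) x := fun x hx => by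
    have hx0 := hpos x hx
    have hn0 : (n : ℝ) ≠ 0 := by exact_mod_cast hn
    have hpow := ((((hasDerivAt_id x).add_const t).pow n).const_mul (n : ℝ)).inv
      (by simpa using ⟨hn, fun h => absurd h hx0.ne'⟩)
    simp only [one_div]
    refine hpow.neg.congr_deriv ?_
    obtain ⟨m, rfl⟩ := Nat.exists_eq_succ_of_ne_zero hn
    simp only [id_eq, Nat.succ_eq_add_one, Nat.add_sub_cancel, neg_div, neg_neg, Pi.pow_apply]
    field_simp
    ring
  rw [intervalIntegral.integral_eq_sub_of_hasDerivAt hderiv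
    (ContinuousOn.intervalIntegrable (by
      fun_prop (disch := intro x hx; have := hpos x hx; positivity)))]
  have hA0 : 0 < A + t := hpos A right_mem_uIcc
  have : 0 ≤ 1 / (n * (A + t) ^ n) := by positivity
  linarith

lemma hasDerivAt_abs_pow_mul_self (n : ℕ) (x : ℝ) :
    HasDerivAt (fun x => |x| ^ n * x) ((n + 1) * |x| ^ n) x := by
  have hne : ∀ y : ℝ, y ≠ 0 → HasDerivAt (fun x => |x| ^ n * x) ((n + 1) * |y| ^ n) y := by
    intro y hy
    refine (((hasDerivAt_abs hy).pow n).mul (hasDerivAt_id y)).congr_deriv ?_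
    rcases n with - | n
    · simp
    · have hsign : (SignType.sign y : ℝ) * y = |y| := sign_mul_self y
      simp only [id_eq, Nat.add_sub_cancel, pow_succ, Pi.pow_apply, mul_one]
      linear_combination (((n + 1 : ℕ) : ℝ) * |y| ^ n) * hsign
  rcases eq_or_ne x 0 with rfl | hx
  · exact hasDerivAt_of_hasDerivAt_of_ne (g := fun x => (n + 1) * |x| ^ n) hne
      (by fun_prop) (by fun_prop)
  · exact hne x hx

theorem frequently_integral_lt {J : ℝ × ℝ → ℝ} {ρ K T δ : ℝ} (hT : 0 ≤ T) (hδ : 0 < δ)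
    (hJ : Continuous J) (hJ0 : ∀ z, 0 ≤ J z)
    (hJK : ∀ t ∈ Icc 0 T, ∀ B, ρ ≤ B → ∫ a in ρ..B, J (t, a) ≤ K) :
    ∃ᶠ A in atTop, ∫ t in 0..T, J (t, A) < δ := by
  refine frequently_atTop.2 fun A₀ => ?_
  by_contra! hcon
  set A₁ := max A₀ ρ
  set B := A₁ + (K * T + 1) / δ
  have hK : 0 ≤ K := by simpa using hJK 0 ⟨le_rfl, hT⟩ ρ le_rfl
  have hB : A₁ ≤ B := le_add_of_nonneg_right (by positivity)
  have hupper : ∫ t in 0..T, ∫ a in A₁..B, J (t, a) ≤ ∫ _ in 0..T, K := by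
    refine intervalIntegral.integral_mono_on hT
      (Continuous.intervalIntegrable (by fun_prop) _ _) (by simp) fun t ht => ?_
    refine le_trans ?_ (hJK t ht B ((le_max_right _ _).trans hB))
    exact intervalIntegral.integral_mono_interval (le_max_right _ _) hB le_rfl
      (ae_of_all _ fun a => hJ0 _) (Continuous.intervalIntegrable (by fun_prop) _ _)
  have hlower : ∫ _ in A₁..B, δ ≤ ∫ a in A₁..B, ∫ t in 0..T, J (t, a) :=
    intervalIntegral.integral_mono_on hB (by simp) (Continuous.intervalIntegrable (by fun_prop) _ _)
      fun a ha => hcon a ((le_max_left _ _).trans ha.1)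
  have hswap : ∫ t in 0..T, ∫ a in A₁..B, J (t, a) = ∫ a in A₁..B, ∫ t in 0..T, J (t, a) :=
    intervalIntegral_intervalIntegral_swap
      ((hJ.continuousOn.integrableOn_compact (isCompact_uIcc.prod isCompact_uIcc)).mono_set
        (prod_mono uIoc_subset_uIcc uIoc_subset_uIcc))
  have hlen : (B - A₁) * δ = K * T + 1 := by
    simp only [B, add_sub_cancel_left]
    field_simp
  simp only [intervalIntegral.integral_const, smul_eq_mul, sub_zero] at hupper hlower
  linarith [mul_comm K T]

/-! ### Radial waves outside a light cone -/

/-- `U` solves the radial wave equation `∂ₜ²U - ∂ᵣ²U - (3/r)∂ᵣU = F` at the point `z = (t, a)`, with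
velocity `V = ∂ₜU` and radial derivative `Q = ∂ᵣU`. All functions are written in the slanted
coordinates `(t, a)` in which `r = a + c t`, so that `c = 1` turns an outgoing light cone into a
vertical line; `m` and `n` below stand for `∂ₜ∂ᵣU` and `∂ᵣ²U`. -/
structure IsRadialWaveAt (c : ℝ) (U V Q F : ℝ × ℝ → ℝ) (z : ℝ × ℝ) : Prop where
  hasPartialsAt : HasPartialsAt U (V z + c * Q z) (Q z) z
  exists_second_partials : ∃ m n,
    HasPartialsAt V (n + 3 / (z.2 + c * z.1) * Q z + F z + c * m) m z ∧
      HasPartialsAt Q (m + c * n) n z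

namespace IsRadialWaveAt

variable {c : ℝ} {U V Q F X Y Z H : ℝ × ℝ → ℝ} {z : ℝ × ℝ}

lemma comp_slant (h : IsRadialWaveAt 0 U V Q F (z.1, z.2 + c * z.1)) :
    IsRadialWaveAt c (fun z => U (z.1, z.2 + c * z.1)) (fun z => V (z.1, z.2 + c * z.1))
      (fun z => Q (z.1, z.2 + c * z.1)) (fun z => F (z.1, z.2 + c * z.1)) z := by
  obtain ⟨m, n, hV, hQ⟩ := h.exists_second_partials
  refine ⟨h.hasPartialsAt.comp_slant.congr_partials (by simp) rfl, m, n,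
    hV.comp_slant.congr_partials (by simp) rfl, hQ.comp_slant.congr_partials (by simp) rfl⟩

lemma congr_of_eventuallyEq {U' V' Q' F' : ℝ × ℝ → ℝ} (h : IsRadialWaveAt c U V Q F z)
    (hU : U' =ᶠ[nhds z] U) (hV : V' =ᶠ[nhds z] V) (hQ : Q' =ᶠ[nhds z] Q) (hF : F' z = F z) :
    IsRadialWaveAt c U' V' Q' F' z := by
  obtain ⟨m, n, hVz, hQz⟩ := h.exists_second_partials
  refine ⟨?_, m, n, ?_, hQz.congr_of_eventuallyEq hQ⟩
  · rw [hV.eq_of_nhds, hQ.eq_of_nhds]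
    exact h.hasPartialsAt.congr_of_eventuallyEq hU
  · rw [hQ.eq_of_nhds, hF]
    exact hVz.congr_of_eventuallyEq hV

lemma hasPartialsAt_radius_pow_three :
    HasPartialsAt (fun z => (z.2 + c * z.1) ^ 3) (3 * (z.2 + c * z.1) ^ 2 * c)
      (3 * (z.2 + c * z.1) ^ 2) z := by
  have hr : HasPartialsAt (fun z => z.2 + c * z.1) c 1 z := by
    simpa using (HasPartialsAt.comp_slant (z := z) (c := c) .snd)
  exact (HasPartialsAt.scomp (hasDerivAt_pow 3 _) hr).congr_partials (by simp) (by simp)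

/-- The polarised energy identity. -/
theorem exists_bilinear_partials (h : IsRadialWaveAt c U V Q F z)
    (k : IsRadialWaveAt c X Y Z H z) : ∃ Eₜ Eₐ Jₜ Jₐ,
    HasPartialsAt (fun z => (V z * Y z + Q z * Z z) * (z.2 + c * z.1) ^ 3) Eₜ Eₐ z ∧
    HasPartialsAt (fun z => (c * (V z * Y z + Q z * Z z) + (V z * Z z + Q z * Y z))
      * (z.2 + c * z.1) ^ 3) Jₜ Jₐ z ∧
    Eₜ = Jₐ + (F z * Y z + V z * H z) * (z.2 + c * z.1) ^ 3 := by
  obtain ⟨m, n, hV, hQ⟩ := h.exists_second_partials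
  obtain ⟨m', n', hY, hZ⟩ := k.exists_second_partials
  have hE := (hV.mul hY).add (hQ.mul hZ)
  have hJ := (HasPartialsAt.scomp ((hasDerivAt_id' _).const_mul c) hE).add
    ((hV.mul hZ).add (hQ.mul hY))
  refine ⟨_, _, _, _, hE.mul hasPartialsAt_radius_pow_three,
    hJ.mul hasPartialsAt_radius_pow_three, ?_⟩
  have hr : 3 / (z.2 + c * z.1) * (z.2 + c * z.1) ^ 3 = 3 * (z.2 + c * z.1) ^ 2 := by
    rcases eq_or_ne (z.2 + c * z.1) 0 with h0 | h0
    · simp [h0]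
    · field_simp
  linear_combination (Q z * Y z + V z * Z z) * hr

end IsRadialWaveAt

section Cone

variable {ρ T A : ℝ} {U V Q : ℝ × ℝ → ℝ}

/-- The energy of a wave outside the light cone `r = ρ + t`, in the coordinate `a = r - t`, is at
most `K ^ 2` at all nonnegative times. -/
def ConeEnergyLE (ρ : ℝ) (V Q : ℝ × ℝ → ℝ) (K : ℝ) : Prop :=
  ∀ t, 0 ≤ t → ∀ A, ρ ≤ A → ∫ a in ρ..A, (V (t, a) ^ 2 + Q (t, a) ^ 2) * (a + t) ^ 3 ≤ K ^ 2

/-- The energy of a wave outside the light cone `r = ρ + t` tends to zero as `t → ∞`: the wave is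
non-radiative. -/
def ConeEnergyVanishes (ρ : ℝ) (V Q : ℝ × ℝ → ℝ) : Prop :=
  ∀ ε > 0, ∀ᶠ t in atTop, ∀ A, ρ ≤ A →
    ∫ a in ρ..A, (V (t, a) ^ 2 + Q (t, a) ^ 2) * (a + t) ^ 3 ≤ ε ^ 2

lemma integral_sq_mul_le_of_le_add_sq {f g w : ℝ → ℝ} {C : ℝ} (hA : ρ ≤ A) (hf : Continuous f)
    (hg : Continuous g) (hw : Continuous w) (hw0 : ∀ a ∈ Icc ρ A, 0 ≤ w a)
    (h : ∫ a in ρ..A, (f a ^ 2 + g a ^ 2) * w a ≤ C) :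
    ∫ a in ρ..A, f a ^ 2 * w a ≤ C := by
  refine le_trans (intervalIntegral.integral_mono_on hA ?_ ?_ fun a ha => ?_) h
  · exact Continuous.intervalIntegrable (by fun_prop) _ _
  · exact Continuous.intervalIntegrable (by fun_prop) _ _
  · nlinarith [mul_nonneg (sq_nonneg (g a)) (hw0 a ha)]

lemma ConeEnergyLE.integral_velocity_le {K : ℝ} (h : ConeEnergyLE ρ V Q K) (hρ : 0 < ρ)
    (hV : Continuous V) (hQ : Continuous Q) (hT : 0 ≤ T) (hA : ρ ≤ A) :
    ∫ a in ρ..A, V (T, a) ^ 2 * (a + T) ^ 3 ≤ K ^ 2 := by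
  refine integral_sq_mul_le_of_le_add_sq (g := fun a => Q (T, a)) hA (by fun_prop) (by fun_prop)
    (by fun_prop) (fun a ha => ?_) (h T hT A hA)
  have : 0 < a + T := by linarith [ha.1]
  positivity

lemma integral_partial_fst_eq (hU : Continuous U) (hV : Continuous V) (hQ : Continuous Q)
    (hpartials : ∀ t > 0, HasPartialsAt U (V (t, A) + Q (t, A)) (Q (t, A)) (t, A)) (hT : 0 ≤ T) :
    ∫ t in 0..T, (V (t, A) + Q (t, A)) = U (T, A) - U (0, A) :=
  intervalIntegral.integral_eq_sub_of_hasDerivAt_of_le hT (f := fun t => U (t, A)) (by fun_prop)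
    (fun t ht => (hpartials t ht.1).hasDerivAt_fst)
    (Continuous.intervalIntegrable (by fun_prop) _ _)

lemma integral_partial_snd_eq (hU : Continuous U) (hQ : Continuous Q)
    (hpartials : ∀ a > ρ, HasPartialsAt U (V (T, a) + Q (T, a)) (Q (T, a)) (T, a)) {a : ℝ}
    (ha : ρ ≤ a) (haA : a ≤ A) : ∫ s in a..A, Q (T, s) = U (T, A) - U (T, a) :=
  intervalIntegral.integral_eq_sub_of_hasDerivAt_of_le haA (f := fun a => U (T, a)) (by fun_prop)
    (fun s hs => (hpartials s (ha.trans_lt hs.1)).hasDerivAt_snd)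
    (Continuous.intervalIntegrable (by fun_prop) _ _)

lemma frequently_abs_lt_of_coneEnergyLE {K δ : ℝ} (hρ : 0 < ρ) (hU : Continuous U)
    (hV : Continuous V) (hQ : Continuous Q)
    (hpartials : ∀ t > 0, ∀ a > ρ, HasPartialsAt U (V (t, a) + Q (t, a)) (Q (t, a)) (t, a))
    (hU0 : ∀ a > ρ, U (0, a) = 0) (hK : ConeEnergyLE ρ V Q K) (hT : 0 ≤ T) (hδ : 0 < δ) :
    ∃ᶠ A in atTop, |U (T, A)| < δ := by
  have hmass : ∀ t ∈ Icc 0 T, ∀ B, ρ ≤ B →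
      ∫ a in ρ..B, (V (t, a) + Q (t, a)) ^ 2 ≤ 2 / ρ ^ 3 * K ^ 2 := fun t ht B hB => by
    refine le_trans ?_ (mul_le_mul_of_nonneg_left (hK t ht.1 B hB) (by positivity))
    rw [← intervalIntegral.integral_const_mul]
    refine intervalIntegral.integral_mono_on hB (Continuous.intervalIntegrable (by fun_prop) _ _)
      (Continuous.intervalIntegrable (by fun_prop) _ _) fun a ha => ?_
    have hr : ρ ^ 3 ≤ (a + t) ^ 3 := pow_le_pow_left₀ hρ.le (by linarith [ha.1, ht.1]) 3
    rw [div_mul_eq_mul_div, le_div_iff₀ (by positivity)]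
    nlinarith [sq_nonneg (V (t, a) - Q (t, a)), mul_le_mul_of_nonneg_left hr
      (add_nonneg (sq_nonneg (V (t, a))) (sq_nonneg (Q (t, a)))), pow_pos hρ 3]
  have hsmall := frequently_integral_lt (δ := δ ^ 2 / (T + 1)) hT (by positivity)
    (J := fun z => (V z + Q z) ^ 2) (by fun_prop) (fun z => sq_nonneg _) hmass
  refine (hsmall.and_eventually (eventually_gt_atTop ρ)).mono fun A ⟨hA, hρA⟩ => ?_
  have hUA : U (T, A) = ∫ t in 0..T, (V (t, A) + Q (t, A)) := by
    rw [integral_partial_fst_eq hU hV hQ (fun t ht => hpartials t ht A hρA) hT, hU0 A hρA, sub_zero]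
  refine abs_lt_of_sq_lt_sq ?_ hδ.le
  calc U (T, A) ^ 2 ≤ (T - 0) * ∫ t in 0..T, (V (t, A) + Q (t, A)) ^ 2 := by
        rw [hUA]
        exact sq_integral_le hT (by fun_prop)
    _ ≤ T * (δ ^ 2 / (T + 1)) := by
        rw [sub_zero]
        exact mul_le_mul_of_nonneg_left hA.le hT
    _ < δ ^ 2 := by
        rw [mul_div_assoc', div_lt_iff₀ (by positivity)]
        nlinarith [pow_pos hδ 2]

lemma abs_integral_le_of_coneEnergyLE {K : ℝ} (hρ : 0 < ρ) (hV : Continuous V) (hQ : Continuous Q)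
    (hK0 : 0 ≤ K) (hK : ConeEnergyLE ρ V Q K) (hT : 0 ≤ T) {a : ℝ} (ha : ρ ≤ a) (haA : a ≤ A) :
    |∫ s in a..A, Q (T, s)| ≤ K / (a + T) := by
  have hr : ∀ s ∈ uIcc a A, 0 < s + T := fun s hs => by
    rw [uIcc_of_le haA] at hs
    linarith [hs.1]
  have hQK : ∫ s in a..A, Q (T, s) ^ 2 * (s + T) ^ 3 ≤ K ^ 2 := by
    refine le_trans (intervalIntegral.integral_mono_interval ha haA le_rfl ?_
      (Continuous.intervalIntegrable (by fun_prop) _ _)) (integral_sq_mul_le_of_le_add_sq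
      (g := fun a => V (T, a)) (ha.trans haA) (by fun_prop) (by fun_prop) (by fun_prop) ?_
      (by simpa only [add_comm] using hK T hT A (ha.trans haA)))
    · refine ae_restrict_of_forall_mem measurableSet_Ioc fun s hs => ?_
      have : 0 < s + T := by linarith [hs.1]
      positivity
    · intro s hs
      have : 0 < s + T := by linarith [hs.1]
      positivity
  have hinv : ∫ s in a..A, (1 / (s + T) ^ 3) ^ 2 * (s + T) ^ 3 ≤ (1 / (a + T)) ^ 2 := by
    calc ∫ s in a..A, (1 / (s + T) ^ 3) ^ 2 * (s + T) ^ 3 = ∫ s in a..A, 1 / (s + T) ^ (2 + 1) :=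
          intervalIntegral.integral_congr fun s hs => by
            have := hr s hs
            field_simp
      _ ≤ 1 / ((2 : ℕ) * (a + T) ^ 2) :=
          integral_one_div_add_pow_le two_ne_zero (hr a left_mem_uIcc) haA
      _ ≤ (1 / (a + T)) ^ 2 := by
          have := hr a left_mem_uIcc
          rw [div_pow, one_pow]
          gcongr
          push_cast
          nlinarith [pow_pos this 2]
  have hcs := abs_integral_mul_mul_le haA (f := fun s => Q (T, s)) (g := fun s => 1 / (s + T) ^ 3)
    (w := fun s => (s + T) ^ 3) (by fun_prop)
    (by fun_prop (disch := intro s hs; have := hr s hs; positivity)) (by fun_prop)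
    (fun s hs => by have := hr s (by rwa [uIcc_of_le haA]); positivity) hK0
    (by have := hr a left_mem_uIcc; positivity) hQK hinv
  rw [div_eq_mul_one_div]
  refine le_of_eq_of_le (congrArg _ (intervalIntegral.integral_congr fun s hs => ?_)) hcs
  have := hr s hs
  field_simp

theorem abs_le_div_of_coneEnergyLE {K : ℝ} (hρ : 0 < ρ) (hU : Continuous U)
    (hV : Continuous V) (hQ : Continuous Q)
    (hpartials : ∀ t > 0, ∀ a > ρ, HasPartialsAt U (V (t, a) + Q (t, a)) (Q (t, a)) (t, a))
    (hU0 : ∀ a ≥ ρ, U (0, a) = 0) (hK0 : 0 ≤ K) (hK : ConeEnergyLE ρ V Q K) {a : ℝ}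
    (hT : 0 ≤ T) (ha : ρ ≤ a) : |U (T, a)| ≤ K / (a + T) := by
  rcases hT.eq_or_lt with rfl | hT0
  · rw [hU0 a ha, abs_zero, add_zero]
    exact div_nonneg hK0 (by linarith)
  refine le_of_forall_pos_lt_add fun δ hδ => ?_
  obtain ⟨A, hA, haA⟩ := ((frequently_abs_lt_of_coneEnergyLE hρ hU hV hQ hpartials
    (fun a ha => hU0 a ha.le) hK hT hδ).and_eventually (eventually_ge_atTop a)).exists
  have hint := abs_integral_le_of_coneEnergyLE hρ hV hQ hK0 hK hT ha haA
  rw [integral_partial_snd_eq hU hQ (hpartials T hT0) ha haA, abs_sub_comm] at hint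
  calc |U (T, a)| = |(U (T, a) - U (T, A)) + U (T, A)| := by rw [sub_add_cancel]
    _ ≤ |U (T, a) - U (T, A)| + |U (T, A)| := abs_add_le _ _
    _ < K / (a + T) + δ := add_lt_add_of_le_of_lt hint hA

end Cone

/-! ### Odd nonlinear waves outside a light cone -/

/-- A solution of the radial wave equation with source `|U|^(p-1) U` outside the light cone
`r = ρ + t`, `t > 0`, with `U = 0` at `t = 0`. The coordinate `a = r - t` replaces `r`, and `U` and
its derivatives `V = ∂ₜU`, `Q = ∂ᵣU` are extended continuously to the whole plane. -/
structure IsOddConeSolution (p : ℕ) (ρ : ℝ) (U V Q : ℝ × ℝ → ℝ) : Prop where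
  continuous : Continuous U
  continuous_velocity : Continuous V
  continuous_gradient : Continuous Q
  isRadialWaveAt : ∀ t > 0, ∀ a > ρ, IsRadialWaveAt 1 U V Q (fun z => |U z| ^ (p - 1) * U z) (t, a)
  initial_eq_zero : ∀ a ≥ ρ, U (0, a) = 0
  initial_gradient_eq_zero : ∀ a ≥ ρ, Q (0, a) = 0

section ConeSolution

variable {p : ℕ} {ρ T A K D : ℝ} {U V Q : ℝ × ℝ → ℝ}

lemma IsOddConeSolution.abs_le_div (h : IsOddConeSolution p ρ U V Q) (hρ : 0 < ρ) (hK0 : 0 ≤ K)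
    (hK : ConeEnergyLE ρ V Q K) {t a : ℝ} (ht : 0 ≤ t) (ha : ρ ≤ a) : |U (t, a)| ≤ K / (a + t) :=
  abs_le_div_of_coneEnergyLE hρ h.continuous h.continuous_velocity h.continuous_gradient
    (fun t ht a ha => by simpa using (h.isRadialWaveAt t ht a ha).hasPartialsAt)
    h.initial_eq_zero hK0 hK ht ha

/-- The quantitative hypotheses on an odd solution: its energy is at most `K ^ 2`, and `D` controls
the strength `K ^ (p - 1)` of the nonlinearity. The bound `D` is separate from `K` so that it stays
fixed when `K` is halved. -/
structure IsOddConeSolution.HasBounds (p : ℕ) (ρ : ℝ) (U V Q : ℝ × ℝ → ℝ) (K D : ℝ) : Prop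
    extends IsOddConeSolution p ρ U V Q where
  five_le : 5 ≤ p
  one_le : 1 ≤ ρ
  nonneg : 0 ≤ K
  energy_le : ConeEnergyLE ρ V Q K
  pow_le : K ^ (p - 1) ≤ D

namespace IsOddConeSolution.HasBounds

variable (h : HasBounds p ρ U V Q K D)
include h

lemma coeff_nonneg : 0 ≤ D := (pow_nonneg h.nonneg _).trans h.pow_le

lemma potential_le {t a : ℝ} (ht : 0 ≤ t) (ha : ρ ≤ a) :
    |U (t, a)| ^ (p - 1) ≤ D / (a + t) ^ 4 := by
  have hr : 1 ≤ a + t := by linarith [h.one_le]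
  calc |U (t, a)| ^ (p - 1) ≤ (K / (a + t)) ^ (p - 1) := by
        gcongr
        exact h.abs_le_div (by linarith [h.one_le]) h.nonneg h.energy_le ht ha
    _ = K ^ (p - 1) / (a + t) ^ (p - 1) := div_pow _ _ _
    _ ≤ D / (a + t) ^ 4 := by
        have := h.five_le
        exact div_le_div₀ h.coeff_nonneg h.pow_le (by positivity)
          (pow_le_pow_right₀ hr (by omega))

lemma integral_sq_source_le (hT : 0 ≤ T) (hA : ρ ≤ A) :
    ∫ a in ρ..A, (|U (T, a)| ^ (p - 1) * U (T, a) * (a + T) ^ 2) ^ 2 * (a + T) ^ 3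
      ≤ (D * K / (ρ + T)) ^ 2 := by
  have hr : ∀ a ∈ Icc ρ A, 1 ≤ a + T := fun a ha => by linarith [h.one_le, ha.1]
  have hρT : 1 ≤ ρ + T := hr ρ ⟨le_rfl, hA⟩
  have hU := h.continuous
  calc ∫ a in ρ..A, (|U (T, a)| ^ (p - 1) * U (T, a) * (a + T) ^ 2) ^ 2 * (a + T) ^ 3
      ≤ ∫ a in ρ..A, (D * K) ^ 2 * (1 / (a + T) ^ (2 + 1)) := by
        refine intervalIntegral.integral_mono_on hA
          (Continuous.intervalIntegrable (by fun_prop) _ _)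
          (ContinuousOn.intervalIntegrable (by
            rw [uIcc_of_le hA]
            fun_prop (disch := intro a ha; have := hr a ha; positivity))) fun a ha => ?_
        have hra := hr a ha
        have hsource : |U (T, a)| ^ (p - 1) * |U (T, a)| ≤ D / (a + T) ^ 4 * (K / (a + T)) :=
          mul_le_mul (h.potential_le hT ha.1)
            (h.abs_le_div (by linarith [h.one_le]) h.nonneg h.energy_le hT ha.1)
            (abs_nonneg _) (by have := h.coeff_nonneg; positivity)
        calc (|U (T, a)| ^ (p - 1) * U (T, a) * (a + T) ^ 2) ^ 2 * (a + T) ^ 3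
            = (|U (T, a)| ^ (p - 1) * |U (T, a)|) ^ 2 * (a + T) ^ 7 := by
              rw [mul_pow _ |U (T, a)|, sq_abs]
              ring
          _ ≤ (D / (a + T) ^ 4 * (K / (a + T))) ^ 2 * (a + T) ^ 7 := by gcongr
          _ = (D * K) ^ 2 * (1 / (a + T) ^ (2 + 1)) := by
              field_simp
              ring
    _ ≤ (D * K) ^ 2 * (1 / ((2 : ℕ) * (ρ + T) ^ 2)) := by
        rw [intervalIntegral.integral_const_mul]
        gcongr
        exact integral_one_div_add_pow_le two_ne_zero (by linarith) hA
    _ ≤ (D * K / (ρ + T)) ^ 2 := by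
        rw [div_pow, div_eq_mul_one_div _ ((ρ + T) ^ 2)]
        gcongr
        push_cast
        nlinarith

lemma integral_sq_potential_mul_velocity_le (hT : 0 ≤ T) (hA : ρ ≤ A) :
    ∫ a in ρ..A, (|U (T, a)| ^ (p - 1) * V (T, a) * (a + T) ^ 2) ^ 2 * (a + T) ^ 3
      ≤ (D * K / (ρ + T) ^ 2) ^ 2 := by
  have hρT : 1 ≤ ρ + T := by linarith [h.one_le]
  have hU := h.continuous
  have hV := h.continuous_velocity
  calc ∫ a in ρ..A, (|U (T, a)| ^ (p - 1) * V (T, a) * (a + T) ^ 2) ^ 2 * (a + T) ^ 3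
      ≤ ∫ a in ρ..A, (D / (ρ + T) ^ 2) ^ 2 * (V (T, a) ^ 2 * (a + T) ^ 3) := by
        refine intervalIntegral.integral_mono_on hA
          (Continuous.intervalIntegrable (by fun_prop) _ _)
          (Continuous.intervalIntegrable (by fun_prop) _ _) fun a ha => ?_
        have hra : ρ + T ≤ a + T := by linarith [ha.1]
        have hra0 : 0 < a + T := by linarith
        have hpot : |U (T, a)| ^ (p - 1) * (a + T) ^ 2 ≤ D / (ρ + T) ^ 2 :=
          calc |U (T, a)| ^ (p - 1) * (a + T) ^ 2 ≤ D / (a + T) ^ 4 * (a + T) ^ 2 := by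
                gcongr
                exact h.potential_le hT ha.1
            _ = D / (a + T) ^ 2 := by field_simp
            _ ≤ D / (ρ + T) ^ 2 := by
                have := h.coeff_nonneg
                gcongr
        calc (|U (T, a)| ^ (p - 1) * V (T, a) * (a + T) ^ 2) ^ 2 * (a + T) ^ 3
            = (|U (T, a)| ^ (p - 1) * (a + T) ^ 2) ^ 2 * (V (T, a) ^ 2 * (a + T) ^ 3) := by ring
          _ ≤ (D / (ρ + T) ^ 2) ^ 2 * (V (T, a) ^ 2 * (a + T) ^ 3) := by gcongr
    _ ≤ (D / (ρ + T) ^ 2) ^ 2 * K ^ 2 := by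
        rw [intervalIntegral.integral_const_mul]
        gcongr
        exact h.energy_le.integral_velocity_le (by linarith [h.one_le]) hV h.continuous_gradient
          hT hA
    _ = (D * K / (ρ + T) ^ 2) ^ 2 := by ring

lemma abs_integral_potential_mul_le {X : ℝ × ℝ → ℝ} {N : ℝ} (hX : Continuous X) (hN : 0 ≤ N)
    (hXN : ∀ t ≥ 0, ∀ A ≥ ρ, ∫ a in ρ..A, X (t, a) ^ 2 / (a + t) ≤ N ^ 2) (hT : 0 ≤ T)
    (hA : ρ ≤ A) :
    |∫ t in 0..T, ∫ a in ρ..A, |U (t, a)| ^ (p - 1) * V (t, a) * X (t, a) * (a + t) ^ 3|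
      ≤ D * K * N / ρ := by
  have hU := h.continuous
  have hV := h.continuous_velocity
  have hρ : 1 ≤ ρ := h.one_le
  have hDK : 0 ≤ D * K := mul_nonneg h.coeff_nonneg h.nonneg
  have hslice : ∀ t ∈ Icc 0 T,
      |∫ a in ρ..A, |U (t, a)| ^ (p - 1) * V (t, a) * X (t, a) * (a + t) ^ 3|
        ≤ D * K * N * (1 / (t + ρ) ^ (1 + 1)) := fun t ht => by
    have hr : ∀ a ∈ uIcc ρ A, 0 < a + t := fun a ha => by
      rw [uIcc_of_le hA] at ha
      linarith [ha.1, ht.1]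
    have hcs := abs_integral_mul_mul_le hA
      (f := fun a => |U (t, a)| ^ (p - 1) * V (t, a) * (a + t) ^ 2)
      (g := fun a => X (t, a) / (a + t) ^ 2) (w := fun a => (a + t) ^ 3) (by fun_prop)
      (by fun_prop (disch := intro a ha; have := hr a ha; positivity)) (by fun_prop)
      (fun a ha => by have := hr a (by rwa [uIcc_of_le hA]); positivity) (by positivity) hN
      (h.integral_sq_potential_mul_velocity_le ht.1 hA)
      (le_of_eq_of_le (intervalIntegral.integral_congr fun a ha => by
        have := hr a ha
        field_simp) (hXN t ht.1 A hA))
    calc _ = |∫ a in ρ..A, |U (t, a)| ^ (p - 1) * V (t, a) * (a + t) ^ 2 * (X (t, a) / (a + t) ^ 2)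
          * (a + t) ^ 3| := congrArg _ (intervalIntegral.integral_congr fun a ha => by
            have := hr a ha
            field_simp)
      _ ≤ D * K / (ρ + t) ^ 2 * N := hcs
      _ = _ := by ring
  calc _ ≤ ∫ t in 0..T, |∫ a in ρ..A, |U (t, a)| ^ (p - 1) * V (t, a) * X (t, a) * (a + t) ^ 3| :=
        intervalIntegral.abs_integral_le_integral_abs hT
    _ ≤ ∫ t in 0..T, D * K * N * (1 / (t + ρ) ^ (1 + 1)) := by
        refine intervalIntegral.integral_mono_on hT
          (Continuous.intervalIntegrable (by fun_prop) _ _) (ContinuousOn.intervalIntegrable ?_)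
          hslice
        rw [uIcc_of_le hT]
        fun_prop (disch := rintro t ⟨ht, -⟩; positivity)
    _ ≤ D * K * N * (1 / ((1 : ℕ) * (0 + ρ) ^ 1)) := by
        rw [intervalIntegral.integral_const_mul]
        gcongr
        exact integral_one_div_add_pow_le one_ne_zero (by linarith) hT
    _ = D * K * N / ρ := by simp [div_eq_mul_inv]

lemma integral_sq_div_le (hT : 0 ≤ T) (hA : ρ ≤ A) :
    ∫ a in ρ..A, U (T, a) ^ 2 / (a + T) ≤ K ^ 2 := by
  have hr : ∀ a ∈ Icc ρ A, 1 ≤ a + T := fun a ha => by linarith [h.one_le, ha.1]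
  have hρT : 1 ≤ ρ + T := hr ρ ⟨le_rfl, hA⟩
  have hU := h.continuous
  calc ∫ a in ρ..A, U (T, a) ^ 2 / (a + T) ≤ ∫ a in ρ..A, K ^ 2 * (1 / (a + T) ^ (2 + 1)) := by
        refine intervalIntegral.integral_mono_on hA ?_ ?_ fun a ha => ?_
        iterate 2
          refine ContinuousOn.intervalIntegrable ?_
          rw [uIcc_of_le hA]
          fun_prop (disch := intro a ha; have := hr a ha; positivity)
        have hra := hr a ha
        have hUa := h.abs_le_div (by linarith [h.one_le]) h.nonneg h.energy_le hT ha.1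
        calc U (T, a) ^ 2 / (a + T) = |U (T, a)| ^ 2 / (a + T) := by rw [sq_abs]
          _ ≤ (K / (a + T)) ^ 2 / (a + T) := by gcongr
          _ = K ^ 2 * (1 / (a + T) ^ (2 + 1)) := by field_simp
    _ ≤ K ^ 2 * (1 / ((2 : ℕ) * (ρ + T) ^ 2)) := by
        rw [intervalIntegral.integral_const_mul]
        gcongr
        exact integral_one_div_add_pow_le two_ne_zero (by linarith) hA
    _ ≤ K ^ 2 := by
        refine mul_le_of_le_one_right (sq_nonneg K) ((div_le_one (by positivity)).2 ?_)
        push_cast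
        nlinarith [one_le_pow₀ hρT (n := 2)]

lemma integral_energy_le (hT : 0 ≤ T) (hA : ρ ≤ A) :
    ∫ a in ρ..A, (V (T, a) ^ 2 + Q (T, a) ^ 2) * (a + T) ^ 3 ≤
      (∫ a in ρ..A, V (0, a) ^ 2 * a ^ 3) + (∫ t in 0..T, (V (t, A) + Q (t, A)) ^ 2 * (A + t) ^ 3)
        + 2 * (D * K * K / ρ) := by
  have hU := h.continuous
  have hV := h.continuous_velocity
  have hQ := h.continuous_gradient
  have hlaw := integral_sub_integral_eq_of_conservation
    (G := fun z => (V z * V z + Q z * Q z) * (z.2 + 1 * z.1) ^ 3)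
    (J := fun z => (1 * (V z * V z + Q z * Q z) + (V z * Q z + Q z * V z)) * (z.2 + 1 * z.1) ^ 3)
    (S := fun z => (|U z| ^ (p - 1) * U z * V z + V z * (|U z| ^ (p - 1) * U z))
      * (z.2 + 1 * z.1) ^ 3) hA hT
    (by fun_prop) (by fun_prop) (by fun_prop) fun t ht a ha =>
      (h.isRadialWaveAt t ht.1 a ha.1).exists_bilinear_partials (h.isRadialWaveAt t ht.1 a ha.1)
  have hsource := le_of_abs_le (h.abs_integral_potential_mul_le hU h.nonneg
    (fun t ht A hA => h.integral_sq_div_le ht hA) hT hA)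
  have hinner : 0 ≤ ∫ t in 0..T, (V (t, ρ) + Q (t, ρ)) ^ 2 * (ρ + t) ^ 3 :=
    intervalIntegral.integral_nonneg hT fun t ht => by
      have := h.one_le
      have := ht.1
      positivity
  have hinitial : ∫ a in ρ..A, (V (0, a) * V (0, a) + Q (0, a) * Q (0, a)) * (a + 1 * 0) ^ 3 =
      ∫ a in ρ..A, V (0, a) ^ 2 * a ^ 3 := intervalIntegral.integral_congr fun a ha => by
    rw [uIcc_of_le hA] at ha
    simp only [h.initial_gradient_eq_zero a ha.1]
    ring
  have hdensity : ∀ x y : ℝ, 1 * (x * x + y * y) + (x * y + y * x) = (x + y) ^ 2 := by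
    intro x y
    ring
  have hpower : ∀ x y r : ℝ, (|x| ^ (p - 1) * x * y + y * (|x| ^ (p - 1) * x)) * r ^ 3 =
    2 * (|x| ^ (p - 1) * y * x * r ^ 3) := fun x y r => by ring
  simp only [hinitial, hdensity, hpower] at hlaw
  simp only [one_mul, intervalIntegral.integral_const_mul, ← sq] at hlaw
  linarith

theorem integral_energy_le_of_initial {M : ℝ} (hM : ∀ A ≥ ρ, ∫ a in ρ..A, V (0, a) ^ 2 * a ^ 3 ≤ M)
    (hT : 0 ≤ T) (hA : ρ ≤ A) :
    ∫ a in ρ..A, (V (T, a) ^ 2 + Q (T, a) ^ 2) * (a + T) ^ 3 ≤ M + 2 * (D * K * K / ρ) := by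
  have hV := h.continuous_velocity
  have hQ := h.continuous_gradient
  have hr : ∀ a ≥ ρ, ∀ t ≥ 0, 0 ≤ a + t := fun a ha t ht => by linarith [h.one_le]
  have hmass : ∀ t ∈ Icc 0 T, ∀ B, ρ ≤ B →
      ∫ a in ρ..B, (V (t, a) + Q (t, a)) ^ 2 * |a + t| ^ 3 ≤ 2 * K ^ 2 := fun t ht B hB => by
    refine le_trans ?_ (mul_le_mul_of_nonneg_left (h.energy_le t ht.1 B hB) zero_le_two)
    rw [← intervalIntegral.integral_const_mul]
    refine intervalIntegral.integral_mono_on hB (Continuous.intervalIntegrable (by fun_prop) _ _)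
      (Continuous.intervalIntegrable (by fun_prop) _ _) fun a ha => ?_
    rw [abs_of_nonneg (hr a ha.1 t ht.1), ← mul_assoc]
    exact mul_le_mul_of_nonneg_right (add_sq_le) (pow_nonneg (hr a ha.1 t ht.1) 3)
  refine le_of_forall_pos_lt_add fun δ hδ => ?_
  obtain ⟨B, hflux, hAB⟩ := ((frequently_integral_lt hT hδ
    (J := fun z => (V z + Q z) ^ 2 * |z.2 + z.1| ^ 3) (by fun_prop) (fun z => by positivity)
    hmass).and_eventually (eventually_ge_atTop A)).exists
  have hflux' : ∫ t in 0..T, (V (t, B) + Q (t, B)) ^ 2 * (B + t) ^ 3 < δ :=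
    lt_of_eq_of_lt (intervalIntegral.integral_congr fun t ht => by
      rw [uIcc_of_le hT] at ht
      simp only [abs_of_nonneg (hr B (hA.trans hAB) t ht.1)]) hflux
  calc _ ≤ ∫ a in ρ..B, (V (T, a) ^ 2 + Q (T, a) ^ 2) * (a + T) ^ 3 :=
        intervalIntegral.integral_mono_interval le_rfl hA hAB
          (ae_restrict_of_forall_mem measurableSet_Ioc fun a ha => by
            have := hr a ha.1.le T hT
            positivity) (Continuous.intervalIntegrable (by fun_prop) _ _)
    _ ≤ _ := h.integral_energy_le hT (hA.trans hAB)
    _ < M + 2 * (D * K * K / ρ) + δ := by linarith [hM B (hA.trans hAB)]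

end IsOddConeSolution.HasBounds

end ConeSolution

/-- A free wave `X` outside the light cone `r = ρ + t`, with velocity `Y` and radial derivative `Z`,
vanishing on the cone, of energy at most `E ^ 2` and with `∫ X² / r ≤ N ^ 2` at all positive times;
such waves are paired with a nonlinear one. -/
structure IsConeTestWave (ρ : ℝ) (X Y Z : ℝ × ℝ → ℝ) (E N : ℝ) : Prop where
  continuous : Continuous X
  continuous_velocity : Continuous Y
  continuous_gradient : Continuous Z
  isRadialWaveAt : ∀ t > 0, ∀ a > ρ, IsRadialWaveAt 1 X Y Z 0 (t, a)
  boundary_eq_zero : ∀ t ≥ 0, X (t, ρ) = 0 ∧ Y (t, ρ) = 0 ∧ Z (t, ρ) = 0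
  energy_nonneg : 0 ≤ E
  energy_le : ConeEnergyLE ρ Y Z E
  nonneg : 0 ≤ N
  integral_sq_div_le : ∀ t ≥ 0, ∀ A ≥ ρ, ∫ a in ρ..A, X (t, a) ^ 2 / (a + t) ≤ N ^ 2

namespace IsOddConeSolution.HasBounds

variable {p : ℕ} {ρ T A K D E N : ℝ} {U V Q X Y Z : ℝ × ℝ → ℝ}
  (h : HasBounds p ρ U V Q K D) (k : IsConeTestWave ρ X Y Z E N)
include h k

-- The source is paired with `∂ₜX`; subtracting `F(U) X` from the density moves the time derivative
-- onto `F(U)`, so that only `X` itself has to be controlled.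
lemma exists_corrected_bilinear_partials {t a : ℝ} (ht : 0 < t) (ha : ρ < a) :
    ∃ Eₜ Eₐ Jₜ Jₐ,
    HasPartialsAt (fun z => (V z * Y z + Q z * Z z - |U z| ^ (p - 1) * U z * X z)
      * (z.2 + z.1) ^ 3) Eₜ Eₐ (t, a) ∧
    HasPartialsAt (fun z => ((V z + Q z) * (Y z + Z z) - |U z| ^ (p - 1) * U z * X z)
      * (z.2 + z.1) ^ 3) Jₜ Jₐ (t, a) ∧
    Eₜ = Jₐ + -p * (|U (t, a)| ^ (p - 1) * V (t, a) * X (t, a) * (a + t) ^ 3) := by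
  obtain ⟨Eₜ, Eₐ, Jₜ, Jₐ, hE, hJ, hEJ⟩ :=
    (h.isRadialWaveAt t ht a ha).exists_bilinear_partials (k.isRadialWaveAt t ht a ha)
  have hp : ((p - 1 : ℕ) : ℝ) + 1 = p := by
    have := h.five_le
    exact_mod_cast Nat.sub_add_cancel (by omega)
  have hF := HasPartialsAt.scomp (hasDerivAt_abs_pow_mul_self (p - 1) _)
    (h.isRadialWaveAt t ht a ha).hasPartialsAt
  have hFX := (hF.mul (k.isRadialWaveAt t ht a ha).hasPartialsAt).mul
    (IsRadialWaveAt.hasPartialsAt_radius_pow_three (c := 1))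
  refine ⟨_, _, _, _, (hE.sub hFX).congr_of_eventuallyEq (.of_forall fun z => ?_),
    (hJ.sub hFX).congr_of_eventuallyEq (.of_forall fun z => ?_), ?_⟩
  · ring
  · ring
  · rw [hEJ, hp]
    simp only [Pi.zero_apply]
    ring

lemma integral_corrected_bilinear_eq (hT : 0 ≤ T) (hA : ρ ≤ A) :
    (∫ a in ρ..A, (V (T, a) * Y (T, a) + Q (T, a) * Z (T, a)
        - |U (T, a)| ^ (p - 1) * U (T, a) * X (T, a)) * (a + T) ^ 3)
      - ∫ a in ρ..A, V (0, a) * Y (0, a) * a ^ 3 =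
    (∫ t in 0..T, ((V (t, A) + Q (t, A)) * (Y (t, A) + Z (t, A))
        - |U (t, A)| ^ (p - 1) * U (t, A) * X (t, A)) * (A + t) ^ 3)
      - p * ∫ t in 0..T, ∫ a in ρ..A, |U (t, a)| ^ (p - 1) * V (t, a) * X (t, a) * (a + t) ^ 3 := by
  have hU := h.continuous
  have hV := h.continuous_velocity
  have hQ := h.continuous_gradient
  have hX := k.continuous
  have hY := k.continuous_velocity
  have hZ := k.continuous_gradient
  have hlaw := integral_sub_integral_eq_of_conservation hA hT
    (G := fun z => (V z * Y z + Q z * Z z - |U z| ^ (p - 1) * U z * X z) * (z.2 + z.1) ^ 3)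
    (J := fun z => ((V z + Q z) * (Y z + Z z) - |U z| ^ (p - 1) * U z * X z) * (z.2 + z.1) ^ 3)
    (S := fun z => -p * (|U z| ^ (p - 1) * V z * X z * (z.2 + z.1) ^ 3))
    (by fun_prop) (by fun_prop) (by fun_prop)
    fun t ht a ha => h.exists_corrected_bilinear_partials k ht.1 ha.1
  have hinitial : ∫ a in ρ..A, (V (0, a) * Y (0, a) + Q (0, a) * Z (0, a)
      - |U (0, a)| ^ (p - 1) * U (0, a) * X (0, a)) * (a + 0) ^ 3 =
      ∫ a in ρ..A, V (0, a) * Y (0, a) * a ^ 3 := intervalIntegral.integral_congr fun a ha => by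
    rw [uIcc_of_le hA] at ha
    simp [h.initial_gradient_eq_zero a ha.1, h.initial_eq_zero a ha.1]
  have hinner : ∫ t in 0..T, ((V (t, ρ) + Q (t, ρ)) * (Y (t, ρ) + Z (t, ρ))
      - |U (t, ρ)| ^ (p - 1) * U (t, ρ) * X (t, ρ)) * (ρ + t) ^ 3 = ∫ _ in 0..T, (0 : ℝ) :=
    intervalIntegral.integral_congr fun t ht => by
      rw [uIcc_of_le hT] at ht
      obtain ⟨hX0, hY0, hZ0⟩ := k.boundary_eq_zero t ht.1
      simp [hX0, hY0, hZ0]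
  simp only [hinitial, hinner, intervalIntegral.integral_const_mul,
    intervalIntegral.integral_zero] at hlaw
  linarith

lemma abs_integral_source_mul_le (hT : 0 ≤ T) (hA : ρ ≤ A) :
    |∫ a in ρ..A, |U (T, a)| ^ (p - 1) * U (T, a) * X (T, a) * (a + T) ^ 3|
      ≤ D * K / (ρ + T) * N := by
  have hU := h.continuous
  have hX := k.continuous
  have hρT : 0 < ρ + T := by linarith [h.one_le]
  have hr : ∀ a ∈ uIcc ρ A, 0 < a + T := fun a ha => by
    rw [uIcc_of_le hA] at ha
    linarith [ha.1]
  refine le_of_eq_of_le (congrArg _ (intervalIntegral.integral_congr fun a ha => ?_))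
    (abs_integral_mul_mul_le hA (f := fun a => |U (T, a)| ^ (p - 1) * U (T, a) * (a + T) ^ 2)
      (g := fun a => X (T, a) / (a + T) ^ 2) (w := fun a => (a + T) ^ 3) (by fun_prop)
      (by fun_prop (disch := intro a ha; have := hr a ha; positivity)) (by fun_prop)
      (fun a ha => by have := hr a (by rwa [uIcc_of_le hA]); positivity)
      (by have := h.coeff_nonneg; have := h.nonneg; positivity) k.nonneg
      (h.integral_sq_source_le hT hA)
      (le_of_eq_of_le (intervalIntegral.integral_congr fun a ha => ?_)
        (k.integral_sq_div_le T hT A hA)))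
  all_goals
    have := hr a ha
    field_simp

lemma abs_integral_velocity_pairing_le {ε : ℝ} (hε : 0 ≤ ε) (hT : 0 ≤ T) (hA : ρ ≤ A)
    (hVQ : ∫ a in ρ..A, (V (T, a) ^ 2 + Q (T, a) ^ 2) * (a + T) ^ 3 ≤ ε ^ 2) :
    |∫ a in ρ..A, (V (T, a) * Y (T, a) + Q (T, a) * Z (T, a)) * (a + T) ^ 3| ≤ 2 * (ε * E) := by
  have hV := h.continuous_velocity
  have hQ := h.continuous_gradient
  have hY := k.continuous_velocity
  have hZ := k.continuous_gradient
  have hr : ∀ a ∈ Icc ρ A, 0 ≤ (a + T) ^ 3 := fun a ha =>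
    pow_nonneg (by linarith [h.one_le, ha.1]) 3
  have hYZ := k.energy_le T hT A hA
  have hvel : |∫ a in ρ..A, V (T, a) * Y (T, a) * (a + T) ^ 3| ≤ ε * E :=
    abs_integral_mul_mul_le hA (by fun_prop) (by fun_prop) (by fun_prop) hr hε k.energy_nonneg
      (integral_sq_mul_le_of_le_add_sq hA (by fun_prop) (by fun_prop) (by fun_prop) hr hVQ)
      (integral_sq_mul_le_of_le_add_sq hA (by fun_prop) (by fun_prop) (by fun_prop) hr hYZ)
  have hgrad : |∫ a in ρ..A, Q (T, a) * Z (T, a) * (a + T) ^ 3| ≤ ε * E :=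
    abs_integral_mul_mul_le hA (by fun_prop) (by fun_prop) (by fun_prop) hr hε k.energy_nonneg
      (integral_sq_mul_le_of_le_add_sq (g := fun a => V (T, a)) hA (by fun_prop) (by fun_prop)
        (by fun_prop) hr (by simpa only [add_comm] using hVQ))
      (integral_sq_mul_le_of_le_add_sq (g := fun a => Y (T, a)) hA (by fun_prop) (by fun_prop)
        (by fun_prop) hr (by simpa only [add_comm] using hYZ))
  simp only [add_mul]
  rw [intervalIntegral.integral_add (Continuous.intervalIntegrable (by fun_prop) _ _)
    (Continuous.intervalIntegrable (by fun_prop) _ _)]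
  linarith [abs_add_le (∫ a in ρ..A, V (T, a) * Y (T, a) * (a + T) ^ 3)
    (∫ a in ρ..A, Q (T, a) * Z (T, a) * (a + T) ^ 3)]

lemma integral_abs_flux_le {t B : ℝ} (ht : 0 ≤ t) (hB : ρ ≤ B) :
    ∫ a in ρ..B, |((V (t, a) + Q (t, a)) * (Y (t, a) + Z (t, a))
        - |U (t, a)| ^ (p - 1) * U (t, a) * X (t, a)) * (a + t) ^ 3|
      ≤ K ^ 2 + E ^ 2 + ((D * K) ^ 2 + N ^ 2) := by
  have hU := h.continuous
  have hV := h.continuous_velocity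
  have hQ := h.continuous_gradient
  have hX := k.continuous
  have hY := k.continuous_velocity
  have hZ := k.continuous_gradient
  have hr : ∀ a ∈ Icc ρ B, 1 ≤ a + t := fun a ha => by linarith [h.one_le, ha.1]
  have hXint : ContinuousOn (fun a => X (t, a) ^ 2 / (a + t)) (uIcc ρ B) := by
    rw [uIcc_of_le hB]
    fun_prop (disch := intro a ha; have := hr a ha; positivity)
  have hsource : (D * K / (ρ + t)) ^ 2 ≤ (D * K) ^ 2 := by
    have hDK := mul_nonneg h.coeff_nonneg h.nonneg
    have hρt : 1 ≤ ρ + t := hr ρ ⟨le_rfl, hB⟩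
    exact pow_le_pow_left₀ (by positivity) (div_le_self hDK hρt) 2
  calc _ ≤ ∫ a in ρ..B, ((V (t, a) ^ 2 + Q (t, a) ^ 2) * (a + t) ^ 3
          + (Y (t, a) ^ 2 + Z (t, a) ^ 2) * (a + t) ^ 3
          + ((|U (t, a)| ^ (p - 1) * U (t, a) * (a + t) ^ 2) ^ 2 * (a + t) ^ 3
            + X (t, a) ^ 2 / (a + t))) := by
        refine intervalIntegral.integral_mono_on hB
          (Continuous.intervalIntegrable (by fun_prop) _ _)
          (ContinuousOn.intervalIntegrable (by fun_prop)) fun a ha => ?_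
        have hra := hr a ha
        rw [abs_mul, abs_of_nonneg (by positivity : 0 ≤ (a + t) ^ 3)]
        generalize |U (t, a)| ^ (p - 1) * U (t, a) = f
        have hXr : X (t, a) ^ 2 / (a + t) = (X (t, a) / (a + t) ^ 2) ^ 2 * (a + t) ^ 3 := by
          field_simp
        have hfX : f * X (t, a) = (f * (a + t) ^ 2) * (X (t, a) / (a + t) ^ 2) := by field_simp
        rw [hXr, hfX, ← add_mul, ← add_mul, ← add_mul]
        gcongr
        generalize f * (a + t) ^ 2 = x, X (t, a) / (a + t) ^ 2 = y
        rw [abs_le]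
        constructor <;>
          nlinarith [sq_nonneg (V (t, a) - Q (t, a)), sq_nonneg (Y (t, a) - Z (t, a)),
            sq_nonneg (V (t, a) + Q (t, a) - Y (t, a) - Z (t, a)), sq_nonneg (x - y),
            sq_nonneg (V (t, a) + Q (t, a) + Y (t, a) + Z (t, a)), sq_nonneg (x + y)]
    _ ≤ _ := by
        rw [intervalIntegral.integral_add, intervalIntegral.integral_add,
          intervalIntegral.integral_add]
        · exact add_le_add (add_le_add (h.energy_le t ht B hB) (k.energy_le t ht B hB)) (add_le_add
            ((h.integral_sq_source_le ht hB).trans hsource) (k.integral_sq_div_le t ht B hB))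
        all_goals exact ContinuousOn.intervalIntegrable (by fun_prop)

lemma abs_integral_initial_velocity_mul_le_add {ε : ℝ} (hε : 0 ≤ ε) (hT : 0 ≤ T) (hA : ρ ≤ A)
    (hVQ : ∫ a in ρ..A, (V (T, a) ^ 2 + Q (T, a) ^ 2) * (a + T) ^ 3 ≤ ε ^ 2) :
    |∫ a in ρ..A, V (0, a) * Y (0, a) * a ^ 3| ≤ 2 * (ε * E) + D * K / (ρ + T) * N
      + (∫ t in 0..T, |((V (t, A) + Q (t, A)) * (Y (t, A) + Z (t, A))
        - |U (t, A)| ^ (p - 1) * U (t, A) * X (t, A)) * (A + t) ^ 3|) + p * (D * K * N / ρ) := by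
  have hU := h.continuous
  have hV := h.continuous_velocity
  have hQ := h.continuous_gradient
  have hX := k.continuous
  have hY := k.continuous_velocity
  have hZ := k.continuous_gradient
  have hlaw := h.integral_corrected_bilinear_eq k hT hA
  have hpair := h.abs_integral_velocity_pairing_le k hε hT hA hVQ
  have hsource := h.abs_integral_source_mul_le k hT hA
  have hpot := mul_le_mul_of_nonneg_left (h.abs_integral_potential_mul_le k.continuous k.nonneg
    k.integral_sq_div_le hT hA) (Nat.cast_nonneg (α := ℝ) p)
  rw [← Nat.abs_cast, ← abs_mul, Nat.abs_cast] at hpot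
  have hflux := intervalIntegral.abs_integral_le_integral_abs (μ := volume) hT (f := fun t =>
    ((V (t, A) + Q (t, A)) * (Y (t, A) + Z (t, A)) - |U (t, A)| ^ (p - 1) * U (t, A) * X (t, A))
      * (A + t) ^ 3)
  have hsplit : ∫ a in ρ..A, (V (T, a) * Y (T, a) + Q (T, a) * Z (T, a)
      - |U (T, a)| ^ (p - 1) * U (T, a) * X (T, a)) * (a + T) ^ 3 =
      (∫ a in ρ..A, (V (T, a) * Y (T, a) + Q (T, a) * Z (T, a)) * (a + T) ^ 3)
      - ∫ a in ρ..A, |U (T, a)| ^ (p - 1) * U (T, a) * X (T, a) * (a + T) ^ 3 := by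
    simp only [sub_mul]
    exact intervalIntegral.integral_sub (Continuous.intervalIntegrable (by fun_prop) _ _)
      (Continuous.intervalIntegrable (by fun_prop) _ _)
  rw [hsplit] at hlaw
  rw [abs_le] at hpair hsource hpot hflux ⊢
  constructor <;> linarith

/-- Letting `T → ∞` in the corrected bilinear identity, only the space-time integral of the
potential survives. -/
theorem abs_integral_initial_velocity_mul_le (hvan : ConeEnergyVanishes ρ V Q) {A₁ : ℝ}
    (hA₁ : ρ ≤ A₁) (hY0 : ∀ a ≥ A₁, Y (0, a) = 0) :
    |∫ a in ρ..A₁, V (0, a) * Y (0, a) * a ^ 3| ≤ p * (D * K * N / ρ) := by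
  have hU := h.continuous
  have hV := h.continuous_velocity
  have hQ := h.continuous_gradient
  have hX := k.continuous
  have hY := k.continuous_velocity
  have hZ := k.continuous_gradient
  refine le_of_forall_pos_lt_add fun δ hδ => ?_
  have hE : 0 < E + 1 := by linarith [k.energy_nonneg]
  have hsource : ∀ᶠ T in atTop, D * K / (ρ + T) * N < δ / 3 := by
    have : Tendsto (fun T => D * K / (ρ + T) * N) atTop (nhds (0 * N)) :=
      ((tendsto_atTop_add_const_left _ _ tendsto_id).const_div_atTop _).mul_const _
    exact this.eventually_lt_const (by simpa using by positivity)
  obtain ⟨T, hVQ, hsourceT, hT⟩ := ((hvan (δ / (6 * (E + 1))) (by positivity)).and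
    (hsource.and (eventually_ge_atTop 0))).exists
  have hpair : 2 * (δ / (6 * (E + 1)) * E) ≤ δ / 3 := by
    rw [show 2 * (δ / (6 * (E + 1)) * E) = δ / 3 * (E / (E + 1)) by field_simp; ring]
    exact mul_le_of_le_one_right (by positivity) ((div_le_one hE).2 (by linarith))
  obtain ⟨A, hflux, hA⟩ := ((frequently_integral_lt hT (by positivity : 0 < δ / 3)
    (J := fun z => |((V z + Q z) * (Y z + Z z) - |U z| ^ (p - 1) * U z * X z) * (z.2 + z.1) ^ 3|)
    (by fun_prop) (fun z => abs_nonneg _)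
    fun t ht B hB => h.integral_abs_flux_le k ht.1 hB).and_eventually
      (eventually_ge_atTop A₁)).exists
  have hsupport : ∫ a in A₁..A, V (0, a) * Y (0, a) * a ^ 3 = ∫ a in A₁..A, 0 :=
    intervalIntegral.integral_congr fun a ha => by
      rw [uIcc_of_le hA] at ha
      simp [hY0 a ha.1]
  have hbound := h.abs_integral_initial_velocity_mul_le_add k (by positivity) hT (hA₁.trans hA)
    (hVQ A (hA₁.trans hA))
  rw [← intervalIntegral.integral_add_adjacent_intervals
    (Continuous.intervalIntegrable (by fun_prop) ρ A₁)
    (Continuous.intervalIntegrable (by fun_prop) A₁ A), hsupport, intervalIntegral.integral_zero,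
    add_zero] at hbound
  linarith

end IsOddConeSolution.HasBounds

/-! ### Free waves as means of plane waves -/

lemma hasFDerivAt_intervalIntegral_of_continuous {H : Type*} [NormedAddCommGroup H]
    [NormedSpace ℝ H] [ProperSpace H] {F : H → ℝ → ℝ} {F' : H → ℝ → H →L[ℝ] ℝ} {a b : ℝ}
    (hF : ∀ z, Continuous (F z)) (hF' : Continuous (Function.uncurry F'))
    (hderiv : ∀ z s, HasFDerivAt (F · s) (F' z s) z) (z : H) :
    HasFDerivAt (fun z => ∫ s in a..b, F z s) (∫ s in a..b, F' z s) z := by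
  obtain ⟨C, hC⟩ := ((isCompact_closedBall z 1).prod
    (isCompact_uIcc (a := a) (b := b))).exists_bound_of_continuousOn hF'.continuousOn
  refine intervalIntegral.hasFDerivAt_integral_of_dominated_of_fderiv_le
    (bound := fun _ => C) (Metric.closedBall_mem_nhds z one_pos)
    (.of_forall fun x => (hF x).aestronglyMeasurable) ((hF z).intervalIntegrable _ _)
    (hF'.comp (Continuous.prodMk_right z)).aestronglyMeasurable
    (ae_of_all _ fun s hs x hx => hC (x, s) ⟨hx, uIoc_subset_uIcc hs⟩) (by simp)
    (ae_of_all _ fun s _ x _ => hderiv x s)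

lemma hasPartialsAt_intervalIntegral {G p q : ℝ × ℝ → ℝ → ℝ} {a b : ℝ}
    (hG : ∀ z, Continuous (G z)) (hp : Continuous (Function.uncurry p))
    (hq : Continuous (Function.uncurry q)) (hpq : ∀ z s, HasPartialsAt (G · s) (p z s) (q z s) z)
    (z : ℝ × ℝ) :
    HasPartialsAt (fun z => ∫ s in a..b, G z s) (∫ s in a..b, p z s) (∫ s in a..b, q z s) z := by
  have hpz : Continuous (p z) := hp.comp (Continuous.prodMk_right z)
  have hqz : Continuous (q z) := hq.comp (Continuous.prodMk_right z)
  refine (hasFDerivAt_intervalIntegral_of_continuous hG ?_ hpq z).congr_fderiv ?_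
  · exact (hp.smul continuous_const).add (hq.smul continuous_const)
  · rw [intervalIntegral.integral_add (Continuous.intervalIntegrable (by fun_prop) _ _)
      (Continuous.intervalIntegrable (by fun_prop) _ _), intervalIntegral.integral_smul_const,
      intervalIntegral.integral_smul_const]

section ArcMean

open Real (sin cos)
open scoped Real

/-- The weighted mean `∫₀^{π/2} f (r sin θ - t) w(θ) dθ` of the plane wave with profile `f`, as a
function of `(t, r)`; the weight `cos²` produces radial waves in four space dimensions. -/
noncomputable def arcMean (w f : ℝ → ℝ) (z : ℝ × ℝ) : ℝ :=
  ∫ θ in 0..π / 2, f (z.2 * sin θ - z.1) * w θ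

lemma sin_nonneg_of_mem_Icc {θ : ℝ} (hθ : θ ∈ Icc 0 (π / 2)) : 0 ≤ sin θ :=
  Real.sin_nonneg_of_nonneg_of_le_pi hθ.1 (by linarith [hθ.2, Real.pi_pos])

variable {w f f' : ℝ → ℝ} {t r ρ : ℝ}

lemma continuous_arcMean (hw : Continuous w) (hf : Continuous f) : Continuous (arcMean w f) := by
  unfold arcMean
  fun_prop

lemma arcMean_sub_weight {w' : ℝ → ℝ} (hw : Continuous w) (hw' : Continuous w') (hf : Continuous f)
    (z : ℝ × ℝ) : arcMean (fun θ => w θ - w' θ) f z = arcMean w f z - arcMean w' f z := by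
  simp only [arcMean, mul_sub]
  exact intervalIntegral.integral_sub (Continuous.intervalIntegrable (by fun_prop) _ _)
    (Continuous.intervalIntegrable (by fun_prop) _ _)

lemma hasPartialsAt_arcMean (hw : Continuous w) (hf : ∀ x, HasDerivAt f (f' x) x)
    (hf' : Continuous f') (z : ℝ × ℝ) :
    HasPartialsAt (arcMean w f) (-arcMean w f' z) (arcMean (fun θ => w θ * sin θ) f' z) z := by
  have hfc : Continuous f := continuous_iff_continuousAt.2 fun x => (hf x).continuousAt
  rw [arcMean, ← intervalIntegral.integral_neg]
  refine hasPartialsAt_intervalIntegral (G := fun z θ => f (z.2 * sin θ - z.1) * w θ)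
    (p := fun z θ => -(f' (z.2 * sin θ - z.1) * w θ))
    (q := fun z θ => f' (z.2 * sin θ - z.1) * (w θ * sin θ)) (fun z => by fun_prop)
    (by unfold Function.uncurry; fun_prop) (by unfold Function.uncurry; fun_prop) (fun z θ => ?_) z
  have hphase : HasPartialsAt (fun z => z.2 * sin θ - z.1) (-1) (sin θ) z :=
    ((HasPartialsAt.scomp ((hasDerivAt_id' _).mul_const _) .snd).sub .fst).congr_partials
      (by simp) (by simp)
  refine (HasPartialsAt.scomp ((hasDerivAt_id' _).mul_const (w θ))
    (HasPartialsAt.scomp (hf _) hphase)).congr_partials ?_ ?_ <;> ring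

lemma arcMean_eq_zero (hρ : 0 ≤ ρ) (hf : ∀ x ≤ ρ, f x = 0) (ht : 0 ≤ t) (hr : r ≤ ρ + t) :
    arcMean w f (t, r) = 0 := by
  refine (intervalIntegral.integral_congr (g := 0) fun θ hθ => ?_).trans
    intervalIntegral.integral_zero
  rw [uIcc_of_le Real.pi_div_two_pos.le] at hθ
  have hsin := sin_nonneg_of_mem_Icc hθ
  have hle : r * sin θ - t ≤ ρ := by
    rcases le_total 0 r with _ | _ <;> nlinarith [Real.sin_le_one θ]
  simp [hf _ hle]

lemma arcMean_mul_radius_of_hasDerivAt {c c' : ℝ → ℝ} (hf : ∀ x, HasDerivAt f (f' x) x)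
    (hf' : Continuous f') (hc : ∀ θ, HasDerivAt c (c' θ) θ) (hc' : Continuous c')
    (hc0 : c (π / 2) = 0) (hf0 : f (-t) = 0) :
    r * arcMean (fun θ => c θ * cos θ) f' (t, r) = -arcMean c' f (t, r) := by
  have hfc : Continuous f := continuous_iff_continuousAt.2 fun x => (hf x).continuousAt
  have hcc : Continuous c := continuous_iff_continuousAt.2 fun x => (hc x).continuousAt
  have hparts := intervalIntegral.integral_deriv_mul_eq_sub (a := 0) (b := π / 2)
    (u := fun θ => f (r * sin θ - t)) (u' := fun θ => f' (r * sin θ - t) * (r * cos θ))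
    (fun θ _ => (hf _).comp θ (((Real.hasDerivAt_sin θ).const_mul r).sub_const t))
    (fun θ _ => hc θ) (Continuous.intervalIntegrable (by fun_prop) _ _)
    (hc'.intervalIntegrable _ _)
  rw [intervalIntegral.integral_add (Continuous.intervalIntegrable (by fun_prop) _ _)
    (Continuous.intervalIntegrable (by fun_prop) _ _)] at hparts
  simp only [hc0, Real.sin_zero, mul_zero, zero_sub, hf0, zero_mul, sub_zero] at hparts
  rw [arcMean, arcMean, ← intervalIntegral.integral_const_mul, eq_neg_iff_add_eq_zero, ← hparts]
  congr 2 with θ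
  ring

lemma arcMean_sin_eq (hf : ∀ x, HasDerivAt f (f' x) x) (hf' : Continuous f') (hf0 : f (-t) = 0) :
    r * arcMean (fun θ => cos θ ^ 2) f' (t, r) = arcMean sin f (t, r) := by
  have hparts := arcMean_mul_radius_of_hasDerivAt (r := r) hf hf' Real.hasDerivAt_cos (by fun_prop)
    Real.cos_pi_div_two hf0
  simpa [arcMean, ← sq] using hparts

/-- The wave equation follows by integrating `(f'(r sin θ - t) cos³ θ)'` over the arc. -/
theorem isRadialWaveAt_arcMean {f'' : ℝ → ℝ} (hρ : 0 ≤ ρ) (hf : ∀ x, HasDerivAt f (f' x) x)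
    (hf' : ∀ x, HasDerivAt f' (f'' x) x) (hf'' : Continuous f'') (hf'0 : ∀ x ≤ ρ, f' x = 0)
    (hf''0 : ∀ x ≤ ρ, f'' x = 0) (ht : 0 ≤ t) :
    IsRadialWaveAt 0 (arcMean (fun θ => cos θ ^ 2) f) (fun z => -arcMean (fun θ => cos θ ^ 2) f' z)
      (arcMean (fun θ => cos θ ^ 2 * sin θ) f') 0 (t, r) := by
  have hf'c : Continuous f' := continuous_iff_continuousAt.2 fun x => (hf' x).continuousAt
  have hwave : arcMean (fun θ => cos θ ^ 2) f'' (t, r) =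
      arcMean (fun θ => cos θ ^ 2 * sin θ * sin θ) f'' (t, r)
        + 3 / r * arcMean (fun θ => cos θ ^ 2 * sin θ) f' (t, r) := by
    rcases le_or_gt r 0 with hr | hr
    · simp [arcMean_eq_zero hρ hf''0 ht (by linarith : r ≤ ρ + t),
        arcMean_eq_zero hρ hf'0 ht (by linarith : r ≤ ρ + t)]
    have hparts := arcMean_mul_radius_of_hasDerivAt (r := r) (t := t) hf' hf''
      (fun θ => (Real.hasDerivAt_cos θ).pow 3) (by fun_prop) (by simp) (hf'0 _ (by linarith))
    have hleft : arcMean (fun θ => (cos ^ 3) θ * cos θ) f'' (t, r) =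
        arcMean (fun θ => cos θ ^ 2) f'' (t, r)
          - arcMean (fun θ => cos θ ^ 2 * sin θ * sin θ) f'' (t, r) := by
      rw [← arcMean_sub_weight (by fun_prop) (by fun_prop) hf'']
      congr 1 with θ
      simp only [Pi.pow_apply]
      linear_combination cos θ ^ 2 * Real.sin_sq_add_cos_sq θ
    have hright : -arcMean (fun θ => (3 : ℕ) * cos θ ^ (3 - 1) * -sin θ) f' (t, r) =
        3 * arcMean (fun θ => cos θ ^ 2 * sin θ) f' (t, r) := by
      rw [arcMean, arcMean, ← intervalIntegral.integral_neg, ← intervalIntegral.integral_const_mul]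
      exact intervalIntegral.integral_congr fun θ _ => by push_cast; ring
    rw [hleft, hright] at hparts
    rw [← sub_eq_iff_eq_add', div_mul_eq_mul_div, eq_div_iff hr.ne', ← hparts, mul_comm]
  have hcos : Continuous fun θ : ℝ => cos θ ^ 2 := by fun_prop
  refine ⟨(hasPartialsAt_arcMean hcos hf hf'c _).congr_partials (by simp) rfl,
    -arcMean (fun θ => cos θ ^ 2 * sin θ) f'' (t, r),
    arcMean (fun θ => cos θ ^ 2 * sin θ * sin θ) f'' (t, r), ?_, ?_⟩
  · exact (HasPartialsAt.scomp (hasDerivAt_neg _) (hasPartialsAt_arcMean hcos hf' hf'' _))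
      |>.congr_partials (by simp [hwave]) (by simp)
  · exact (hasPartialsAt_arcMean (by fun_prop) hf' hf'' _).congr_partials (by simp) rfl

end ArcMean

/-! ### Archimedes' theorem and the decay of means -/

section Archimedes

open Real (sin cos)
open scoped Real

lemma integral_sin_pow_mul_integral_sin_pow_succ (n : ℕ) :
    (∫ θ in 0..π / 2, sin θ ^ n) * ∫ θ in 0..π / 2, sin θ ^ (n + 1) = π / 2 * (1 / (n + 1)) := by
  induction n with
  | zero => simp
  | succ n ih =>
    rw [show n + 1 + 1 = n + 2 from rfl, integral_sin_pow (n := n)]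
    simp only [Real.sin_zero, Real.cos_zero, Real.cos_pi_div_two, mul_zero, sub_zero, ne_eq,
      Nat.add_eq_zero_iff, one_ne_zero, and_false, not_false_eq_true, zero_pow, zero_mul,
      zero_div, zero_add]
    rw [mul_left_comm, mul_comm (∫ θ in 0..π / 2, sin θ ^ (n + 1)), ih]
    push_cast
    field_simp
    ring

/-- The difference of the two sides of Archimedes' identity
`integral_integral_sin_mul_sin_eq`. -/
noncomputable def archimedesDefect (G : ℝ → ℝ) : ℝ :=
  (∫ θ in 0..π / 2, (∫ φ in 0..π / 2, G (sin θ * sin φ)) * sin θ) - π / 2 * ∫ x in 0..1, G x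

lemma archimedesDefect_add {G H : ℝ → ℝ} (hG : Continuous G) (hH : Continuous H) :
    archimedesDefect (fun x => G x + H x) = archimedesDefect G + archimedesDefect H := by
  have hinner : ∀ θ, ∫ φ in 0..π / 2, (G (sin θ * sin φ) + H (sin θ * sin φ)) =
      (∫ φ in 0..π / 2, G (sin θ * sin φ)) + ∫ φ in 0..π / 2, H (sin θ * sin φ) := fun θ =>
    intervalIntegral.integral_add (Continuous.intervalIntegrable (by fun_prop) _ _)
      (Continuous.intervalIntegrable (by fun_prop) _ _)
  simp only [archimedesDefect, hinner, add_mul]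
  rw [intervalIntegral.integral_add (Continuous.intervalIntegrable (by fun_prop) _ _)
    (Continuous.intervalIntegrable (by fun_prop) _ _),
    intervalIntegral.integral_add (hG.intervalIntegrable _ _) (hH.intervalIntegrable _ _)]
  ring

lemma archimedesDefect_polynomial (P : Polynomial ℝ) : archimedesDefect P.eval = 0 := by
  induction P using Polynomial.induction_on' with
  | add P Q hP hQ =>
    have hsum : (P + Q).eval = fun x => P.eval x + Q.eval x := funext fun x => Polynomial.eval_add
    rw [hsum, archimedesDefect_add P.continuous Q.continuous, hP, hQ, add_zero]
  | monomial n a =>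
    have hmonomial : (Polynomial.monomial n a).eval = fun x => a * x ^ n :=
      funext fun x => Polynomial.eval_monomial
    have hinner : ∀ θ, (∫ φ in 0..π / 2, a * (sin θ * sin φ) ^ n) * sin θ =
        a * (∫ φ in 0..π / 2, sin φ ^ n) * sin θ ^ (n + 1) := fun θ => by
      simp only [mul_pow, intervalIntegral.integral_const_mul]
      ring
    rw [hmonomial]
    simp only [archimedesDefect, hinner]
    rw [intervalIntegral.integral_const_mul, intervalIntegral.integral_const_mul, integral_pow,
      mul_assoc, integral_sin_pow_mul_integral_sin_pow_succ]
    simp only [one_pow, ne_eq, Nat.add_eq_zero_iff, one_ne_zero, and_false, not_false_eq_true,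
      zero_pow, sub_zero]
    ring

lemma abs_archimedesDefect_le {G : ℝ → ℝ} {ε : ℝ} (hG : ∀ x ∈ Icc 0 1, |G x| ≤ ε) :
    |archimedesDefect G| ≤ ε * (π / 2) * (π / 2) + π / 2 * ε := by
  have hpi : (0 : ℝ) ≤ π / 2 := Real.pi_div_two_pos.le
  have hinner : ∀ θ ∈ Icc 0 (π / 2), |∫ φ in 0..π / 2, G (sin θ * sin φ)| ≤ ε * (π / 2) :=
    fun θ hθ => by
      have hbound := intervalIntegral.norm_integral_le_of_norm_le_const (a := 0) (b := π / 2)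
        (f := fun φ => G (sin θ * sin φ)) (C := ε) fun φ hφ => by
          rw [uIoc_of_le hpi] at hφ
          have hsinθ := sin_nonneg_of_mem_Icc hθ
          have hsinφ := sin_nonneg_of_mem_Icc (Ioc_subset_Icc_self hφ)
          exact hG _ ⟨mul_nonneg hsinθ hsinφ,
            mul_le_one₀ (Real.sin_le_one θ) hsinφ (Real.sin_le_one φ)⟩
      simpa [abs_of_nonneg hpi] using hbound
  have hleft := intervalIntegral.norm_integral_le_of_norm_le_const (a := 0) (b := π / 2)
    (f := fun θ => (∫ φ in 0..π / 2, G (sin θ * sin φ)) * sin θ) (C := ε * (π / 2)) fun θ hθ => by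
      rw [uIoc_of_le hpi] at hθ
      rw [norm_mul]
      exact (mul_le_of_le_one_right (norm_nonneg _) (Real.abs_sin_le_one θ)).trans
        (hinner θ (Ioc_subset_Icc_self hθ))
  have hright := intervalIntegral.norm_integral_le_of_norm_le_const (a := 0) (b := 1) (f := G)
    (C := ε) fun x hx => by
      rw [uIoc_of_le zero_le_one] at hx
      exact hG x (Ioc_subset_Icc_self hx)
  simp only [Real.norm_eq_abs, sub_zero, abs_of_nonneg hpi, abs_one, mul_one] at hleft hright
  refine (abs_sub _ _).trans (add_le_add hleft ?_)
  rw [abs_mul, abs_of_nonneg hpi]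
  gcongr

/-- Archimedes' theorem that the height is uniformly distributed on the sphere. By Weierstrass it
is enough to check monomials, for which it is Wallis' product formula. -/
theorem integral_integral_sin_mul_sin_eq {G : ℝ → ℝ} (hG : Continuous G) :
    ∫ θ in 0..π / 2, (∫ φ in 0..π / 2, G (sin θ * sin φ)) * sin θ = π / 2 * ∫ x in 0..1, G x := by
  rw [← sub_eq_zero, ← archimedesDefect, ← abs_nonpos_iff]
  set C := π / 2 * (π / 2) + π / 2
  have hC : 0 < C := by positivity
  refine le_of_forall_pos_le_add fun ε hε => ?_
  obtain ⟨P, hP⟩ := exists_polynomial_near_of_continuousOn 0 1 G hG.continuousOn (ε / C)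
    (by positivity)
  have hsub := abs_archimedesDefect_le (G := fun x => G x - P.eval x) fun x hx => by
    rw [abs_sub_comm]
    exact (hP x hx).le
  have hadd := archimedesDefect_add (G := fun x => G x - P.eval x) (by fun_prop) P.continuous
  simp only [sub_add_cancel, archimedesDefect_polynomial, add_zero] at hadd
  rw [zero_add, hadd]
  calc _ ≤ ε / C * (π / 2) * (π / 2) + π / 2 * (ε / C) := hsub
    _ = ε := by
      field_simp
      simp only [C]
      ring

end Archimedes

section Decay

open Real (sin cos)
open scoped Real

variable {f : ℝ → ℝ} {A : ℝ}

lemma mul_arcMean_cos_eq_integral (hf : Continuous f) (x : ℝ) :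
    x * arcMean cos f (0, x) = ∫ y in 0..x, f y := by
  have hsubst := intervalIntegral.integral_comp_mul_deriv (a := 0) (b := π / 2) (g := f)
    (f := fun θ => x * sin θ) (fun θ _ => (Real.hasDerivAt_sin θ).const_mul x) (by fun_prop) hf
  simpa [arcMean, mul_left_comm _ x] using hsubst

lemma sq_mul_one_sub_cos_le {x θ : ℝ} (hx : 0 ≤ x) (hθ : θ ∈ Icc 0 (π / 2))
    (hxA : x * sin θ ≤ A) : x ^ 2 * (1 - cos θ) ≤ A ^ 2 := by
  have hsin := sin_nonneg_of_mem_Icc hθ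
  have hcos : 0 ≤ cos θ := Real.cos_nonneg_of_mem_Icc ⟨by linarith [hθ.1, Real.pi_pos], hθ.2⟩
  calc x ^ 2 * (1 - cos θ) ≤ x ^ 2 * sin θ ^ 2 := by
        gcongr
        nlinarith [Real.sin_sq_add_cos_sq θ, Real.cos_le_one θ]
    _ = (x * sin θ) ^ 2 := by ring
    _ ≤ A ^ 2 := by gcongr

-- Subtracting `∫ f (x sin θ) cos θ dθ = 0` leaves the weight `1 - cos θ ≤ sin² θ`, which is of
-- order `x⁻²` where `x sin θ ≤ A`.
lemma exists_sq_mul_abs_arcMean_le (hf : Continuous f) (hA : 0 ≤ A) (hfA : ∀ x > A, f x = 0)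
    (hmean : ∀ x > A, ∫ y in 0..x, f y = 0) :
    ∃ C, 0 ≤ C ∧ ∀ x ≥ 0, x ^ 2 * |arcMean 1 f (0, x)| ≤ C := by
  obtain ⟨M, hM⟩ := (isCompact_Icc (a := 0) (b := A)).exists_bound_of_continuousOn hf.continuousOn
  have hM0 : 0 ≤ M := (norm_nonneg _).trans (hM 0 ⟨le_rfl, hA⟩)
  have hfM : ∀ x ≥ 0, |f x| ≤ M := fun x hx => by
    rcases le_or_gt x A with hxA | hxA
    · exact hM x ⟨hx, hxA⟩
    · simpa [hfA x hxA] using hM0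
  have hpi : (0 : ℝ) ≤ π / 2 := Real.pi_div_two_pos.le
  suffices hdefect : ∀ x ≥ 0, ∃ w : ℝ → ℝ, arcMean 1 f (0, x) = arcMean w f (0, x) ∧
      ∀ θ ∈ Icc 0 (π / 2), x ^ 2 * |f (x * sin θ) * w θ| ≤ M * A ^ 2 by
    refine ⟨M * A ^ 2 * |π / 2 - 0|, by positivity, fun x hx => ?_⟩
    obtain ⟨w, harc, hw⟩ := hdefect x hx
    rw [harc, arcMean, ← abs_of_nonneg (sq_nonneg x), ← abs_mul,
      ← intervalIntegral.integral_const_mul]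
    refine intervalIntegral.norm_integral_le_of_norm_le_const (E := ℝ) fun θ hθ => ?_
    rw [uIoc_of_le hpi] at hθ
    simpa [abs_mul] using hw θ (Ioc_subset_Icc_self hθ)
  intro x hx
  rcases le_or_gt x A with hxA | hxA
  · refine ⟨1, rfl, fun θ hθ => ?_⟩
    rw [Pi.one_apply, mul_one, mul_comm]
    gcongr
    exact hfM _ (mul_nonneg hx (sin_nonneg_of_mem_Icc hθ))
  · have hzero : arcMean cos f (0, x) = 0 :=
      (mul_eq_zero.1 ((mul_arcMean_cos_eq_integral hf x).trans (hmean x hxA))).resolve_left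
        (hA.trans_lt hxA).ne'
    refine ⟨fun θ => 1 - cos θ, ?_, fun θ hθ => ?_⟩
    · rw [arcMean_sub_weight continuous_const Real.continuous_cos hf, hzero, sub_zero]
      rfl
    · rcases le_or_gt (x * sin θ) A with hxs | hxs
      · rw [abs_mul, abs_of_nonneg (sub_nonneg.2 (Real.cos_le_one θ)), mul_left_comm]
        gcongr
        · nlinarith [Real.cos_le_one θ, sq_nonneg x]
        · exact hfM _ (mul_nonneg hx (sin_nonneg_of_mem_Icc hθ))
        · exact sq_mul_one_sub_cos_le hx hθ hxs
      · simp only [hfA _ hxs, zero_mul, abs_zero, mul_zero]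
        positivity

end Decay

lemma eq_zero_of_hasDerivAt_of_forall_le {f : ℝ → ℝ} {f' x ρ : ℝ} (hf : HasDerivAt f f' x)
    (hfρ : ∀ y ≤ ρ, f y = 0) (hx : x ≤ ρ) : f' = 0 :=
  (uniqueDiffWithinAt_Iic x).eq_deriv (Iic x) hf.hasDerivWithinAt
    ((hasDerivWithinAt_const x (Iic x) 0).congr (fun y hy => hfρ y (le_trans hy hx)) (hfρ x hx))

section ProfileWave

open Real (sin cos)
open scoped Real

/-- A profile `k` supported in `(ρ, ∞)`, regular enough for `arcMean (cos ^ 2) k'` to be a classical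
free wave. -/
structure IsWaveProfile (ρ : ℝ) (k : ℝ → ℝ) : Prop where
  radius_pos : 0 < ρ
  contDiff : ContDiff ℝ 3 k
  eq_zero_of_le : ∀ x ≤ ρ, k x = 0

namespace IsWaveProfile

variable {ρ : ℝ} {k : ℝ → ℝ} (hk : IsWaveProfile ρ k)
include hk

lemma hasDerivAt (x : ℝ) : HasDerivAt k (deriv k x) x :=
  (hk.contDiff.differentiable (by norm_num) x).hasDerivAt

lemma contDiff_deriv : ContDiff ℝ 2 (deriv k) := hk.contDiff.iterate_deriv' 2 1

lemma hasDerivAt_deriv (x : ℝ) : HasDerivAt (deriv k) (deriv (deriv k) x) x :=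
  (hk.contDiff_deriv.differentiable (by norm_num) x).hasDerivAt

lemma contDiff_deriv_deriv : ContDiff ℝ 1 (deriv (deriv k)) :=
  hk.contDiff_deriv.iterate_deriv' 1 1

lemma hasDerivAt_deriv_deriv (x : ℝ) :
    HasDerivAt (deriv (deriv k)) (deriv (deriv (deriv k)) x) x :=
  (hk.contDiff_deriv_deriv.differentiable (by norm_num) x).hasDerivAt

lemma deriv_eq_zero : ∀ x ≤ ρ, deriv k x = 0 := fun x hx =>
  eq_zero_of_hasDerivAt_of_forall_le (hk.hasDerivAt x) hk.eq_zero_of_le hx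

lemma deriv_deriv_eq_zero : ∀ x ≤ ρ, deriv (deriv k) x = 0 := fun x hx =>
  eq_zero_of_hasDerivAt_of_forall_le (hk.hasDerivAt_deriv x) hk.deriv_eq_zero hx

lemma deriv_deriv_deriv_eq_zero : ∀ x ≤ ρ, deriv (deriv (deriv k)) x = 0 := fun x hx =>
  eq_zero_of_hasDerivAt_of_forall_le (hk.hasDerivAt_deriv_deriv x) hk.deriv_deriv_eq_zero hx

end IsWaveProfile

/-- The free wave with profile `k`, as a function of `(t, r)`. -/
noncomputable def profileWave (k : ℝ → ℝ) : ℝ × ℝ → ℝ :=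
  arcMean (fun θ => cos θ ^ 2) (deriv k)

/-- The time derivative of `profileWave k`. -/
noncomputable def profileVelocity (k : ℝ → ℝ) (z : ℝ × ℝ) : ℝ :=
  -arcMean (fun θ => cos θ ^ 2) (deriv (deriv k)) z

/-- The radial derivative of `profileWave k`. -/
noncomputable def profileGradient (k : ℝ → ℝ) : ℝ × ℝ → ℝ :=
  arcMean (fun θ => cos θ ^ 2 * sin θ) (deriv (deriv k))

namespace IsWaveProfile

variable {ρ t r T A C : ℝ} {k : ℝ → ℝ} (hk : IsWaveProfile ρ k)
include hk

lemma continuous_profileWave : Continuous (profileWave k) :=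
  continuous_arcMean (by fun_prop) hk.contDiff_deriv.continuous

lemma continuous_profileVelocity : Continuous (profileVelocity k) :=
  (continuous_arcMean (by fun_prop) hk.contDiff_deriv_deriv.continuous).neg

lemma continuous_profileGradient : Continuous (profileGradient k) :=
  continuous_arcMean (by fun_prop) hk.contDiff_deriv_deriv.continuous

lemma isRadialWaveAt (ht : 0 ≤ t) :
    IsRadialWaveAt 0 (profileWave k) (profileVelocity k) (profileGradient k) 0 (t, r) :=
  isRadialWaveAt_arcMean hk.radius_pos.le hk.hasDerivAt_deriv hk.hasDerivAt_deriv_deriv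
    (hk.contDiff_deriv_deriv.continuous_deriv le_rfl) hk.deriv_deriv_eq_zero
    hk.deriv_deriv_deriv_eq_zero ht

lemma profileWave_eq_zero (ht : 0 ≤ t) (hr : r ≤ ρ + t) : profileWave k (t, r) = 0 :=
  arcMean_eq_zero hk.radius_pos.le hk.deriv_eq_zero ht hr

lemma profileVelocity_eq_zero (ht : 0 ≤ t) (hr : r ≤ ρ + t) : profileVelocity k (t, r) = 0 := by
  rw [profileVelocity, arcMean_eq_zero hk.radius_pos.le hk.deriv_deriv_eq_zero ht hr, neg_zero]

lemma profileGradient_eq_zero (ht : 0 ≤ t) (hr : r ≤ ρ + t) : profileGradient k (t, r) = 0 :=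
  arcMean_eq_zero hk.radius_pos.le hk.deriv_deriv_eq_zero ht hr

lemma radius_mul_profileWave (ht : 0 ≤ t) : r * profileWave k (t, r) = arcMean sin k (t, r) :=
  arcMean_sin_eq hk.hasDerivAt hk.contDiff_deriv.continuous
    (hk.eq_zero_of_le _ (by linarith [hk.radius_pos]))

lemma radius_mul_profileVelocity (ht : 0 ≤ t) :
    r * profileVelocity k (t, r) = -arcMean sin (deriv k) (t, r) := by
  rw [profileVelocity, mul_neg, arcMean_sin_eq hk.hasDerivAt_deriv
    hk.contDiff_deriv_deriv.continuous (hk.deriv_eq_zero _ (by linarith [hk.radius_pos]))]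

lemma radius_mul_profileGradient (ht : 0 ≤ t) : r * profileGradient k (t, r) =
    arcMean (fun θ => sin θ ^ 2) (deriv k) (t, r) - profileWave k (t, r) := by
  have hparts := arcMean_mul_radius_of_hasDerivAt (r := r) (t := t) hk.hasDerivAt_deriv
    hk.contDiff_deriv_deriv.continuous
    (fun θ => (Real.hasDerivAt_cos θ).mul (Real.hasDerivAt_sin θ))
    (by fun_prop) (by simp) (hk.deriv_eq_zero _ (by linarith [hk.radius_pos]))
  rw [profileWave, ← arcMean_sub_weight (by fun_prop) (by fun_prop) hk.contDiff_deriv.continuous]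
  convert hparts using 1
  · simp only [profileGradient, Pi.mul_apply]
    congr 2 with θ
    ring
  · rw [arcMean, arcMean, ← intervalIntegral.integral_neg]
    exact intervalIntegral.integral_congr fun θ _ => by ring

lemma radius_pow_three_mul_abs_profileGradient_le (hk₀ : ∀ x ≥ 0, x * |k x| ≤ C)
    (hk₁ : ∀ x ≥ 0, x ^ 2 * |deriv k x| ≤ C) (hr : 0 ≤ r) :
    r ^ 3 * |profileGradient k (0, r)| ≤ C * π := by
  have hpi : (0 : ℝ) ≤ π / 2 := Real.pi_div_two_pos.le
  have hgradient : r ^ 3 * profileGradient k (0, r) =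
      r ^ 2 * arcMean (fun θ => sin θ ^ 2) (deriv k) (0, r) - r * arcMean sin k (0, r) := by
    rw [← hk.radius_mul_profileWave le_rfl]
    linear_combination r ^ 2 * hk.radius_mul_profileGradient (r := r) le_rfl
  have hfirst : |r ^ 2 * arcMean (fun θ => sin θ ^ 2) (deriv k) (0, r)| ≤ C * |π / 2 - 0| := by
    rw [arcMean, ← intervalIntegral.integral_const_mul]
    refine intervalIntegral.norm_integral_le_of_norm_le_const (E := ℝ) fun θ hθ => ?_
    rw [uIoc_of_le hpi] at hθ
    have hsin := sin_nonneg_of_mem_Icc (Ioc_subset_Icc_self hθ)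
    simpa [abs_of_nonneg hr, abs_of_nonneg hsin, mul_pow, mul_assoc, mul_comm, mul_left_comm]
      using hk₁ (r * sin θ) (by positivity)
  have hsecond : |r * arcMean sin k (0, r)| ≤ C * |π / 2 - 0| := by
    rw [arcMean, ← intervalIntegral.integral_const_mul]
    refine intervalIntegral.norm_integral_le_of_norm_le_const (E := ℝ) fun θ hθ => ?_
    rw [uIoc_of_le hpi] at hθ
    have hsin := sin_nonneg_of_mem_Icc (Ioc_subset_Icc_self hθ)
    simpa [abs_of_nonneg hr, abs_of_nonneg hsin, mul_assoc, mul_comm, mul_left_comm]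
      using hk₀ (r * sin θ) (by positivity)
  rw [sub_zero, abs_of_nonneg hpi] at hfirst hsecond
  calc r ^ 3 * |profileGradient k (0, r)| = |r ^ 3 * profileGradient k (0, r)| := by
        rw [abs_mul, abs_of_nonneg (pow_nonneg hr 3)]
    _ ≤ C * (π / 2) + C * (π / 2) := by
        rw [hgradient]
        exact (abs_sub _ _).trans (add_le_add hfirst hsecond)
    _ = C * π := by ring

-- In the coordinate `b = r + t` along incoming cones the energy flux has a sign.
lemma exists_incoming_energy_partials (ht : 0 ≤ t) (b : ℝ) : ∃ Eₜ Eₐ Jₜ Jₐ,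
    HasPartialsAt (fun z => (profileVelocity k (z.1, z.2 - z.1) ^ 2
      + profileGradient k (z.1, z.2 - z.1) ^ 2) * (z.2 - z.1) ^ 3) Eₜ Eₐ (t, b) ∧
    HasPartialsAt (fun z => -((profileVelocity k (z.1, z.2 - z.1)
      - profileGradient k (z.1, z.2 - z.1)) ^ 2 * (z.2 - z.1) ^ 3)) Jₜ Jₐ (t, b) ∧ Eₜ = Jₐ := by
  have hwave := (hk.isRadialWaveAt (r := b + -1 * t) ht).comp_slant (z := (t, b))
  obtain ⟨Eₜ, Eₐ, Jₜ, Jₐ, hE, hJ, hEJ⟩ := hwave.exists_bilinear_partials hwave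
  refine ⟨Eₜ, Eₐ, Jₜ, Jₐ, hE.congr_of_eventuallyEq (.of_forall fun z => ?_),
    hJ.congr_of_eventuallyEq (.of_forall fun z => ?_), by simpa using hEJ⟩ <;>
  · simp only [neg_one_mul, ← sub_eq_add_neg]
    ring

lemma integral_incoming_energy_eq (hT : 0 ≤ T) :
    ∫ b in ρ..A + 2 * T, (profileVelocity k (T, b - T) ^ 2 + profileGradient k (T, b - T) ^ 2)
        * (b - T) ^ 3 =
      ∫ a in ρ..A, (profileVelocity k (T, a + T) ^ 2 + profileGradient k (T, a + T) ^ 2)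
        * (a + T) ^ 3 := by
  have hY := hk.continuous_profileVelocity
  have hZ := hk.continuous_profileGradient
  have hinside : ∫ b in ρ..ρ + 2 * T,
      (profileVelocity k (T, b - T) ^ 2 + profileGradient k (T, b - T) ^ 2) * (b - T) ^ 3 = 0 := by
    refine (intervalIntegral.integral_congr (g := 0) fun b hb => ?_).trans
      intervalIntegral.integral_zero
    rw [uIcc_of_le (by linarith)] at hb
    have hr : b - T ≤ ρ + T := by linarith [hb.2]
    simp [hk.profileVelocity_eq_zero hT hr, hk.profileGradient_eq_zero hT hr]
  rw [← intervalIntegral.integral_add_adjacent_intervals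
    (Continuous.intervalIntegrable (by fun_prop) ρ (ρ + 2 * T))
    (Continuous.intervalIntegrable (by fun_prop) _ _), hinside, zero_add,
    ← intervalIntegral.integral_comp_add_right]
  congr 1 with a
  rw [show a + 2 * T - T = a + T by ring]

lemma integral_energy_le_initial (hT : 0 ≤ T) (hA : ρ ≤ A) :
    ∫ a in ρ..A, (profileVelocity k (T, a + T) ^ 2 + profileGradient k (T, a + T) ^ 2)
        * (a + T) ^ 3 ≤
      ∫ b in ρ..A + 2 * T, (profileVelocity k (0, b) ^ 2 + profileGradient k (0, b) ^ 2)
        * b ^ 3 := by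
  have hY := hk.continuous_profileVelocity
  have hZ := hk.continuous_profileGradient
  have hlaw := integral_sub_integral_eq_of_conservation (by linarith : ρ ≤ A + 2 * T) hT
    (G := fun z => (profileVelocity k (z.1, z.2 - z.1) ^ 2
      + profileGradient k (z.1, z.2 - z.1) ^ 2) * (z.2 - z.1) ^ 3)
    (J := fun z => -((profileVelocity k (z.1, z.2 - z.1)
      - profileGradient k (z.1, z.2 - z.1)) ^ 2 * (z.2 - z.1) ^ 3)) (S := 0)
    (by fun_prop) (by fun_prop) continuous_zero fun t ht b _ => by
      simpa using hk.exists_incoming_energy_partials ht.1.le b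
  have houter : 0 ≤ ∫ t in 0..T, (profileVelocity k (t, A + 2 * T - t)
      - profileGradient k (t, A + 2 * T - t)) ^ 2 * (A + 2 * T - t) ^ 3 :=
    intervalIntegral.integral_nonneg hT fun t ht =>
      mul_nonneg (sq_nonneg _) (pow_nonneg (by linarith [ht.2, hk.radius_pos]) 3)
  have hinner : ∫ t in 0..T, (profileVelocity k (t, ρ - t)
      - profileGradient k (t, ρ - t)) ^ 2 * (ρ - t) ^ 3 = 0 := by
    refine (intervalIntegral.integral_congr (g := 0) fun t ht => ?_).trans
      intervalIntegral.integral_zero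
    rw [uIcc_of_le hT] at ht
    have hr : ρ - t ≤ ρ + t := by linarith [ht.1]
    simp [hk.profileVelocity_eq_zero ht.1 hr, hk.profileGradient_eq_zero ht.1 hr]
  simp only [intervalIntegral.integral_neg, hinner, hk.integral_incoming_energy_eq hT, sub_zero,
    Pi.zero_apply, intervalIntegral.integral_zero, neg_zero, add_zero] at hlaw
  linarith

lemma coneEnergyLE {C₁ C₂ : ℝ} (hY : ∀ r ≥ ρ, r ^ 3 * |profileVelocity k (0, r)| ≤ C₁)
    (hZ : ∀ r ≥ ρ, r ^ 3 * |profileGradient k (0, r)| ≤ C₂) :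
    ConeEnergyLE ρ (fun z => profileVelocity k (z.1, z.2 + z.1))
      (fun z => profileGradient k (z.1, z.2 + z.1)) √((C₁ ^ 2 + C₂ ^ 2) / (2 * ρ ^ 2)) := by
  intro T hT A hA
  have hρ := hk.radius_pos
  have hYc := hk.continuous_profileVelocity
  have hZc := hk.continuous_profileGradient
  rw [Real.sq_sqrt (by positivity)]
  have hsq : ∀ {x C r : ℝ}, 0 < r → r ^ 3 * |x| ≤ C → x ^ 2 * r ^ 3 ≤ C ^ 2 * (1 / r ^ 3) :=
    fun {x C r} hr hx => by
      rw [mul_one_div, le_div_iff₀ (by positivity)]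
      calc x ^ 2 * r ^ 3 * r ^ 3 = (r ^ 3 * |x|) ^ 2 := by rw [mul_pow, sq_abs]; ring
        _ ≤ C ^ 2 := pow_le_pow_left₀ (by positivity) hx 2
  have hinverse : ContinuousOn (fun b : ℝ => 1 / b ^ 3) (uIcc ρ (A + 2 * T)) := by
    refine continuousOn_const.div (by fun_prop) fun b hb => ?_
    rw [uIcc_of_le (by linarith)] at hb
    exact pow_ne_zero 3 (hρ.trans_le hb.1).ne'
  calc ∫ a in ρ..A, (profileVelocity k (T, a + T) ^ 2 + profileGradient k (T, a + T) ^ 2)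
        * (a + T) ^ 3
      ≤ ∫ b in ρ..A + 2 * T, (profileVelocity k (0, b) ^ 2 + profileGradient k (0, b) ^ 2)
        * b ^ 3 := hk.integral_energy_le_initial hT hA
    _ ≤ ∫ b in ρ..A + 2 * T, (C₁ ^ 2 + C₂ ^ 2) * (1 / b ^ 3) := by
        refine intervalIntegral.integral_mono_on (by linarith)
          (Continuous.intervalIntegrable (by fun_prop) _ _)
          (continuousOn_const.mul hinverse).intervalIntegrable fun b hb => ?_
        rw [add_mul, add_mul]
        exact add_le_add (hsq (hρ.trans_le hb.1) (hY b hb.1)) (hsq (hρ.trans_le hb.1) (hZ b hb.1))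
    _ ≤ (C₁ ^ 2 + C₂ ^ 2) * (1 / (2 * ρ ^ 2)) := by
        rw [intervalIntegral.integral_const_mul]
        gcongr
        simpa using integral_one_div_add_pow_le two_ne_zero (t := 0) (by linarith)
          (by linarith : ρ ≤ A + 2 * T)
    _ = (C₁ ^ 2 + C₂ ^ 2) / (2 * ρ ^ 2) := mul_one_div _ _

end IsWaveProfile

end ProfileWave

/-! ### Waves with prescribed initial velocity -/

section AbelTransform

open Real (sin cos)
open scoped Real

lemma hasDerivAt_arcMean {w f f' : ℝ → ℝ} (hw : Continuous w) (hf : ∀ x, HasDerivAt f (f' x) x)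
    (hf' : Continuous f') (x : ℝ) :
    HasDerivAt (fun x => arcMean w f (0, x)) (arcMean (fun θ => w θ * sin θ) f' (0, x)) x :=
  (hasPartialsAt_arcMean hw hf hf' (0, x)).hasDerivAt_snd

lemma contDiff_arcMean {n : ℕ} {w f : ℝ → ℝ} (hw : Continuous w) (hf : ContDiff ℝ n f) :
    ContDiff ℝ n fun x => arcMean w f (0, x) := by
  induction n generalizing w f with
  | zero =>
    exact contDiff_zero.2 ((continuous_arcMean hw hf.continuous).comp (Continuous.prodMk_right 0))
  | succ n ih =>
    rw [Nat.cast_succ, contDiff_succ_iff_deriv] at hf ⊢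
    have hderiv := hasDerivAt_arcMean hw (fun x => (hf.1 x).hasDerivAt) hf.2.2.continuous
    refine ⟨fun x => (hderiv x).differentiableAt, by simp, ?_⟩
    rw [funext fun x => (hderiv x).deriv]
    exact ih (by fun_prop) hf.2.2

/-- The profile of the free wave with initial velocity `η r / r`; up to the factor `x`, this is the
Abel transform of `η`. -/
noncomputable def abelTransform (η : ℝ → ℝ) (x : ℝ) : ℝ :=
  -(2 / π) * (x * arcMean 1 η (0, x))

/-- A radial test function of class `C³` supported in `[ρ, A]`, away from the origin. -/
structure IsRadialTestFunction (ρ A : ℝ) (η : ℝ → ℝ) : Prop where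
  radius_pos : 0 < ρ
  radius_le : ρ ≤ A
  contDiff : ContDiff ℝ 3 η
  eq_zero_of_le : ∀ x ≤ ρ, η x = 0
  eq_zero_of_ge : ∀ x ≥ A, η x = 0

/-- A radial test function with mean zero; the mean condition makes the energy of the wave with
profile `abelTransform η` finite. -/
structure IsMeanZeroProfile (ρ A : ℝ) (η : ℝ → ℝ) : Prop extends IsRadialTestFunction ρ A η where
  integral_eq_zero : ∫ x in ρ..A, η x = 0

namespace IsMeanZeroProfile

variable {ρ A : ℝ} {η : ℝ → ℝ} (hη : IsMeanZeroProfile ρ A η)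
include hη

lemma hasDerivAt (x : ℝ) : HasDerivAt η (deriv η x) x :=
  (hη.contDiff.differentiable (by norm_num) x).hasDerivAt

lemma continuous_deriv : Continuous (deriv η) := hη.contDiff.continuous_deriv (by norm_num)

lemma hasDerivAt_id_mul (x : ℝ) : HasDerivAt (fun y => y * η y) (η x + x * deriv η x) x :=
  ((hasDerivAt_id' x).mul (hη.hasDerivAt x)).congr_deriv (by simp)

lemma integral_zero_eq_zero {x : ℝ} (hx : A < x) : ∫ y in 0..x, η y = 0 := by
  have hηc := hη.contDiff.continuous
  have hinner : ∫ y in 0..ρ, η y = ∫ y in 0..ρ, 0 := intervalIntegral.integral_congr fun y hy => by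
    rw [uIcc_of_le hη.radius_pos.le] at hy
    exact hη.eq_zero_of_le y hy.2
  have houter : ∫ y in A..x, η y = ∫ y in A..x, 0 := intervalIntegral.integral_congr fun y hy => by
    rw [uIcc_of_le hx.le] at hy
    exact hη.eq_zero_of_ge y hy.1
  rw [← intervalIntegral.integral_add_adjacent_intervals (hηc.intervalIntegrable 0 ρ)
    (hηc.intervalIntegrable ρ x), ← intervalIntegral.integral_add_adjacent_intervals
    (hηc.intervalIntegrable ρ A) (hηc.intervalIntegrable A x), hinner, houter, hη.integral_eq_zero]
  simp

lemma integral_zero_deriv_id_mul (x : ℝ) : ∫ y in 0..x, (η y + y * deriv η y) = x * η x := by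
  have hηc := hη.contDiff.continuous
  have hη' := hη.continuous_deriv
  rw [intervalIntegral.integral_eq_sub_of_hasDerivAt (fun y _ => hη.hasDerivAt_id_mul y)
    (Continuous.intervalIntegrable (by fun_prop) _ _), zero_mul, sub_zero]

lemma hasDerivAt_abelTransform (x : ℝ) : HasDerivAt (abelTransform η)
    (-(2 / π) * arcMean 1 (fun y => η y + y * deriv η y) (0, x)) x := by
  have hηc := hη.contDiff.continuous
  have hη' := hη.continuous_deriv
  refine (((hasDerivAt_id' x).mul (hasDerivAt_arcMean continuous_one hη.hasDerivAt hη' x)).const_mul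
    (-(2 / π))).congr_deriv ?_
  rw [one_mul, arcMean, arcMean, arcMean, ← intervalIntegral.integral_const_mul,
    ← intervalIntegral.integral_add (Continuous.intervalIntegrable (by fun_prop) _ _)
    (Continuous.intervalIntegrable (by fun_prop) _ _)]
  congr 2 with θ
  simp only [Pi.one_apply]
  ring_nf

lemma isWaveProfile_abelTransform : IsWaveProfile ρ (abelTransform η) where
  radius_pos := hη.radius_pos
  contDiff := contDiff_const.mul (contDiff_id.mul (contDiff_arcMean continuous_one hη.contDiff))
  eq_zero_of_le x hx := by
    rw [abelTransform, arcMean_eq_zero hη.radius_pos.le hη.eq_zero_of_le le_rfl (by simpa using hx)]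
    simp

lemma radius_mul_profileVelocity_abelTransform {r : ℝ} (hr : 0 < r) :
    r * profileVelocity (abelTransform η) (0, r) = η r := by
  have hηc := hη.contDiff.continuous
  have hη' := hη.continuous_deriv
  have harchimedes := integral_integral_sin_mul_sin_eq
    (G := fun x => η (r * x) + r * x * deriv η (r * x)) (by fun_prop)
  rw [intervalIntegral.integral_comp_mul_left (fun y => η y + y * deriv η y) hr.ne', mul_zero,
    mul_one, hη.integral_zero_deriv_id_mul, smul_eq_mul, inv_mul_cancel_left₀ hr.ne'] at harchimedes
  rw [hη.isWaveProfile_abelTransform.radius_mul_profileVelocity le_rfl,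
    funext fun x => (hη.hasDerivAt_abelTransform x).deriv, arcMean]
  simp only [arcMean, Pi.one_apply, mul_one, sub_zero, mul_assoc] at harchimedes ⊢
  rw [intervalIntegral.integral_const_mul, harchimedes]
  field_simp

lemma exists_abelTransform_decay : ∃ C, (∀ x ≥ 0, x * |abelTransform η x| ≤ C) ∧
    ∀ x ≥ 0, x ^ 2 * |deriv (abelTransform η) x| ≤ C := by
  have hηc := hη.contDiff.continuous
  have hη' := hη.continuous_deriv
  have hA : 0 ≤ A := hη.radius_pos.le.trans hη.radius_le
  have hη'A : ∀ x > A, deriv η x = 0 := fun x hx => by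
    have hzero : η =ᶠ[nhds x] fun _ => 0 :=
      (eventually_gt_nhds hx).mono fun y hy => hη.eq_zero_of_ge y hy.le
    rw [hzero.deriv_eq, deriv_const]
  obtain ⟨C₀, -, hC₀⟩ := exists_sq_mul_abs_arcMean_le hηc hA
    (fun x hx => hη.eq_zero_of_ge x hx.le) fun x hx => hη.integral_zero_eq_zero hx
  obtain ⟨C₁, -, hC₁⟩ := exists_sq_mul_abs_arcMean_le (f := fun y => η y + y * deriv η y)
    (by fun_prop) hA (fun x hx => by simp [hη.eq_zero_of_ge x hx.le, hη'A x hx])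
    fun x hx => by rw [hη.integral_zero_deriv_id_mul, hη.eq_zero_of_ge x hx.le, mul_zero]
  have hpi : |-(2 / π)| = 2 / π := by rw [abs_neg, abs_of_pos (by positivity)]
  refine ⟨2 / π * max C₀ C₁, fun x hx => ?_, fun x hx => ?_⟩
  · calc x * |abelTransform η x| = 2 / π * (x ^ 2 * |arcMean 1 η (0, x)|) := by
          rw [abelTransform, abs_mul, abs_mul, hpi, abs_of_nonneg hx]; ring
      _ ≤ 2 / π * max C₀ C₁ := by gcongr; exact (hC₀ x hx).trans (le_max_left _ _)
  · rw [(hη.hasDerivAt_abelTransform x).deriv, abs_mul, hpi, mul_left_comm]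
    gcongr
    exact (hC₁ x hx).trans (le_max_right _ _)

lemma exists_coneEnergyLE : ∃ E, 0 ≤ E ∧
    ConeEnergyLE ρ (fun z => profileVelocity (abelTransform η) (z.1, z.2 + z.1))
      (fun z => profileGradient (abelTransform η) (z.1, z.2 + z.1)) E := by
  have hk := hη.isWaveProfile_abelTransform
  have hηc := hη.contDiff.continuous
  obtain ⟨C, hk₀, hk₁⟩ := hη.exists_abelTransform_decay
  obtain ⟨M, hM⟩ := (isCompact_Icc (a := ρ) (b := A)).exists_bound_of_continuousOn
    (f := fun x => x ^ 2 * η x) (by fun_prop)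
  have hM0 : 0 ≤ M := (norm_nonneg _).trans (hM ρ ⟨le_rfl, hη.radius_le⟩)
  refine ⟨_, Real.sqrt_nonneg _, hk.coneEnergyLE (C₁ := M) (fun r hr => ?_) fun r hr =>
    hk.radius_pow_three_mul_abs_profileGradient_le hk₀ hk₁ (hη.radius_pos.le.trans hr)⟩
  have hr0 : 0 < r := hη.radius_pos.trans_le hr
  have hvelocity : r ^ 3 * |profileVelocity (abelTransform η) (0, r)| = |r ^ 2 * η r| := by
    rw [← hη.radius_mul_profileVelocity_abelTransform hr0, abs_mul, abs_mul, abs_of_pos hr0,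
      abs_of_pos (pow_pos hr0 2)]
    ring
  rw [hvelocity]
  rcases le_total r A with hrA | hrA
  · exact hM r ⟨hr, hrA⟩
  · simpa [hη.eq_zero_of_ge r hrA] using hM0

end IsMeanZeroProfile

end AbelTransform

section TestWave

open Real (sin cos)
open scoped Real

lemma intervalIntegral_swap_of_continuous {F : ℝ → ℝ → ℝ} (hF : Continuous (Function.uncurry F))
    (a b c d : ℝ) : ∫ x in a..b, ∫ y in c..d, F x y = ∫ y in c..d, ∫ x in a..b, F x y :=
  intervalIntegral_intervalIntegral_swap <|
    (hF.continuousOn.integrableOn_compact (isCompact_uIcc.prod isCompact_uIcc)).mono_set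
      (prod_mono uIoc_subset_uIcc uIoc_subset_uIcc)

lemma intervalIntegral_le_mul_of_forall_le {f : ℝ → ℝ} {a b C : ℝ} (hab : a ≤ b)
    (hf : Continuous f) (hC : ∀ x ∈ Icc a b, f x ≤ C) : ∫ x in a..b, f x ≤ (b - a) * C := by
  simpa using intervalIntegral.integral_mono_on (μ := volume) hab (hf.intervalIntegrable a b)
    intervalIntegrable_const hC

lemma intervalIntegral_le_of_support_subset {n : ℝ → ℝ} {ρ A a b : ℝ} (hn : Continuous n)
    (hn0 : ∀ x, 0 ≤ n x) (hlow : ∀ x ≤ ρ, n x = 0) (hhigh : ∀ x ≥ A, n x = 0) (hab : a ≤ b) :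
    ∫ x in a..b, n x ≤ ∫ x in ρ..A, n x := by
  have hleft : ∫ x in min a ρ..ρ, n x = ∫ x in min a ρ..ρ, 0 :=
    intervalIntegral.integral_congr fun x hx => by
      rw [uIcc_of_le (min_le_right _ _)] at hx
      exact hlow x hx.2
  have hright : ∫ x in A..max b A, n x = ∫ x in A..max b A, 0 :=
    intervalIntegral.integral_congr fun x hx => by
      rw [uIcc_of_le (le_max_right _ _)] at hx
      exact hhigh x hx.1
  calc ∫ x in a..b, n x ≤ ∫ x in min a ρ..max b A, n x :=
        intervalIntegral.integral_mono_interval (min_le_left _ _) hab (le_max_left _ _)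
          (.of_forall hn0) (hn.intervalIntegrable _ _)
    _ = ∫ x in ρ..A, n x := by
        rw [← intervalIntegral.integral_add_adjacent_intervals (hn.intervalIntegrable _ ρ)
          (hn.intervalIntegrable ρ _), ← intervalIntegral.integral_add_adjacent_intervals
          (hn.intervalIntegrable ρ A) (hn.intervalIntegrable A _), hleft, hright]
        simp

/-- The double mean `∫∫ n ((r sin θ - t) sin φ) sin θ sin φ dφ dθ`, as a function of `(t, r)`: it
dominates the square of the wave with profile `abelTransform η` when `n` is `η² / x`. -/
noncomputable def doubleArcMean (n : ℝ → ℝ) (z : ℝ × ℝ) : ℝ :=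
  ∫ θ in 0..π / 2, ∫ φ in 0..π / 2, n ((z.2 * sin θ - z.1) * sin φ) * (sin θ * sin φ)

lemma continuous_doubleArcMean {n : ℝ → ℝ} (hn : Continuous n) : Continuous (doubleArcMean n) := by
  unfold doubleArcMean
  fun_prop

-- For fixed angles, `a ↦ ((a + t) sin θ - t) sin φ` has Jacobian `sin θ sin φ`.
lemma integral_doubleArcMean_le {n : ℝ → ℝ} {t a b M : ℝ} (hn : Continuous n) (hab : a ≤ b)
    (hM : ∀ c d, c ≤ d → ∫ x in c..d, n x ≤ M) :
    ∫ r in a..b, doubleArcMean n (t, r + t) ≤ (π / 2) ^ 2 * M := by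
  have hpi : (0 : ℝ) ≤ π / 2 := Real.pi_div_two_pos.le
  have hlines : ∀ θ ∈ Icc 0 (π / 2), ∀ φ ∈ Icc 0 (π / 2),
      ∫ r in a..b, n (((r + t) * sin θ - t) * sin φ) * (sin θ * sin φ) ≤ M := fun θ hθ φ hφ => by
    have hsin := mul_nonneg (sin_nonneg_of_mem_Icc hθ) (sin_nonneg_of_mem_Icc hφ)
    rw [intervalIntegral.integral_mul_const, mul_comm]
    simp_rw [show ∀ r, ((r + t) * sin θ - t) * sin φ =
      sin θ * sin φ * r + (t * sin θ - t) * sin φ from fun r => by ring]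
    rw [intervalIntegral.mul_integral_comp_mul_add]
    exact hM _ _ (by gcongr)
  have hplanes : ∀ θ ∈ Icc 0 (π / 2), ∫ r in a..b, ∫ φ in 0..π / 2,
      n (((r + t) * sin θ - t) * sin φ) * (sin θ * sin φ) ≤ π / 2 * M := fun θ hθ => by
    rw [intervalIntegral_swap_of_continuous (by unfold Function.uncurry; fun_prop)]
    simpa using intervalIntegral_le_mul_of_forall_le hpi (by fun_prop) (hlines θ hθ)
  unfold doubleArcMean
  rw [intervalIntegral_swap_of_continuous (by unfold Function.uncurry; fun_prop), sq, mul_assoc]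
  simpa using intervalIntegral_le_mul_of_forall_le hpi (by fun_prop) hplanes

lemma sq_abelTransform_le {η : ℝ → ℝ} (hη : Continuous η) (x : ℝ) :
    abelTransform η x ^ 2 ≤ 2 / π * ∫ φ in 0..π / 2, x ^ 2 * η (x * sin φ) ^ 2 := by
  have hcs := sq_integral_le (f := fun φ => η (x * sin φ)) Real.pi_div_two_pos.le (by fun_prop)
  calc abelTransform η x ^ 2 = (2 / π) ^ 2 * x ^ 2 * (∫ φ in 0..π / 2, η (x * sin φ)) ^ 2 := by
        simp [abelTransform, arcMean, mul_pow, mul_assoc]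
    _ ≤ (2 / π) ^ 2 * x ^ 2 * ((π / 2 - 0) * ∫ φ in 0..π / 2, η (x * sin φ) ^ 2) := by gcongr
    _ = 2 / π * ∫ φ in 0..π / 2, x ^ 2 * η (x * sin φ) ^ 2 := by
        rw [intervalIntegral.integral_const_mul]
        field_simp
        ring

namespace IsMeanZeroProfile

variable {ρ A t r : ℝ} {η : ℝ → ℝ} (hη : IsMeanZeroProfile ρ A η)
include hη

-- The denominator `max x ρ` agrees with `x` on the support of `η` and never vanishes.
lemma continuous_sq_div_max : Continuous fun x => η x ^ 2 / max x ρ :=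
  (hη.contDiff.continuous.pow 2).div (by fun_prop) fun x =>
    (hη.radius_pos.trans_le (le_max_right x ρ)).ne'

lemma sq_mul_sq_mul_sq_le (ht : 0 ≤ t) (hr : 0 ≤ r) {s q : ℝ} (hs : s ∈ Icc 0 1) (hq : 0 ≤ q) :
    (r * s - t) ^ 2 * η ((r * s - t) * q) ^ 2 * s ^ 2 ≤
      r ^ 3 * (η ((r * s - t) * q) ^ 2 / max ((r * s - t) * q) ρ * (s * q)) := by
  set x := r * s - t
  rcases le_or_gt (x * q) ρ with hxq | hxq
  · simp [hη.eq_zero_of_le _ hxq]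
  have hxq0 : 0 < x * q := hη.radius_pos.trans hxq
  have hx0 : 0 < x := pos_of_mul_pos_left hxq0 hq
  have hxr : x ≤ r := by nlinarith [hs.1, hs.2]
  rw [max_eq_left hxq.le]
  calc x ^ 2 * η (x * q) ^ 2 * s ^ 2 ≤ (r ^ 3 / x) * η (x * q) ^ 2 * s := by
        have hcube : x ^ 2 ≤ r ^ 3 / x := by
          rw [le_div_iff₀ hx0, ← pow_succ]
          gcongr
        have hsq : s ^ 2 ≤ s := by nlinarith [hs.1, hs.2]
        gcongr
    _ = r ^ 3 * (η (x * q) ^ 2 / (x * q) * (s * q)) := by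
        have hq0 : q ≠ 0 := (right_ne_zero_of_mul hxq0.ne')
        field_simp

lemma sq_abelTransform_mul_sin_le (ht : 0 ≤ t) (hr : 0 ≤ r) {θ : ℝ} (hθ : θ ∈ Icc 0 (π / 2)) :
    (abelTransform η (r * sin θ - t) * sin θ) ^ 2 ≤
      2 / π * (r ^ 3 * ∫ φ in 0..π / 2, η ((r * sin θ - t) * sin φ) ^ 2
        / max ((r * sin θ - t) * sin φ) ρ * (sin θ * sin φ)) := by
  have hηc := hη.contDiff.continuous
  have hn := hη.continuous_sq_div_max.comp
    (by fun_prop : Continuous fun φ => (r * sin θ - t) * sin φ)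
  calc (abelTransform η (r * sin θ - t) * sin θ) ^ 2
      ≤ (2 / π * ∫ φ in 0..π / 2, (r * sin θ - t) ^ 2 * η ((r * sin θ - t) * sin φ) ^ 2)
        * sin θ ^ 2 := by
        rw [mul_pow]
        gcongr
        exact sq_abelTransform_le hηc _
    _ ≤ _ := by
        rw [mul_assoc]
        refine mul_le_mul_of_nonneg_left ?_ (div_pos two_pos Real.pi_pos).le
        rw [← intervalIntegral.integral_mul_const, ← intervalIntegral.integral_const_mul]
        exact intervalIntegral.integral_mono_on Real.pi_div_two_pos.le
          (Continuous.intervalIntegrable (by fun_prop) _ _)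
          ((continuous_const.mul (hn.mul (by fun_prop))).intervalIntegrable _ _) fun φ hφ =>
          hη.sq_mul_sq_mul_sq_le ht hr ⟨sin_nonneg_of_mem_Icc hθ, Real.sin_le_one θ⟩
            (sin_nonneg_of_mem_Icc hφ)

lemma sq_profileWave_div_le (ht : 0 ≤ t) (hr : 0 < r) :
    profileWave (abelTransform η) (t, r) ^ 2 / r ≤
      doubleArcMean (fun x => η x ^ 2 / max x ρ) (t, r) := by
  have hpi : (0 : ℝ) ≤ π / 2 := Real.pi_div_two_pos.le
  have hk := hη.isWaveProfile_abelTransform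
  have hkc := hk.contDiff.continuous
  have hn := hη.continuous_sq_div_max
  set n : ℝ → ℝ := fun x => η x ^ 2 / max x ρ
  have hwave : (r * profileWave (abelTransform η) (t, r)) ^ 2 ≤ r ^ 3 * doubleArcMean n (t, r) := by
    calc (r * profileWave (abelTransform η) (t, r)) ^ 2
        ≤ (π / 2 - 0) * ∫ θ in 0..π / 2, (abelTransform η (r * sin θ - t) * sin θ) ^ 2 := by
          rw [hk.radius_mul_profileWave ht]
          exact sq_integral_le hpi (by fun_prop)
      _ ≤ (π / 2 - 0) * ∫ θ in 0..π / 2, 2 / π * (r ^ 3 * ∫ φ in 0..π / 2,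
            n ((r * sin θ - t) * sin φ) * (sin θ * sin φ)) := by
          refine mul_le_mul_of_nonneg_left ?_ (by linarith)
          exact intervalIntegral.integral_mono_on hpi
            (Continuous.intervalIntegrable (by fun_prop) _ _)
            (Continuous.intervalIntegrable (by fun_prop) _ _) fun θ hθ =>
            hη.sq_abelTransform_mul_sin_le ht hr.le hθ
      _ = r ^ 3 * doubleArcMean n (t, r) := by
          rw [intervalIntegral.integral_const_mul, intervalIntegral.integral_const_mul,
            doubleArcMean]
          field_simp
          ring
  rw [div_le_iff₀ hr]
  refine le_of_mul_le_mul_left ?_ (pow_pos hr 2)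
  linarith

lemma integral_sq_profileWave_div_le (ht : 0 ≤ t) {B : ℝ} (hB : ρ ≤ B) :
    ∫ a in ρ..B, profileWave (abelTransform η) (t, a + t) ^ 2 / (a + t) ≤
      (π / 2) ^ 2 * ∫ x in ρ..A, η x ^ 2 / x := by
  have hρ := hη.radius_pos
  have hX := hη.isWaveProfile_abelTransform.continuous_profileWave
  have hn := hη.continuous_sq_div_max
  have hmean := continuous_doubleArcMean hn
  have hmax : ∫ x in ρ..A, η x ^ 2 / max x ρ = ∫ x in ρ..A, η x ^ 2 / x :=
    intervalIntegral.integral_congr fun x hx => by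
      rw [uIcc_of_le hη.radius_le] at hx
      simp only [max_eq_left hx.1]
  have hquotient : ContinuousOn
      (fun a => profileWave (abelTransform η) (t, a + t) ^ 2 / (a + t)) (uIcc ρ B) :=
    ContinuousOn.div (by fun_prop) (by fun_prop) fun a ha => by
      rw [uIcc_of_le hB] at ha
      linarith [ha.1]
  calc ∫ a in ρ..B, profileWave (abelTransform η) (t, a + t) ^ 2 / (a + t)
      ≤ ∫ a in ρ..B, doubleArcMean (fun x => η x ^ 2 / max x ρ) (t, a + t) :=
        intervalIntegral.integral_mono_on hB hquotient.intervalIntegrable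
          (Continuous.intervalIntegrable (by fun_prop) _ _) fun a ha =>
          hη.sq_profileWave_div_le ht (by linarith [ha.1])
    _ ≤ (π / 2) ^ 2 * ∫ x in ρ..A, η x ^ 2 / x := by
        rw [← hmax]
        exact integral_doubleArcMean_le hn hB fun c d hcd =>
          intervalIntegral_le_of_support_subset hn
            (fun x => div_nonneg (sq_nonneg _) (hρ.le.trans (le_max_right x ρ)))
            (fun x hx => by simp [hη.eq_zero_of_le x hx])
            (fun x hx => by simp [hη.eq_zero_of_ge x hx]) hcd

theorem exists_isConeTestWave : ∃ X Y Z E,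
    IsConeTestWave ρ X Y Z E (π / 2 * √(∫ x in ρ..A, η x ^ 2 / x)) ∧
      ∀ a ≥ ρ, a * Y (0, a) = η a := by
  have hρ := hη.radius_pos
  have hk := hη.isWaveProfile_abelTransform
  have hX := hk.continuous_profileWave
  have hY := hk.continuous_profileVelocity
  have hZ := hk.continuous_profileGradient
  obtain ⟨E, hE, henergy⟩ := hη.exists_coneEnergyLE
  refine ⟨fun z => profileWave (abelTransform η) (z.1, z.2 + z.1),
    fun z => profileVelocity (abelTransform η) (z.1, z.2 + z.1),
    fun z => profileGradient (abelTransform η) (z.1, z.2 + z.1), E,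
    ⟨by fun_prop, by fun_prop, by fun_prop, fun t ht a _ => ?_, fun t ht =>
      ⟨hk.profileWave_eq_zero ht le_rfl, hk.profileVelocity_eq_zero ht le_rfl,
        hk.profileGradient_eq_zero ht le_rfl⟩, hE, henergy, by positivity, fun t ht B hB => ?_⟩,
    fun a ha => ?_⟩
  · simpa [Pi.zero_def] using (hk.isRadialWaveAt (r := a + 1 * t) ht.le).comp_slant (z := (t, a))
  · rw [mul_pow, Real.sq_sqrt (intervalIntegral.integral_nonneg hη.radius_le fun x hx =>
      div_nonneg (sq_nonneg _) (hρ.le.trans hx.1))]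
    exact hη.integral_sq_profileWave_div_le ht hB
  · simpa using hη.radius_mul_profileVelocity_abelTransform (hρ.trans_le ha)

end IsMeanZeroProfile

end TestWave

/-! ### Duality -/

section Duality

namespace IsRadialTestFunction

variable {ρ A : ℝ} {η : ℝ → ℝ}

lemma integral_extend (hη : IsRadialTestFunction ρ A η) {f : ℝ → ℝ}
    (hf : ∀ x, η x = 0 → f x = 0) {a b : ℝ} (ha : a ≤ ρ) (hb : A ≤ b) :
    ∫ x in a..b, f x = ∫ x in ρ..A, f x := by
  have hsupport : Function.support f ⊆ Ioc ρ A := fun x hx =>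
    ⟨lt_of_not_ge fun h => hx (hf x (hη.eq_zero_of_le x h)),
      (lt_of_not_ge fun h => hx (hf x (hη.eq_zero_of_ge x h))).le⟩
  rw [intervalIntegral.integral_eq_integral_of_support_subset hsupport,
    intervalIntegral.integral_eq_integral_of_support_subset
      (hsupport.trans (Ioc_subset_Ioc ha hb))]

end IsRadialTestFunction

lemma exists_cutoff {ρ ρ₁ A : ℝ} (hρ : 0 < ρ) (hρ₁ : ρ < ρ₁) (hA : ρ₁ < A) :
    ∃ l > ρ, ∃ B ≥ A, ∃ χ : ℝ → ℝ, IsRadialTestFunction l B χ ∧ (∀ x, 0 ≤ χ x) ∧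
      (∀ x, χ x ≤ 1) ∧ ∀ x ∈ Icc ρ₁ A, χ x = 1 := by
  let χ : ContDiffBump ((ρ₁ + A) / 2) :=
    ⟨(A - ρ₁) / 2, (A - ρ₁) / 2 + (ρ₁ - ρ) / 2, by linarith, by linarith⟩
  have houter : ∀ x, (A - ρ₁) / 2 + (ρ₁ - ρ) / 2 ≤ |x - (ρ₁ + A) / 2| → χ x = 0 := fun x hx =>
    χ.zero_of_le_dist hx
  refine ⟨(ρ + ρ₁) / 2, by linarith, A + (ρ₁ - ρ) / 2, by linarith, χ,
    ⟨by linarith, by linarith, χ.contDiff (n := 3), fun x hx => houter x ?_,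
      fun x hx => houter x ?_⟩, fun x => χ.nonneg, fun x => χ.le_one, fun x hx => ?_⟩
  · exact le_trans (by linarith) (neg_le_abs _)
  · exact le_trans (by linarith) (le_abs_self _)
  · refine χ.one_of_mem_closedBall ?_
    rw [Real.closedBall_eq_Icc]
    change (ρ₁ + A) / 2 - (A - ρ₁) / 2 ≤ x ∧ x ≤ (ρ₁ + A) / 2 + (A - ρ₁) / 2
    constructor <;> linarith [hx.1, hx.2]

lemma exists_unit_bump {n : ℝ} (hn : 0 < n) :
    ∃ β : ℝ → ℝ, IsRadialTestFunction n (2 * n) β ∧ (∀ x, 0 ≤ β x) ∧ (∀ x, β x ≤ 2 / n) ∧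
      ∫ x in n..(2 * n), β x = 1 := by
  let f : ContDiffBump (3 * n / 2) := ⟨n / 4, n / 2, by linarith, by linarith⟩
  have hsupport : Function.support (f.normed volume) ⊆ Ioo n (2 * n) := fun x hx => by
    rw [f.support_normed_eq, Real.ball_eq_Ioo] at hx
    change x ∈ Ioo (3 * n / 2 - n / 2) (3 * n / 2 + n / 2) at hx
    exact ⟨by linarith [hx.1], by linarith [hx.2]⟩
  have hzero : ∀ x ∉ Ioo n (2 * n), f.normed volume x = 0 := fun x hx =>
    Function.notMem_support.1 fun h => hx (hsupport h)
  refine ⟨f.normed volume, ⟨hn, by linarith, f.contDiff_normed (n := 3),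
    fun x hx => hzero x fun h => h.1.not_ge hx, fun x hx => hzero x fun h => h.2.not_ge hx⟩,
    f.nonneg_normed, fun x => ?_, ?_⟩
  · refine (f.normed_le_div_measure_closedBall_rIn volume x).trans_eq ?_
    rw [Real.volume_real_closedBall f.rIn_pos.le]
    change 1 / (2 * (n / 4)) = 2 / n
    field_simp
    norm_num
  · rw [intervalIntegral.integral_eq_integral_of_support_subset
      (hsupport.trans Ioo_subset_Ioc_self), f.integral_normed]

lemma eventually_integral_tail_le {f : ℝ → ℝ} (hf : Continuous f) {ρ M : ℝ}
    (hf0 : ∀ x ≥ ρ, 0 ≤ f x) (hM : ∀ A ≥ ρ, ∫ x in ρ..A, f x ≤ M) {ε : ℝ} (hε : 0 < ε) :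
    ∀ᶠ n in atTop, ∀ A ≥ n, ∫ x in n..A, f x ≤ ε := by
  set S : Set ℝ := (fun A => ∫ x in ρ..A, f x) '' Ici ρ
  have hbdd : BddAbove S := ⟨M, forall_mem_image.2 hM⟩
  obtain ⟨_, ⟨m, hm, rfl⟩, hsup⟩ :=
    exists_lt_of_lt_csSup (nonempty_Ici.image _) (sub_lt_self (sSup S) hε)
  filter_upwards [eventually_ge_atTop m] with n hn A hA
  have hint := fun a b => hf.intervalIntegrable (μ := volume) a b
  have hρA : ∫ x in ρ..A, f x ≤ sSup S := le_csSup hbdd ⟨A, hm.trans (hn.trans hA), rfl⟩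
  have hmn : 0 ≤ ∫ x in m..n, f x :=
    intervalIntegral.integral_nonneg hn fun x hx => hf0 x (le_trans hm hx.1)
  have hsplit_n := intervalIntegral.integral_add_adjacent_intervals (hint ρ n) (hint n A)
  have hsplit_m := intervalIntegral.integral_add_adjacent_intervals (hint ρ m) (hint m n)
  linarith

section UnitBump

variable {n : ℝ} {β : ℝ → ℝ}

lemma integral_bump_sq_div_le (hn : 0 < n) (hβc : Continuous β) (hβ0 : ∀ x, 0 ≤ β x)
    (hβ : ∀ x, β x ≤ 2 / n) (hβ1 : ∫ x in n..(2 * n), β x = 1) :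
    ∫ x in n..(2 * n), β x ^ 2 / x ≤ (2 / n) ^ 2 := by
  have hx0 : ∀ x ∈ uIcc n (2 * n), x ≠ 0 := fun x hx => by
    rw [uIcc_of_le (by linarith)] at hx
    linarith [hx.1]
  calc ∫ x in n..(2 * n), β x ^ 2 / x ≤ ∫ x in n..(2 * n), 2 / n / n * β x :=
        intervalIntegral.integral_mono_on (by linarith)
          (ContinuousOn.div (by fun_prop) continuousOn_id hx0).intervalIntegrable
          (Continuous.intervalIntegrable (by fun_prop) _ _) fun x hx => by
            rw [pow_two, div_mul_eq_mul_div]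
            exact div_le_div₀ (mul_nonneg (by positivity) (hβ0 x))
              (mul_le_mul_of_nonneg_right (hβ x) (hβ0 x)) hn hx.1
    _ = 2 / n / n := by rw [intervalIntegral.integral_const_mul, hβ1, mul_one]
    _ ≤ (2 / n) ^ 2 := by
        rw [div_pow, div_div, ← pow_two]
        gcongr
        norm_num

lemma integral_mul_bump_sq_le (hn : 0 < n) (hβc : Continuous β) (hβ0 : ∀ x, 0 ≤ β x)
    (hβ : ∀ x, β x ≤ 2 / n) (hβ1 : ∫ x in n..(2 * n), β x = 1) :
    ∫ x in n..(2 * n), x * β x ^ 2 ≤ 2 ^ 2 := by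
  calc ∫ x in n..(2 * n), x * β x ^ 2 ≤ ∫ x in n..(2 * n), 2 ^ 2 * β x :=
        intervalIntegral.integral_mono_on (by linarith)
          (Continuous.intervalIntegrable (by fun_prop) _ _)
          (Continuous.intervalIntegrable (by fun_prop) _ _) fun x hx => by
            have hxβ : x * β x ≤ 2 * n * (2 / n) :=
              mul_le_mul hx.2 (hβ x) (hβ0 x) (by linarith)
            rw [pow_two (β x), ← mul_assoc]
            refine mul_le_mul_of_nonneg_right (hxβ.trans_eq ?_) (hβ0 x)
            field_simp
    _ = 2 ^ 2 := by rw [intervalIntegral.integral_const_mul, hβ1, mul_one]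

lemma abs_integral_mul_bump_le (hn : 0 < n) (hβc : Continuous β) (hβ0 : ∀ x, 0 ≤ β x)
    (hβ : ∀ x, β x ≤ 2 / n) (hβ1 : ∫ x in n..(2 * n), β x = 1) {W : ℝ → ℝ} (hW : Continuous W)
    {δ : ℝ} (hδ : 0 ≤ δ) (hWδ : ∫ x in n..(2 * n), W x ^ 2 * x ^ 3 ≤ δ ^ 2) :
    |∫ x in n..(2 * n), W x * x ^ 2 * β x| ≤ δ * 2 := by
  have hn2 : n ≤ 2 * n := by linarith
  have hx0 : ∀ x ∈ uIcc n (2 * n), x ≠ 0 := fun x hx => by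
    rw [uIcc_of_le hn2] at hx
    linarith [hx.1]
  have hpair : ∫ x in n..(2 * n), W x * x ^ 2 * β x = ∫ x in n..(2 * n), W x * (β x / x) * x ^ 3 :=
    intervalIntegral.integral_congr fun x hx => by
      have := hx0 x hx
      field_simp
  have hsq : ∫ x in n..(2 * n), (β x / x) ^ 2 * x ^ 3 = ∫ x in n..(2 * n), x * β x ^ 2 :=
    intervalIntegral.integral_congr fun x hx => by
      have := hx0 x hx
      field_simp
  rw [hpair]
  exact abs_integral_mul_mul_le hn2 (by fun_prop) (hβc.continuousOn.div continuousOn_id hx0)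
    (by fun_prop) (fun x hx => pow_nonneg (hn.le.trans hx.1) 3) hδ zero_le_two hWδ
    (hsq.trans_le (integral_mul_bump_sq_le hn hβc hβ0 hβ hβ1))

end UnitBump

lemma exists_unit_bump_pairing_le {W : ℝ → ℝ} (hW : Continuous W) {ρ M : ℝ} (hρ : 0 < ρ)
    (hM : ∀ A ≥ ρ, ∫ x in ρ..A, W x ^ 2 * x ^ 3 ≤ M) (B : ℝ) {δ : ℝ} (hδ : 0 < δ) :
    ∃ n ≥ B, ∃ β : ℝ → ℝ, IsRadialTestFunction n (2 * n) β ∧ ∫ x in n..(2 * n), β x = 1 ∧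
      |∫ x in n..(2 * n), W x * x ^ 2 * β x| ≤ δ ∧ ∫ x in n..(2 * n), β x ^ 2 / x ≤ δ ^ 2 := by
  have htail := eventually_integral_tail_le (f := fun x => W x ^ 2 * x ^ 3) (by fun_prop)
    (fun x hx => mul_nonneg (sq_nonneg _) (pow_nonneg (hρ.le.trans hx) 3)) hM
    (by positivity : 0 < (δ / 2) ^ 2)
  obtain ⟨n, hnW, hnB, hn, hnδ⟩ := (htail.and ((eventually_ge_atTop B).and
    ((eventually_gt_atTop 0).and (eventually_ge_atTop (2 / δ))))).exists
  obtain ⟨β, hβ, hβ0, hβn, hβ1⟩ := exists_unit_bump hn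
  have hβc := hβ.contDiff.continuous
  refine ⟨n, hnB, β, hβ, hβ1, ?_, ?_⟩
  · simpa using abs_integral_mul_bump_le hn hβc hβ0 hβn hβ1 hW (half_pos hδ).le
      (hnW (2 * n) (by linarith))
  · refine (integral_bump_sq_div_le hn hβc hβ0 hβn hβ1).trans ?_
    gcongr
    rwa [div_le_iff₀ hn, mul_comm, ← div_le_iff₀ hδ]

lemma sqrt_add_sq_le {a b : ℝ} (ha : 0 ≤ a) (hb : 0 ≤ b) : √(a + b ^ 2) ≤ √a + b := by
  refine Real.sqrt_le_iff.2 ⟨by positivity, ?_⟩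
  calc a + b ^ 2 = √a ^ 2 + b ^ 2 := by rw [Real.sq_sqrt ha]
    _ ≤ (√a + b) ^ 2 := pow_add_pow_le (Real.sqrt_nonneg a) hb two_ne_zero

namespace IsRadialTestFunction

variable {ρ A B n κ : ℝ} {W g β : ℝ → ℝ}

lemma integrable_sq_div (hg : IsRadialTestFunction ρ B g) {f : ℝ → ℝ} (hf : Continuous f)
    (hA : ρ ≤ A) : IntervalIntegrable (fun x => f x ^ 2 / x) volume ρ A :=
  ContinuousOn.intervalIntegrable <| ContinuousOn.div (by fun_prop) continuousOn_id fun x hx => by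
    rw [uIcc_of_le hA] at hx
    exact (hg.radius_pos.trans_le hx.1).ne'

lemma isMeanZeroProfile_sub_bump (hg : IsRadialTestFunction ρ B g)
    (hβ : IsRadialTestFunction n (2 * n) β) (hn : B ≤ n) (hβ1 : ∫ x in n..(2 * n), β x = 1) :
    IsMeanZeroProfile ρ (2 * n) fun x => g x - (∫ x in ρ..B, g x) * β x where
  radius_pos := hg.radius_pos
  radius_le := hg.radius_le.trans (hn.trans hβ.radius_le)
  contDiff := hg.contDiff.sub (contDiff_const.mul hβ.contDiff)
  eq_zero_of_le x hx := by
    simp [hg.eq_zero_of_le x hx, hβ.eq_zero_of_le x (hx.trans (hg.radius_le.trans hn))]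
  eq_zero_of_ge x hx := by
    simp [hg.eq_zero_of_ge x ((hn.trans hβ.radius_le).trans hx), hβ.eq_zero_of_ge x hx]
  integral_eq_zero := by
    rw [intervalIntegral.integral_sub (hg.contDiff.continuous.intervalIntegrable _ _)
      ((hβ.contDiff.continuous.intervalIntegrable _ _).const_mul _),
      intervalIntegral.integral_const_mul,
      hg.integral_extend (fun _ h => h) le_rfl (hn.trans hβ.radius_le),
      hβ.integral_extend (fun _ h => h) (hg.radius_le.trans hn) le_rfl, hβ1, mul_one, sub_self]

lemma integral_mul_sub_bump (hg : IsRadialTestFunction ρ B g)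
    (hβ : IsRadialTestFunction n (2 * n) β) (hn : B ≤ n) (hW : Continuous W) (c : ℝ) :
    ∫ x in ρ..2 * n, W x * x ^ 2 * (g x - c * β x) =
      (∫ x in ρ..B, W x * x ^ 2 * g x) - c * ∫ x in n..(2 * n), W x * x ^ 2 * β x := by
  have hgc := hg.contDiff.continuous
  have hβc := hβ.contDiff.continuous
  rw [← hg.integral_extend (fun _ h => by simp [h]) le_rfl (hn.trans hβ.radius_le),
    ← hβ.integral_extend (fun _ h => by simp [h]) (hg.radius_le.trans hn) le_rfl,
    ← intervalIntegral.integral_const_mul, ← intervalIntegral.integral_sub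
      (Continuous.intervalIntegrable (by fun_prop) _ _)
      (Continuous.intervalIntegrable (by fun_prop) _ _)]
  exact intervalIntegral.integral_congr fun x _ => by ring

lemma integral_sub_bump_sq_div (hg : IsRadialTestFunction ρ B g)
    (hβ : IsRadialTestFunction n (2 * n) β) (hn : B ≤ n) (c : ℝ) :
    ∫ x in ρ..2 * n, (g x - c * β x) ^ 2 / x =
      (∫ x in ρ..B, g x ^ 2 / x) + c ^ 2 * ∫ x in n..(2 * n), β x ^ 2 / x := by
  have hρn : ρ ≤ 2 * n := hg.radius_le.trans (hn.trans hβ.radius_le)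
  have hgβ : ∀ x, g x * β x = 0 := fun x => by
    rcases le_total x n with hx | hx
    · rw [hβ.eq_zero_of_le x hx, mul_zero]
    · rw [hg.eq_zero_of_ge x (hn.trans hx), zero_mul]
  rw [← hg.integral_extend (fun _ h => by simp [h]) le_rfl (hn.trans hβ.radius_le),
    ← hβ.integral_extend (fun _ h => by simp [h]) (hg.radius_le.trans hn) le_rfl,
    ← intervalIntegral.integral_const_mul, ← intervalIntegral.integral_add
      (hg.integrable_sq_div hg.contDiff.continuous hρn)
      ((hg.integrable_sq_div hβ.contDiff.continuous hρn).const_mul _)]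
  exact intervalIntegral.integral_congr fun x _ => by
    linear_combination (-2 * c / x) * hgβ x

/-- The mean of `g` is cancelled by a bump pushed to infinity, at no cost in the limit. -/
theorem abs_integral_mul_le_of_forall_isMeanZeroProfile (hg : IsRadialTestFunction ρ B g)
    (hW : Continuous W) {M : ℝ} (hM : ∀ A ≥ ρ, ∫ x in ρ..A, W x ^ 2 * x ^ 3 ≤ M) (hκ : 0 ≤ κ)
    (hpair : ∀ A η, IsMeanZeroProfile ρ A η →
      |∫ x in ρ..A, W x * x ^ 2 * η x| ≤ κ * √(∫ x in ρ..A, η x ^ 2 / x)) :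
    |∫ x in ρ..B, W x * x ^ 2 * g x| ≤ κ * √(∫ x in ρ..B, g x ^ 2 / x) := by
  set c := ∫ x in ρ..B, g x
  refine le_of_forall_pos_le_add fun ε hε => ?_
  set δ := ε / (|c| * (κ + 1) + 1)
  have hδ : 0 < δ := by positivity
  obtain ⟨n, hn, β, hβ, hβ1, hWβ, hβδ⟩ := exists_unit_bump_pairing_le hW hg.radius_pos hM B hδ
  have hη := hpair _ _ (hg.isMeanZeroProfile_sub_bump hβ hn hβ1)
  rw [hg.integral_mul_sub_bump hβ hn hW, hg.integral_sub_bump_sq_div hβ hn] at hη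
  have hsqrt : √((∫ x in ρ..B, g x ^ 2 / x) + c ^ 2 * ∫ x in n..(2 * n), β x ^ 2 / x) ≤
      √(∫ x in ρ..B, g x ^ 2 / x) + |c| * δ := by
    have hg0 : 0 ≤ ∫ x in ρ..B, g x ^ 2 / x := intervalIntegral.integral_nonneg hg.radius_le
      fun x hx => div_nonneg (sq_nonneg _) (hg.radius_pos.le.trans hx.1)
    refine le_trans (Real.sqrt_le_sqrt ?_) (sqrt_add_sq_le hg0 (by positivity))
    rw [mul_pow, sq_abs]
    gcongr
  have hbump : |c * ∫ x in n..(2 * n), W x * x ^ 2 * β x| ≤ |c| * δ := by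
    rw [abs_mul]
    gcongr
  have hδε : |c| * (κ + 1) * δ ≤ ε := by
    rw [mul_div_assoc', div_le_iff₀ (by positivity)]
    nlinarith
  calc |∫ x in ρ..B, W x * x ^ 2 * g x|
      ≤ κ * √((∫ x in ρ..B, g x ^ 2 / x) + c ^ 2 * ∫ x in n..(2 * n), β x ^ 2 / x)
        + |c| * δ := by
        linarith [abs_sub_abs_le_abs_sub (∫ x in ρ..B, W x * x ^ 2 * g x)
          (c * ∫ x in n..(2 * n), W x * x ^ 2 * β x)]
    _ ≤ κ * (√(∫ x in ρ..B, g x ^ 2 / x) + |c| * δ) + |c| * δ := by gcongr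
    _ ≤ κ * √(∫ x in ρ..B, g x ^ 2 / x) + ε := by linarith

lemma cube_mul_mul_cutoff {χ : ℝ → ℝ} {l : ℝ} (hχ : IsRadialTestFunction l B χ) (hρ : 0 < ρ)
    (hl : ρ < l) (hW : ContDiffOn ℝ 3 W (Ioi ρ)) :
    IsRadialTestFunction ρ B fun x => x ^ 3 * W x * χ x where
  radius_pos := hρ
  radius_le := hl.le.trans hχ.radius_le
  eq_zero_of_le x hx := by rw [hχ.eq_zero_of_le x (hx.trans hl.le), mul_zero]
  eq_zero_of_ge x hx := by rw [hχ.eq_zero_of_ge x hx, mul_zero]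
  contDiff := contDiff_iff_contDiffAt.2 fun x => by
    rcases lt_or_ge x l with hx | hx
    · refine (contDiffAt_const (c := 0)).congr_of_eventuallyEq ?_
      filter_upwards [Iio_mem_nhds hx] with y hy
      rw [hχ.eq_zero_of_le y (le_of_lt hy), mul_zero]
    · exact ((contDiffAt_id.pow 3).mul (hW.contDiffAt (Ioi_mem_nhds (hl.trans_le hx)))).mul
        hχ.contDiff.contDiffAt

end IsRadialTestFunction

section WeightedBound

variable {W : ℝ → ℝ} {ρ M κ A : ℝ}

/-- The pairing with the cut-off multiple `x³ W χ` of `W` bounds the left side by `κ` times its own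
square root. -/
lemma integral_cutoff_sq_mul_pow_five_le (hρ : 0 < ρ) (hW : Continuous W)
    (hWs : ContDiffOn ℝ 3 W (Ioi ρ)) (hM : ∀ A ≥ ρ, ∫ x in ρ..A, W x ^ 2 * x ^ 3 ≤ M)
    (hκ : 0 ≤ κ) (hpair : ∀ A η, IsMeanZeroProfile ρ A η →
      |∫ x in ρ..A, W x * x ^ 2 * η x| ≤ κ * √(∫ x in ρ..A, η x ^ 2 / x))
    {χ : ℝ → ℝ} {l B : ℝ} (hχ : IsRadialTestFunction l B χ) (hl : ρ < l) (hχ0 : ∀ x, 0 ≤ χ x)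
    (hχ1 : ∀ x, χ x ≤ 1) :
    ∫ x in ρ..B, W x ^ 2 * x ^ 5 * χ x ≤ κ ^ 2 := by
  have hχc := hχ.contDiff.continuous
  have hg := hχ.cube_mul_mul_cutoff hρ hl hWs
  set I := ∫ x in ρ..B, W x ^ 2 * x ^ 5 * χ x
  have hI0 : 0 ≤ I := intervalIntegral.integral_nonneg hg.radius_le fun x hx =>
    mul_nonneg (mul_nonneg (sq_nonneg _) (pow_nonneg (hρ.le.trans hx.1) 5)) (hχ0 x)
  have hpairing : ∫ x in ρ..B, W x * x ^ 2 * (x ^ 3 * W x * χ x) = I :=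
    intervalIntegral.integral_congr fun x _ => by ring
  have hsq : ∫ x in ρ..B, (x ^ 3 * W x * χ x) ^ 2 / x ≤ I :=
    intervalIntegral.integral_mono_on hg.radius_le
      (hg.integrable_sq_div hg.contDiff.continuous hg.radius_le)
      (Continuous.intervalIntegrable (by fun_prop) _ _) fun x hx => by
        have hx0 : 0 < x := hρ.trans_le hx.1
        have hχχ : χ x ^ 2 ≤ χ x := pow_le_of_le_one (hχ0 x) (hχ1 x) two_ne_zero
        calc (x ^ 3 * W x * χ x) ^ 2 / x = W x ^ 2 * x ^ 5 * χ x ^ 2 := by field_simp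
          _ ≤ W x ^ 2 * x ^ 5 * χ x := by gcongr
  have hself : I ≤ κ * √I := by
    calc I ≤ |I| := le_abs_self I
      _ ≤ κ * √(∫ x in ρ..B, (x ^ 3 * W x * χ x) ^ 2 / x) := by
        rw [← hpairing]
        exact hg.abs_integral_mul_le_of_forall_isMeanZeroProfile hW hM hκ hpair
      _ ≤ κ * √I := by gcongr
  nlinarith [Real.sq_sqrt hI0, Real.sqrt_nonneg I, sq_nonneg (κ - √I)]

lemma integral_le_of_forall_mem_Ioo {f : ℝ → ℝ} (hf : Continuous f) (hA : ρ < A)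
    (h : ∀ ρ₁ ∈ Ioo ρ A, ∫ x in ρ₁..A, f x ≤ M) : ∫ x in ρ..A, f x ≤ M := by
  have hcont : Continuous fun ρ₁ => ∫ x in ρ₁..A, f x := by
    simp_rw [intervalIntegral.integral_symm A]
    exact (intervalIntegral.continuous_primitive (fun a b => hf.intervalIntegrable a b) A).neg
  refine le_of_tendsto (hcont.continuousWithinAt (s := Ioi ρ)) ?_
  filter_upwards [Ioo_mem_nhdsGT hA] with ρ₁ hρ₁ using h ρ₁ hρ₁

theorem integral_sq_mul_pow_five_le_of_forall_isMeanZeroProfile (hρ : 0 < ρ) (hW : Continuous W)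
    (hWs : ContDiffOn ℝ 3 W (Ioi ρ)) (hM : ∀ A ≥ ρ, ∫ x in ρ..A, W x ^ 2 * x ^ 3 ≤ M)
    (hκ : 0 ≤ κ) (hpair : ∀ A η, IsMeanZeroProfile ρ A η →
      |∫ x in ρ..A, W x * x ^ 2 * η x| ≤ κ * √(∫ x in ρ..A, η x ^ 2 / x)) (hA : ρ < A) :
    ∫ x in ρ..A, W x ^ 2 * x ^ 5 ≤ κ ^ 2 := by
  refine integral_le_of_forall_mem_Ioo (by fun_prop) hA fun ρ₁ hρ₁ => ?_
  obtain ⟨l, hl, B, hB, χ, hχ, hχ0, hχ1, hχA⟩ := exists_cutoff hρ hρ₁.1 hρ₁.2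
  have hχc := hχ.contDiff.continuous
  calc ∫ x in ρ₁..A, W x ^ 2 * x ^ 5 = ∫ x in ρ₁..A, W x ^ 2 * x ^ 5 * χ x :=
        intervalIntegral.integral_congr fun x hx => by
          rw [uIcc_of_le hρ₁.2.le] at hx
          simp only [hχA x hx, mul_one]
    _ ≤ ∫ x in ρ..B, W x ^ 2 * x ^ 5 * χ x := by
        refine intervalIntegral.integral_mono_interval hρ₁.1.le hρ₁.2.le hB ?_
          (Continuous.intervalIntegrable (by fun_prop) _ _)
        filter_upwards [ae_restrict_mem measurableSet_Ioc] with x hx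
        exact mul_nonneg (mul_nonneg (sq_nonneg _) (pow_nonneg (hρ.trans hx.1).le 5)) (hχ0 x)
    _ ≤ κ ^ 2 := integral_cutoff_sq_mul_pow_five_le hρ hW hWs hM hκ hpair hχ hl hχ0 hχ1

end WeightedBound

end Duality

/-! ### Rigidity -/

section Rigidity

open scoped Real

variable {p : ℕ} {ρ K D A : ℝ} {U V Q : ℝ × ℝ → ℝ}

namespace IsOddConeSolution.HasBounds

variable (h : HasBounds p ρ U V Q K D) (hvan : ConeEnergyVanishes ρ V Q)
include h

lemma integral_initial_velocity_sq_le (hA : ρ ≤ A) :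
    ∫ a in ρ..A, V (0, a) ^ 2 * a ^ 3 ≤ K ^ 2 := by
  simpa using h.energy_le.integral_velocity_le (by linarith [h.one_le]) h.continuous_velocity
    h.continuous_gradient le_rfl hA

include hvan

lemma abs_integral_initial_velocity_mul_profile_le {η : ℝ → ℝ} (hη : IsMeanZeroProfile ρ A η) :
    |∫ a in ρ..A, V (0, a) * a ^ 2 * η a| ≤
      p * D * K * (π / 2) / ρ * √(∫ a in ρ..A, η a ^ 2 / a) := by
  obtain ⟨X, Y, Z, E, k, hY⟩ := hη.exists_isConeTestWave
  have hY0 : ∀ a ≥ A, Y (0, a) = 0 := fun a ha => by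
    have hmul := hY a (hη.radius_le.trans ha)
    rw [hη.eq_zero_of_ge a ha] at hmul
    exact (mul_eq_zero.1 hmul).resolve_left
      (hη.radius_pos.trans_le (hη.radius_le.trans ha)).ne'
  calc |∫ a in ρ..A, V (0, a) * a ^ 2 * η a| = |∫ a in ρ..A, V (0, a) * Y (0, a) * a ^ 3| := by
        congr 1
        refine intervalIntegral.integral_congr fun a ha => ?_
        rw [uIcc_of_le hη.radius_le] at ha
        linear_combination (-V (0, a) * a ^ 2) * hY a ha.1
    _ ≤ p * (D * K * (π / 2 * √(∫ a in ρ..A, η a ^ 2 / a)) / ρ) :=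
        h.abs_integral_initial_velocity_mul_le k hvan hη.radius_le hY0
    _ = p * D * K * (π / 2) / ρ * √(∫ a in ρ..A, η a ^ 2 / a) := by ring

variable (hsmooth : ContDiffOn ℝ 3 (fun a => V (0, a)) (Ioi ρ))
include hsmooth

/-- Duality turns the pairing bound into a gain of two powers of the radius. -/
theorem integral_initial_velocity_sq_le_of_vanishes (hA : ρ ≤ A) :
    ∫ a in ρ..A, V (0, a) ^ 2 * a ^ 3 ≤ (p * D * K * (π / 2) / ρ) ^ 2 / ρ ^ 2 := by
  have hρ : 0 < ρ := by linarith [h.one_le]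
  have hD := h.coeff_nonneg
  have hK := h.nonneg
  have hV := h.continuous_velocity
  rcases hA.eq_or_lt with rfl | hA
  · rw [intervalIntegral.integral_same]
    positivity
  rw [le_div_iff₀ (by positivity), ← intervalIntegral.integral_mul_const]
  calc ∫ a in ρ..A, V (0, a) ^ 2 * a ^ 3 * ρ ^ 2 ≤ ∫ a in ρ..A, V (0, a) ^ 2 * a ^ 5 :=
        intervalIntegral.integral_mono_on hA.le (Continuous.intervalIntegrable (by fun_prop) _ _)
          (Continuous.intervalIntegrable (by fun_prop) _ _) fun a ha => by
            have ha0 : 0 ≤ a := hρ.le.trans ha.1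
            calc V (0, a) ^ 2 * a ^ 3 * ρ ^ 2 ≤ V (0, a) ^ 2 * a ^ 3 * a ^ 2 := by
                  gcongr
                  exact ha.1
              _ = V (0, a) ^ 2 * a ^ 5 := by ring
    _ ≤ (p * D * K * (π / 2) / ρ) ^ 2 :=
        integral_sq_mul_pow_five_le_of_forall_isMeanZeroProfile hρ (by fun_prop) hsmooth
          (fun _ => h.integral_initial_velocity_sq_le) (by positivity)
          (fun _ _ => h.abs_integral_initial_velocity_mul_profile_le hvan) hA

theorem halve (hρ : 16 * D + 8 * p * D ≤ ρ) : HasBounds p ρ U V Q (K / 2) D where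
  toIsOddConeSolution := h.toIsOddConeSolution
  five_le := h.five_le
  one_le := h.one_le
  nonneg := by linarith [h.nonneg]
  pow_le := (pow_le_pow_left₀ (by linarith [h.nonneg]) (by linarith [h.nonneg]) _).trans h.pow_le
  energy_le t ht A hA := by
    have hρ1 := h.one_le
    have hD := h.coeff_nonneg
    have hK := h.nonneg
    have hpD : 0 ≤ p * D := by positivity
    have hdata : (p * D * K * (π / 2) / ρ) ^ 2 / ρ ^ 2 ≤ K ^ 2 / 8 := by
      have hratio : p * D * K * (π / 2) / ρ ≤ K / 4 := by
        rw [div_le_iff₀ (by positivity)]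
        calc p * D * K * (π / 2) ≤ p * D * K * 2 := by
              gcongr
              linarith [Real.pi_le_four]
          _ ≤ K / 4 * ρ := by nlinarith
      calc (p * D * K * (π / 2) / ρ) ^ 2 / ρ ^ 2 ≤ (p * D * K * (π / 2) / ρ) ^ 2 :=
            div_le_self (sq_nonneg _) (one_le_pow₀ hρ1)
        _ ≤ (K / 4) ^ 2 := by gcongr
        _ ≤ K ^ 2 / 8 := by linarith [sq_nonneg K]
    have hsource : 2 * (D * K * K / ρ) ≤ K ^ 2 / 8 := by
      rw [mul_div_assoc', div_le_iff₀ (by positivity)]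
      nlinarith [sq_nonneg K]
    calc ∫ a in ρ..A, (V (t, a) ^ 2 + Q (t, a) ^ 2) * (a + t) ^ 3
        ≤ (p * D * K * (π / 2) / ρ) ^ 2 / ρ ^ 2 + 2 * (D * K * K / ρ) :=
          h.integral_energy_le_of_initial
            (fun _ => h.integral_initial_velocity_sq_le_of_vanishes hvan hsmooth) ht hA
      _ ≤ (K / 2) ^ 2 := by linarith

theorem initial_velocity_eq_zero (hρ : 16 * D + 8 * p * D ≤ ρ) {a : ℝ} (ha : ρ < a) :
    V (0, a) = 0 := by
  have hV := h.continuous_velocity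
  have hiterate : ∀ k : ℕ, HasBounds p ρ U V Q (K / 2 ^ k) D := fun k => by
    induction k with
    | zero => simpa using h
    | succ k ih => simpa [pow_succ, div_div] using ih.halve hvan hsmooth hρ
  have hlimit : Tendsto (fun k : ℕ => (K / 2 ^ k) ^ 2) atTop (nhds 0) := by
    simpa using ((tendsto_pow_atTop_atTop_of_one_lt one_lt_two).const_div_atTop K).pow 2
  have hnonpos : ∫ x in ρ..a, V (0, x) ^ 2 * x ^ 3 ≤ 0 :=
    ge_of_tendsto' hlimit fun k => (hiterate k).integral_initial_velocity_sq_le ha.le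
  by_contra hne
  have ha0 : 0 < a := by linarith [h.one_le]
  refine hnonpos.not_gt (intervalIntegral.integral_pos ha (by fun_prop) (fun x hx => ?_)
    ⟨a, ⟨ha.le, le_rfl⟩, by positivity⟩)
  exact mul_nonneg (sq_nonneg _) (pow_nonneg (by linarith [h.one_le, hx.1]) 3)

end IsOddConeSolution.HasBounds

end Rigidity

/-! ### Exterior solutions -/

section PartialDerivatives

variable {u : ℝ → ℝ → ℝ} {s : Set (ℝ × ℝ)} {z : ℝ × ℝ}

lemma dtu_eq_fderiv (hu : DifferentiableAt ℝ (fun z : ℝ × ℝ => u z.1 z.2) z) :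
    dtu u z.1 z.2 = fderiv ℝ (fun z : ℝ × ℝ => u z.1 z.2) z (1, 0) :=
  (hasPartialsAt_of_differentiableAt hu).hasDerivAt_fst.deriv

lemma deriv_eq_fderiv (hu : DifferentiableAt ℝ (fun z : ℝ × ℝ => u z.1 z.2) z) :
    deriv (u z.1) z.2 = fderiv ℝ (fun z : ℝ × ℝ => u z.1 z.2) z (0, 1) :=
  (hasPartialsAt_of_differentiableAt hu).hasDerivAt_snd.deriv

variable {m k : WithTop ℕ∞} (hs : IsOpen s) (hu : ContDiffOn ℝ k (fun z : ℝ × ℝ => u z.1 z.2) s)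
include hs hu

lemma differentiableAt_of_contDiffOn_of_isOpen (hk : k ≠ 0) (hz : z ∈ s) :
    DifferentiableAt ℝ (fun z : ℝ × ℝ => u z.1 z.2) z :=
  (hu.differentiableOn hk).differentiableAt (hs.mem_nhds hz)

lemma contDiffOn_dtu (hk : k ≠ 0) (hmk : m + 1 ≤ k) :
    ContDiffOn ℝ m (fun z : ℝ × ℝ => dtu u z.1 z.2) s :=
  ((hu.fderiv_of_isOpen hs hmk).clm_apply contDiffOn_const).congr fun _ hz =>
    dtu_eq_fderiv (differentiableAt_of_contDiffOn_of_isOpen hs hu hk hz)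

lemma contDiffOn_deriv_snd (hk : k ≠ 0) (hmk : m + 1 ≤ k) :
    ContDiffOn ℝ m (fun z : ℝ × ℝ => deriv (u z.1) z.2) s :=
  ((hu.fderiv_of_isOpen hs hmk).clm_apply contDiffOn_const).congr fun _ hz =>
    deriv_eq_fderiv (differentiableAt_of_contDiffOn_of_isOpen hs hu hk hz)

lemma fderiv_dtu_eq_fderiv_deriv (hk : 2 ≤ k) (hz : z ∈ s) :
    fderiv ℝ (fun z : ℝ × ℝ => dtu u z.1 z.2) z (0, 1) =
      fderiv ℝ (fun z : ℝ × ℝ => deriv (u z.1) z.2) z (1, 0) := by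
  have hk0 : k ≠ 0 := (zero_lt_two.trans_le hk).ne'
  have hU : ContDiffAt ℝ k (fun z : ℝ × ℝ => u z.1 z.2) z := hu.contDiffAt (hs.mem_nhds hz)
  have hfderiv : DifferentiableAt ℝ (fderiv ℝ fun z : ℝ × ℝ => u z.1 z.2) z :=
    (hU.fderiv_right (m := 1) (by simpa [one_add_one_eq_two] using hk)).differentiableAt one_ne_zero
  have hdiff : ∀ᶠ y in nhds z, DifferentiableAt ℝ (fun z : ℝ × ℝ => u z.1 z.2) y := by
    filter_upwards [hs.mem_nhds hz] with y hy
    exact differentiableAt_of_contDiffOn_of_isOpen hs hu hk0 hy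
  have hdtu := hdiff.mono fun y hy => dtu_eq_fderiv hy
  have hderiv := hdiff.mono fun y hy => deriv_eq_fderiv hy
  have hsymm := hU.isSymmSndFDerivAt (by simpa using hk) (0, 1) (1, 0)
  rw [Filter.EventuallyEq.fderiv_eq hdtu, Filter.EventuallyEq.fderiv_eq hderiv,
    fderiv_clm_apply hfderiv (differentiableAt_const _),
    fderiv_clm_apply hfderiv (differentiableAt_const _)]
  simpa using hsymm

end PartialDerivatives

/-- The region `r > R + |t|` outside the light cone. -/
def exteriorCone (R : ℝ) : Set (ℝ × ℝ) := {q | R + |q.1| < q.2}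

lemma isOpen_exteriorCone (R : ℝ) : IsOpen (exteriorCone R) :=
  isOpen_lt (by fun_prop) (by fun_prop)

/-- A function on the exterior cone, read in the coordinates `(t, a)` with `r = a + t` for `t ≥ 0`
and `a ≥ ρ`, and extended to the plane by projecting onto this quadrant. -/
noncomputable def coneExtension (ρ : ℝ) (v : ℝ → ℝ → ℝ) (z : ℝ × ℝ) : ℝ :=
  v (max z.1 0) (max z.2 ρ + max z.1 0)

section ConeExtension

variable {R ρ : ℝ} {v : ℝ → ℝ → ℝ}

lemma coneExtension_apply {t a : ℝ} (ht : 0 ≤ t) (ha : ρ ≤ a) :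
    coneExtension ρ v (t, a) = v t (a + t) := by
  simp only [coneExtension, max_eq_left ht, max_eq_left ha]

lemma continuous_coneExtension (hρ : R < ρ)
    (hv : ContinuousOn (fun z : ℝ × ℝ => v z.1 z.2) (exteriorCone R)) :
    Continuous (coneExtension ρ v) :=
  hv.comp_continuous (f := fun z : ℝ × ℝ => (max z.1 0, max z.2 ρ + max z.1 0)) (by fun_prop)
    fun z => by
      simp only [exteriorCone, mem_ofPred_eq, abs_of_nonneg (le_max_right z.1 0)]
      linarith [le_max_right z.2 ρ]

lemma coneExtension_eventuallyEq {t a : ℝ} (ht : 0 < t) (ha : ρ < a) :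
    coneExtension ρ v =ᶠ[nhds (t, a)] fun z => v z.1 (z.2 + 1 * z.1) := by
  filter_upwards [prod_mem_nhds (Ioi_mem_nhds ht) (Ioi_mem_nhds ha)] with z hz
  rw [one_mul]
  exact coneExtension_apply (le_of_lt hz.1) (le_of_lt hz.2)

end ConeExtension

namespace IsExtSol

variable {p : ℕ} {n : ℕ∞} {R ρ : ℝ} {u : ℝ → ℝ → ℝ} (h : IsExtSol p n R u)
include h

lemma contDiffOn {k : ℕ∞} (hk : k ≤ n) :
    ContDiffOn ℝ k (fun z : ℝ × ℝ => u z.1 z.2) (exteriorCone R) :=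
  h.1.of_le (by exact_mod_cast hk)

lemma isRadialWaveAt (hn : 2 ≤ n) {z : ℝ × ℝ} (hz : z ∈ exteriorCone R) :
    IsRadialWaveAt 0 (fun z => u z.1 z.2) (fun z => dtu u z.1 z.2) (fun z => deriv (u z.1) z.2)
      (fun z => |u z.1 z.2| ^ (p - 1) * u z.1 z.2) z := by
  have hs := isOpen_exteriorCone R
  have hu : ContDiffOn ℝ 2 (fun z : ℝ × ℝ => u z.1 z.2) (exteriorCone R) := h.contDiffOn hn
  have hU := differentiableAt_of_contDiffOn_of_isOpen hs hu two_ne_zero hz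
  have hV := hasPartialsAt_of_differentiableAt (differentiableAt_of_contDiffOn_of_isOpen hs
    (contDiffOn_dtu hs hu two_ne_zero (m := 1) one_add_one_eq_two.le) one_ne_zero hz)
  have hQ := hasPartialsAt_of_differentiableAt (differentiableAt_of_contDiffOn_of_isOpen hs
    (u := fun t r => deriv (u t) r)
    (contDiffOn_deriv_snd hs hu two_ne_zero (m := 1) one_add_one_eq_two.le) one_ne_zero hz)
  have hequation := h.2 z.1 z.2 hz
  have hVt : deriv (fun s => dtu u s z.2) z.1 = _ := hV.hasDerivAt_fst.deriv
  have hQr : deriv (deriv (u z.1)) z.2 = _ := hQ.hasDerivAt_snd.deriv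
  refine ⟨(hasPartialsAt_of_differentiableAt hU).congr_partials ?_ (deriv_eq_fderiv hU).symm, _, _,
    hV.congr_partials ?_ rfl, hQ.congr_partials ?_ rfl⟩
  · rw [dtu_eq_fderiv hU, zero_mul, add_zero]
  · rw [← hVt, ← hQr]
    simp only [zero_mul, add_zero]
    linarith
  · rw [zero_mul, add_zero, fderiv_dtu_eq_fderiv_deriv hs hu le_rfl hz]

lemma continuousOn_dtu (hn : 1 ≤ n) :
    ContinuousOn (fun z : ℝ × ℝ => dtu u z.1 z.2) (exteriorCone R) :=
  (contDiffOn_dtu (m := 0) (isOpen_exteriorCone R) (h.contDiffOn hn) one_ne_zero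
    (zero_add 1).le).continuousOn

lemma continuousOn_deriv (hn : 1 ≤ n) :
    ContinuousOn (fun z : ℝ × ℝ => deriv (u z.1) z.2) (exteriorCone R) :=
  (contDiffOn_deriv_snd (m := 0) (isOpen_exteriorCone R) (h.contDiffOn hn) one_ne_zero
    (zero_add 1).le).continuousOn

lemma isOddConeSolution (hn : 2 ≤ n) (hρ : R < ρ) (h0 : ∀ r > R, u 0 r = 0) :
    IsOddConeSolution p ρ (coneExtension ρ u) (coneExtension ρ (dtu u))
      (coneExtension ρ fun t => deriv (u t)) where
  continuous := continuous_coneExtension hρ h.1.continuousOn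
  continuous_velocity := continuous_coneExtension hρ (h.continuousOn_dtu (one_le_two.trans hn))
  continuous_gradient := continuous_coneExtension hρ (h.continuousOn_deriv (one_le_two.trans hn))
  isRadialWaveAt t ht a ha := by
    have hz : (t, a + 1 * t) ∈ exteriorCone R := by
      simp only [exteriorCone, mem_ofPred_eq, abs_of_pos ht]
      linarith
    refine (IsRadialWaveAt.comp_slant (z := (t, a)) (h.isRadialWaveAt hn hz)).congr_of_eventuallyEq
      (coneExtension_eventuallyEq ht ha) (coneExtension_eventuallyEq ht ha)
      (coneExtension_eventuallyEq ht ha) ?_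
    simp only [coneExtension_apply ht.le (le_of_lt ha), one_mul]
  initial_eq_zero a ha := by
    rw [coneExtension_apply le_rfl ha, add_zero, h0 a (hρ.trans_le ha)]
  initial_gradient_eq_zero a ha := by
    have hzero : u 0 =ᶠ[nhds a] fun _ => 0 := by
      filter_upwards [Ioi_mem_nhds (hρ.trans_le ha)] with r hr using h0 r hr
    rw [coneExtension_apply le_rfl ha, add_zero, hzero.deriv_eq, deriv_const]

lemma contDiffOn_initial_velocity (hn : 4 ≤ n) (hρ : R < ρ) :
    ContDiffOn ℝ 3 (fun a => coneExtension ρ (dtu u) (0, a)) (Ioi ρ) := by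
  have hV : ContDiffOn ℝ 3 (fun z : ℝ × ℝ => dtu u z.1 z.2) (exteriorCone R) :=
    contDiffOn_dtu (isOpen_exteriorCone R) (h.contDiffOn hn) four_ne_zero three_add_one_eq_four.le
  refine (hV.comp (contDiffOn_const.prodMk contDiffOn_id) fun a ha => ?_).congr
    (f := fun a => dtu u 0 a) fun a ha => ?_
  · simpa [exteriorCone] using hρ.trans ha
  · rw [coneExtension_apply le_rfl (le_of_lt ha), add_zero]

lemma continuousOn_energyDensity (hn : 1 ≤ n) (t : ℝ) :
    ContinuousOn (fun r => (dtu u t r ^ 2 + deriv (u t) r ^ 2) * r ^ 3) (Ioi (R + |t|)) := by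
  have hline : MapsTo (fun r : ℝ => (t, r)) (Ioi (R + |t|)) (exteriorCone R) := fun r hr => hr
  have hV := (h.continuousOn_dtu hn).comp (by fun_prop) hline
  have hQ := (h.continuousOn_deriv hn).comp (by fun_prop) hline
  exact ((hV.pow 2).add (hQ.pow 2)).mul (by fun_prop)

end IsExtSol

lemma integral_comp_add_right_le_setIntegral_Ioi {f : ℝ → ℝ} {b ρ A t : ℝ}
    (hf : IntegrableOn f (Ioi (b + t))) (hf0 : ∀ r ∈ Ioi (b + t), 0 ≤ f r) (hρ : b ≤ ρ)
    (hA : ρ ≤ A) : ∫ a in ρ..A, f (a + t) ≤ ∫ r in Ioi (b + t), f r := by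
  have hsubset : Ioc (ρ + t) (A + t) ⊆ Ioi (b + t) := fun r hr => mem_Ioi.2 (by linarith [hr.1])
  rw [intervalIntegral.integral_comp_add_right f t,
    intervalIntegral.integral_of_le (by linarith)]
  exact setIntegral_mono_set hf (ae_restrict_of_forall_mem measurableSet_Ioi hf0)
    hsubset.eventuallyLE

lemma energyDensity_nonneg {R t r : ℝ} (hR : 0 ≤ R) (hr : r ∈ Ioi (R + |t|)) (x y : ℝ) :
    0 ≤ (x ^ 2 + y ^ 2) * r ^ 3 := by
  have hr0 : 0 ≤ r := by linarith [abs_nonneg t, mem_Ioi.1 hr]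
  positivity

lemma lintegral_energyDensity_le_supH {R : ℝ} (hR : 0 ≤ R) (u : ℝ → ℝ → ℝ) (t : ℝ) :
    ∫⁻ r in Ioi (R + |t|), ENNReal.ofReal ((dtu u t r ^ 2 + deriv (u t) r ^ 2) * r ^ 3) ≤
      supH R u ^ 2 := by
  have hmeas : AEMeasurable (fun r => ENNReal.ofReal (deriv (u t) r ^ 2 * r ^ 3))
      (volume.restrict (Ioi (R + |t|))) :=
    (((measurable_deriv (u t)).pow_const 2).mul (by fun_prop)).ennreal_ofReal.aemeasurable
  calc ∫⁻ r in Ioi (R + |t|), ENNReal.ofReal ((dtu u t r ^ 2 + deriv (u t) r ^ 2) * r ^ 3)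
      = (∫⁻ r in Ioi (R + |t|), ENNReal.ofReal (deriv (u t) r ^ 2 * r ^ 3)) +
          ∫⁻ r in Ioi (R + |t|), ENNReal.ofReal (dtu u t r ^ 2 * r ^ 3) := by
        rw [← lintegral_add_left' hmeas]
        refine setLIntegral_congr_fun measurableSet_Ioi fun r hr => ?_
        have hr0 : 0 ≤ r := by linarith [abs_nonneg t, mem_Ioi.1 hr]
        rw [← ENNReal.ofReal_add (by positivity) (by positivity), add_comm (dtu u t r ^ 2), add_mul]
    _ = eH (R + |t|) (u t) (fun r => dtu u t r) ^ 2 := by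
        rw [eH, ← ENNReal.rpow_two, ← ENNReal.rpow_mul]
        norm_num
    _ ≤ supH R u ^ 2 := by
        gcongr
        exact le_iSup (fun t : ℝ => eH (R + |t|) (u t) fun r => dtu u t r) t

namespace IsExtSol

variable {p : ℕ} {n : ℕ∞} {R ρ t A : ℝ} {u : ℝ → ℝ → ℝ} (h : IsExtSol p n R u) (hn : 1 ≤ n)
  (hR : 0 ≤ R) (hfinite : supH R u < ⊤)
include h hn hR hfinite

lemma integrableOn_energyDensity (t : ℝ) :
    IntegrableOn (fun r => (dtu u t r ^ 2 + deriv (u t) r ^ 2) * r ^ 3) (Ioi (R + |t|)) := by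
  refine ⟨(h.continuousOn_energyDensity hn t).aestronglyMeasurable measurableSet_Ioi, ?_⟩
  rw [hasFiniteIntegral_iff_ofReal
    (ae_restrict_of_forall_mem measurableSet_Ioi fun r hr => energyDensity_nonneg hR hr _ _)]
  exact (lintegral_energyDensity_le_supH hR u t).trans_lt (ENNReal.pow_lt_top hfinite)

lemma integral_energyDensity_le (t : ℝ) :
    ∫ r in Ioi (R + |t|), (dtu u t r ^ 2 + deriv (u t) r ^ 2) * r ^ 3 ≤
      (supH R u).toReal ^ 2 := by
  rw [integral_eq_lintegral_of_nonneg_ae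
    (ae_restrict_of_forall_mem measurableSet_Ioi fun r hr => energyDensity_nonneg hR hr _ _)
    (h.integrableOn_energyDensity hn hR hfinite t).1, ← ENNReal.toReal_pow]
  exact ENNReal.toReal_mono (ENNReal.pow_ne_top hfinite.ne) (lintegral_energyDensity_le_supH hR u t)

lemma integral_coneExtension_le (hρ : R ≤ ρ) (ht : 0 ≤ t) (hA : ρ ≤ A) :
    ∫ a in ρ..A, (coneExtension ρ (dtu u) (t, a) ^ 2 +
        coneExtension ρ (fun t => deriv (u t)) (t, a) ^ 2) * (a + t) ^ 3 ≤
      ∫ r in Ioi (R + |t|), (dtu u t r ^ 2 + deriv (u t) r ^ 2) * r ^ 3 := by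
  have hintegrable := h.integrableOn_energyDensity hn hR hfinite t
  have hnonneg : ∀ r ∈ Ioi (R + |t|), 0 ≤ (dtu u t r ^ 2 + deriv (u t) r ^ 2) * r ^ 3 :=
    fun r hr => energyDensity_nonneg hR hr _ _
  rw [abs_of_nonneg ht] at hintegrable hnonneg ⊢
  refine le_trans (intervalIntegral.integral_congr fun a ha => ?_).le
    (integral_comp_add_right_le_setIntegral_Ioi hintegrable hnonneg hρ hA)
  rw [uIcc_of_le hA] at ha
  simp only [coneExtension_apply ht ha.1]

lemma coneEnergyLE (hρ : R ≤ ρ) :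
    ConeEnergyLE ρ (coneExtension ρ (dtu u)) (coneExtension ρ fun t => deriv (u t))
      (supH R u).toReal := fun t ht _ hA =>
  (h.integral_coneExtension_le hn hR hfinite hρ ht hA).trans
    (h.integral_energyDensity_le hn hR hfinite t)

lemma coneEnergyVanishes (hρ : R ≤ ρ)
    (hvan : Tendsto (fun t => ∫ r in Ioi (R + |t|), (dtu u t r ^ 2 + deriv (u t) r ^ 2) * r ^ 3)
      atTop (nhds 0)) :
    ConeEnergyVanishes ρ (coneExtension ρ (dtu u)) (coneExtension ρ fun t => deriv (u t)) := by
  intro ε hε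
  filter_upwards [hvan.eventually_le_const (pow_pos hε 2), eventually_ge_atTop 0]
    with t hsmall ht A hA
  exact (h.integral_coneExtension_le hn hR hfinite hρ ht hA).trans hsmall

end IsExtSol

section VanishingProfile

variable {f : ℝ → ℝ} {R ρ : ℝ} (hf : ∀ r > R, f r = 0)
include hf

lemma lintegral_deriv_sq_eq_zero_of_eq_zero (hρ : R ≤ ρ) :
    ∫⁻ r in Ioi ρ, ENNReal.ofReal (deriv f r ^ 2 * r ^ 3) = 0 := by
  refine setLIntegral_eq_zero measurableSet_Ioi fun r hr => ?_
  have hzero : f =ᶠ[nhds r] fun _ => 0 := by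
    filter_upwards [Ioi_mem_nhds (hρ.trans_lt hr)] with s hs using hf s hs
  simp [hzero.deriv_eq]

lemma exists_regularity_bounds_of_eq_zero :
    ∃ R' : ℝ, R ≤ R' ∧
      (∫⁻ r in Ioi R', ENNReal.ofReal ((deriv (fun s => s * f s) r) ^ 2 * r ^ 3)) < ⊤ ∧
      ∃ c > (0 : ℝ), ∃ C > (0 : ℝ), ∀ ρ : ℝ, R' ≤ ρ →
        ENNReal.ofReal (c * ρ * |f ρ|)
            ≤ (∫⁻ r in Ioi ρ, ENNReal.ofReal ((deriv f r) ^ 2 * r ^ 3)) ^ (1 / 2 : ℝ) ∧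
        (∫⁻ r in Ioi ρ, ENNReal.ofReal ((deriv f r) ^ 2 * r ^ 3)) ^ (1 / 2 : ℝ)
            ≤ ENNReal.ofReal (C * ρ * |f ρ|) := by
  have hmul : ∀ r > R, r * f r = 0 := fun r hr => by rw [hf r hr, mul_zero]
  refine ⟨R + 1, by linarith, ?_, 1, one_pos, 1, one_pos, fun ρ hρ => ?_⟩
  · rw [lintegral_deriv_sq_eq_zero_of_eq_zero hmul (by linarith)]
    exact ENNReal.zero_lt_top
  · rw [lintegral_deriv_sq_eq_zero_of_eq_zero hf (by linarith), hf ρ (by linarith)]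
    simp

end VanishingProfile

theorem stmt13_general {p : ℕ} {n : ℕ∞} {R : ℝ} {u : ℝ → ℝ → ℝ} (hp : 5 ≤ p) (hn : 4 ≤ n)
    (hR : 0 ≤ R) (hsol : IsExtSol p n R u) (hdata : ∀ r > R, u 0 r = 0) (hfinite : supH R u < ⊤)
    (hvan : Tendsto (fun t => ∫ r in Ioi (R + |t|), (dtu u t r ^ 2 + deriv (u t) r ^ 2) * r ^ 3)
      atTop (nhds 0)) :
    ∃ R' > R, ∀ r > R', dtu u 0 r = 0 := by
  have hn₁ : 1 ≤ n := le_trans (by norm_num) hn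
  have hn₂ : 2 ≤ n := le_trans (by norm_num) hn
  set K := (supH R u).toReal
  have hK : 0 ≤ K := ENNReal.toReal_nonneg
  set ρ := R + 1 + (16 * K ^ (p - 1) + 8 * p * K ^ (p - 1))
  have hD : 0 ≤ 16 * K ^ (p - 1) + 8 * p * K ^ (p - 1) := by positivity
  have hρ : R < ρ := by linarith
  have hbounds : IsOddConeSolution.HasBounds p ρ (coneExtension ρ u) (coneExtension ρ (dtu u))
      (coneExtension ρ fun t => deriv (u t)) K (K ^ (p - 1)) :=
    ⟨hsol.isOddConeSolution hn₂ hρ hdata, hp, by linarith, hK,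
      hsol.coneEnergyLE hn₁ hR hfinite hρ.le, le_rfl⟩
  refine ⟨ρ, hρ, fun r hr => ?_⟩
  have hzero := hbounds.initial_velocity_eq_zero
    (hsol.coneEnergyVanishes hn₁ hR hfinite hρ.le hvan) (hsol.contDiffOn_initial_velocity hn hρ)
    (by linarith) hr
  rwa [coneExtension_apply le_rfl (le_of_lt hr), add_zero] at hzero

/-- gain of regularity for the data of odd non-radiative exterior
solutions: `r·u₁ ∈ Ḣ¹(R')` and `ρ|u₁(ρ)| ≃ ‖u₁‖_{Ḣ¹(ρ)}` for `ρ ≥ R'`. -/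
theorem stmt13 (p : ℕ) (hodd : Odd p) (hp5 : 5 ≤ p) (R : ℝ) (hR : 0 < R)
    (u : ℝ → ℝ → ℝ) (u₁ : ℝ → ℝ)
    (hsol : IsExtSol p ⊤ R u)
    (hdata0 : ∀ r : ℝ, R < r → u 0 r = 0)
    (hdata1 : ∀ r : ℝ, R < r → dtu u 0 r = u₁ r)
    (hu₁ : (∫⁻ r in Ioi R, ENNReal.ofReal ((u₁ r) ^ 2 * r ^ 3)) < ⊤)
    (hfin1 : eLL 2 8 R u < ⊤) (hfin2 : eLL 3 6 R u < ⊤)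
    (hfin3 : eLL 3 6 R (dtu u) < ⊤)
    (hfin4 : supH R u < ⊤)
    (hvan : ExtEnergyVanishes R u) :
    ∃ R' : ℝ, R ≤ R' ∧
      (∫⁻ r in Ioi R',
          ENNReal.ofReal ((deriv (fun s => s * u₁ s) r) ^ 2 * r ^ 3)) < ⊤ ∧
      ∃ c > (0:ℝ), ∃ C > (0:ℝ), ∀ ρ : ℝ, R' ≤ ρ →
        ENNReal.ofReal (c * ρ * |u₁ ρ|)
            ≤ (∫⁻ r in Ioi ρ, ENNReal.ofReal ((deriv u₁ r) ^ 2 * r ^ 3)) ^ (1 / 2 : ℝ) ∧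
        (∫⁻ r in Ioi ρ, ENNReal.ofReal ((deriv u₁ r) ^ 2 * r ^ 3)) ^ (1 / 2 : ℝ)
            ≤ ENNReal.ofReal (C * ρ * |u₁ ρ|) := by
  obtain ⟨ρ, hρ, hzero⟩ := stmt13_general hp5 le_top hR.le hsol hdata0 hfin4 hvan.1
  have hu₁_zero : ∀ r > ρ, u₁ r = 0 := fun r hr => (hdata1 r (hρ.trans hr)).symm.trans (hzero r hr)
  obtain ⟨R', hR', hbounds⟩ := exists_regularity_bounds_of_eq_zero hu₁_zero
  exact ⟨R', hρ.le.trans hR', hbounds⟩
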